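/- Let p be a prime with p ≡ 1 (mod 8) such that (2/p)₄ = (p/2)₄ = −1, and let k* = ℚ(√2, √p, i). Then the 2-Sylow subgroup of Cl(k*) is isomorphic to ℤ/2ℤ × ℤ/2ᵐℤ for some m ≥ 2; equivalently, the 2-rank of Cl(k*) equals 2 and its 4-rank, dim_{𝔽₂}(Cl(k*)²/Cl(k*)⁴), equals 1. -/

import Mathlib

/- STATEMENT 17: Let p ≡ 1 (mod 8) be prime with (2/p)₄ = (p/2)₄ = −1, and
k* = ℚ(√2, √p, i). Then the 2-Sylow subgroup of Cl(k*) is isomorphic to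
ℤ/2 × ℤ/2ᵐ for some m ≥ 2; equivalently the 2-rank of Cl(k*) is 2
(|Cl(k*)/Cl(k*)²| = 4) and its 4-rank is 1 (|Cl(k*)²/Cl(k*)⁴| = 2). -/

open Complex NumberField IntermediateField nonZeroDivisors

noncomputable section

/-- k* = ℚ(√2, √p, i) as a subfield of ℂ. -/
def kstar (p : ℕ) : IntermediateField ℚ ℂ :=
  ℚ⟮(Real.sqrt 2 : ℂ), (Real.sqrt p : ℂ), (Complex.I : ℂ)⟯

/-- The subgroup of n-th powers of the class group of k*. -/
def pows (p n : ℕ) : Subgroup (ClassGroup (𝓞 (kstar p))) :=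
  (powMonoidHom n : ClassGroup (𝓞 (kstar p)) →* ClassGroup (𝓞 (kstar p))).range

/-!
Let `F = ℚ(ζ₈)` and `K = F(√p)`, which is the field `k*`. The ring `𝓞 F` is principal, and modulo
squares its units are generated by `ζ` and `1 + √2`. Since `p ≡ 1 (mod 8)`, `p` is a product of four
conjugate primes `τₖ π` of `𝓞 F` (`k = 0, …, 3`, with `τₖ ζ = ζ ^ (2k + 1)`). As `(1 + √p)/2` is
integral, the ramified primes of `K/F` are exactly `Pₖ = (τₖ π, √p)`, and `Pₖ² = (τₖ π)`. The
hypothesis on `(p/2)₄` says `p ≡ 9 (mod 16)`. The proof determines the 2-torsion of the class group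
of `K` and which of its elements are squares.

*The 2-torsion is generated by `[P₀]` and `[P₃]`* (`CyclotomicEight.sq_eq_one_iff`). The equations
`T² + 1 = pU²` and `T² + 1 = 2pU²` are solvable. Factoring `1 + iT` in `ℤ[i]` yields a unit `ε` of
relative norm `-1` with `ε π τ₂π` a square in `K`, and a unit `η` of relative norm `1 + √2`
(`CyclotomicEight.exists_units`). The first gives `[P₀] = [P₂]`; as `P₀P₁P₂P₃ = (√p)`, also `[P₁] =
[P₃]`. Because `p ≡ 9 (mod 16)`, `ζ` is not a square modulo `π`, so the units of `F` that are norms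
of elements of `K` are norms of units. In that situation, by Hilbert 90, every class of order two
contains an ideal invariant under conjugation, so the ramified primes generate the 2-torsion
(`QuadraticConj.mem_ramifiedClasses_of_sq_eq_one`).

*`[P₀]` is not a square* (`CyclotomicEight.not_isSquare_idealClass_ramifiedPrime`). Otherwise `π`
times a unit of `F` would be a norm up to squares, hence a square modulo the ramified primes at
`τ₁π` and `τ₂π`. The product of the two residues of a unit is a square, whereas for `π` it is `2e`,
where `π τ₃π = e + f√2` and `e² - 2f² = p`; and `(e/p) = -1` because `(2/p)₄ = -1`.

*`[P₀][P₃] ≠ 1`* (`CyclotomicEight.idealClass_ramifiedPrime_mul_ne_one`). If `P₀P₃ = (γ)`, then `v =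
γ²/(π τ₃π)` is a unit, and `ζ, 1 + √2, ε, v, η` would be five units independent modulo squares,
while the unit rank of `K` is three and the units modulo squares have dimension four.

*`[P₀][P₃]` is a square* (`CyclotomicEight.isSquare_idealClass_ramifiedPrime_mul`). With `g = e + f`
and `x = e + 2f`, its inverse is the class of the extension to `K` of the ideal `(g, x + √-p)` of
`ℚ(√-p)`. That ideal has norm `g`, and `(g/p) = 1`, so it lies in the principal genus of `ℚ(√-p)`
(`ImaginaryQuadratic.isSquare_idealClass_span_pair`).

A finite abelian group with 2-torsion `{1, x, y, xy}` in which `x` is not a square and `y ≠ 1` is a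
square has the asserted structure (`exists_sylow_equiv_zmod_prod`).
-/

/-! ### Conjugation of a quadratic extension -/

/-- An involution `σ` of an `R`-algebra `S` whose ring of invariants is exactly `R`, as for the
ring of integers of a quadratic extension. -/
structure QuadraticConj (R S : Type*) [CommRing R] [CommRing S] [Algebra R S] where
  σ : S ≃ₐ[R] S
  σ_σ : ∀ x, σ (σ x) = x
  exists_algebraMap_eq : ∀ x, σ x = x → ∃ r, algebraMap R S r = x

theorem dvd_of_sq_sub_mul_add_eq_zero {S : Type*} [CommRing S] [IsDomain S] [IsIntegrallyClosed S]
    {n t m z : S} (h : z ^ 2 - n * t * z + n ^ 2 * m = 0) : n ∣ z := by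
  rcases eq_or_ne n 0 with rfl | hn
  · have hz : z ^ 2 = 0 := by linear_combination h
    rw [eq_zero_of_pow_eq_zero hz]
  let ι := algebraMap S (FractionRing S)
  have hι : Function.Injective ι := IsFractionRing.injective S (FractionRing S)
  have hn' : ι n ≠ 0 := (map_ne_zero_iff _ hι).mpr hn
  have h' : ι z ^ 2 - ι n * ι t * ι z + ι n ^ 2 * ι m = 0 := by
    simpa only [map_add, map_sub, map_mul, map_pow, map_zero] using congrArg ι h
  have hint : IsIntegral S (ι z / ι n) := by
    refine ⟨Polynomial.X ^ 2 - Polynomial.C t * Polynomial.X + Polynomial.C m, by monicity!, ?_⟩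
    simp only [Polynomial.eval₂_add, Polynomial.eval₂_sub, Polynomial.eval₂_mul,
      Polynomial.eval₂_pow, Polynomial.eval₂_X, Polynomial.eval₂_C]
    field_simp
    linear_combination h'
  obtain ⟨y, hy⟩ := IsIntegrallyClosed.isIntegral_iff.mp hint
  refine ⟨y, hι ?_⟩
  rw [map_mul, show ι y = ι z / ι n from hy, mul_div_cancel₀ _ hn']

namespace QuadraticConj

section Ring

variable {R S : Type*} [CommRing R] [CommRing S] [Algebra R S] (Q : QuadraticConj R S)

theorem exists_trace (x : S) : ∃ r, algebraMap R S r = x + Q.σ x :=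
  Q.exists_algebraMap_eq _ (by rw [map_add, Q.σ_σ, add_comm])

theorem exists_norm (x : S) : ∃ r, algebraMap R S r = x * Q.σ x :=
  Q.exists_algebraMap_eq _ (by rw [map_mul, Q.σ_σ, mul_comm])

/-- The relative norm `x * σ x`, as an element of `R`. -/
def norm (x : S) : R := (Q.exists_norm x).choose

theorem algebraMap_norm (x : S) : algebraMap R S (Q.norm x) = x * Q.σ x :=
  (Q.exists_norm x).choose_spec

theorem map_map (I : Ideal S) : (I.map Q.σ).map Q.σ = I := by
  have hσ : (Q.σ : S →+* S).comp (Q.σ : S →+* S) = RingHom.id S := RingHom.ext Q.σ_σ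
  have h := Ideal.map_map (I := I) (Q.σ : S →+* S) (Q.σ : S →+* S)
  rw [hσ, Ideal.map_id] at h
  exact h

theorem map_span_singleton (x : S) : (Ideal.span {x}).map Q.σ = Ideal.span {Q.σ x} := by
  rw [Ideal.map_span, Set.image_singleton]

theorem mem_map_iff (I : Ideal S) (x : S) : x ∈ I.map Q.σ ↔ Q.σ x ∈ I := by
  constructor <;> intro h
  · simpa only [Q.map_map] using Ideal.mem_map_of_mem Q.σ h
  · simpa only [Q.σ_σ] using Ideal.mem_map_of_mem Q.σ h

theorem map_ne_bot {I : Ideal S} (hI : I ≠ ⊥) : I.map Q.σ ≠ ⊥ := fun h =>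
  hI (by rw [← Q.map_map I, h, Ideal.map_bot])

end Ring

section Domain

variable {R S : Type*} [CommRing R] [CommRing S] [IsDomain S] [Algebra R S]
  (Q : QuadraticConj R S)

theorem norm_ne_zero {x : S} (hx : x ≠ 0) : Q.norm x ≠ 0 := fun h =>
  mul_ne_zero hx ((map_ne_zero_iff _ Q.σ.injective).mpr hx)
    (by rw [← Q.algebraMap_norm, h, map_zero])

/-- Hilbert 90 for `x / y`, which has relative norm one. -/
theorem exists_mul_σ_eq {s x y : S} (hs0 : s ≠ 0) (hs : Q.σ s = -s) (hy : y ≠ 0)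
    (h : x * Q.σ x = y * Q.σ y) : ∃ z ≠ 0, x * Q.σ z = y * z := by
  by_cases hxy : x + y = 0
  · exact ⟨s, hs0, by rw [hs]; linear_combination (-s) * hxy⟩
  · refine ⟨(x + y) * Q.σ y,
      mul_ne_zero hxy ((map_ne_zero_iff _ Q.σ.injective).mpr hy), ?_⟩
    rw [map_mul, Q.σ_σ, map_add]
    linear_combination y * h

theorem algebraMap_dvd_mul_σ [IsIntegrallyClosed S] {n t : R} {x y : S}
    (hx : n ∣ Q.norm x) (hy : n ∣ Q.norm y)
    (ht : algebraMap R S t = x * Q.σ y + Q.σ (x * Q.σ y)) (hnt : n ∣ t) :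
    algebraMap R S n ∣ x * Q.σ y := by
  obtain ⟨a, ha⟩ := hx
  obtain ⟨b, hb⟩ := hy
  obtain ⟨t, rfl⟩ := hnt
  have hxx := Q.algebraMap_norm x
  have hyy := Q.algebraMap_norm y
  rw [ha, map_mul] at hxx
  rw [hb, map_mul] at hyy
  rw [map_mul, map_mul, Q.σ_σ] at ht
  refine dvd_of_sq_sub_mul_add_eq_zero (t := algebraMap R S t)
    (m := algebraMap R S a * algebraMap R S b) ?_
  linear_combination (algebraMap R S n * algebraMap R S b) * hxx + x * Q.σ x * hyy -
    x * Q.σ y * ht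

variable [FaithfulSMul R S]

include Q in
theorem dvd_of_algebraMap_dvd {a b : R} (h : algebraMap R S a ∣ algebraMap R S b) : a ∣ b := by
  have hinj := FaithfulSMul.algebraMap_injective R S
  rcases eq_or_ne a 0 with rfl | ha
  · rw [map_zero, zero_dvd_iff, map_eq_zero_iff _ hinj] at h
    rw [h]
  obtain ⟨k, hk⟩ := h
  have hσk : Q.σ k = k := by
    have h' := congrArg Q.σ hk
    rw [map_mul, AlgEquiv.commutes, AlgEquiv.commutes, hk] at h'
    exact (mul_left_cancel₀ ((map_ne_zero_iff _ hinj).mpr ha) h').symm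
  obtain ⟨r, rfl⟩ := Q.exists_algebraMap_eq k hσk
  exact ⟨r, hinj (by rw [hk, map_mul])⟩

include Q in
theorem associated_of_associated_algebraMap [IsDomain R] {a b : R}
    (h : Associated (algebraMap R S a) (algebraMap R S b)) : Associated a b :=
  associated_of_dvd_dvd (Q.dvd_of_algebraMap_dvd h.dvd) (Q.dvd_of_algebraMap_dvd h.symm.dvd)

end Domain

section IdealNorm

variable {R S : Type*} [CommRing R] [IsPrincipalIdealRing R] [CommRing S] [IsDedekindDomain S]
  [Algebra R S] (Q : QuadraticConj R S)

/-- For `I = (x, y)` the generator is the greatest common divisor of the norms of `x` and `y` and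
of the trace of `x * σ y`. -/
theorem exists_mul_map_eq_span (I : Ideal S) :
    ∃ n : R, I * I.map Q.σ = Ideal.span {algebraMap R S n} := by
  rcases eq_or_ne I ⊥ with rfl | hI
  · exact ⟨0, by simp⟩
  obtain ⟨x, hxI, hx⟩ := Submodule.exists_mem_ne_zero_of_ne_bot hI
  obtain ⟨y, rfl⟩ := IsDedekindDomain.exists_eq_span_pair hxI hx
  obtain ⟨t, ht⟩ := Q.exists_trace (x * Q.σ y)
  have hσ : Q.σ (x * Q.σ y) = y * Q.σ x := by rw [map_mul, Q.σ_σ, mul_comm]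
  let D : Ideal R := Ideal.span {Q.norm x, Q.norm y, t}
  let n := Submodule.IsPrincipal.generator D
  have hn : ∀ r ∈ ({Q.norm x, Q.norm y, t} : Set R), n ∣ r := fun r hr =>
    (Submodule.IsPrincipal.mem_iff_generator_dvd D).mp (Ideal.subset_span hr)
  have hxy : algebraMap R S n ∣ x * Q.σ y :=
    Q.algebraMap_dvd_mul_σ (hn _ (by simp)) (hn _ (by simp)) ht (hn _ (by simp))
  have hyx : algebraMap R S n ∣ y * Q.σ x := by
    simpa only [AlgEquiv.commutes, hσ] using map_dvd Q.σ hxy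
  refine ⟨n, ?_⟩
  rw [Ideal.map_span, Set.image_pair, Ideal.span_pair_mul_span_pair]
  apply le_antisymm
  · simp only [Ideal.span_le, Set.insert_subset_iff, Set.singleton_subset_iff, SetLike.mem_coe,
      Ideal.mem_span_singleton, ← Q.algebraMap_norm]
    exact ⟨map_dvd _ (hn _ (by simp)), hxy, hyx, map_dvd _ (hn _ (by simp))⟩
  · have hD : D ≤ (Ideal.span {x * Q.σ x, x * Q.σ y, y * Q.σ x, y * Q.σ y}).comap
        (algebraMap R S) := by
      simp only [D, Ideal.span_le, Set.insert_subset_iff, Set.singleton_subset_iff,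
        SetLike.mem_coe, Ideal.mem_comap, Q.algebraMap_norm, ht, hσ]
      exact ⟨Ideal.subset_span (by simp), Ideal.subset_span (by simp),
        Ideal.add_mem _ (Ideal.subset_span (by simp)) (Ideal.subset_span (by simp))⟩
    exact (Ideal.span_singleton_le_iff_mem _).mpr (hD (Submodule.IsPrincipal.generator_mem D))

end IdealNorm

end QuadraticConj

section IdealClass

variable {S : Type*} [CommRing S] [IsDedekindDomain S]

open Classical in
/-- The class of an ideal in the class group, with the junk value `1` at the zero ideal, so that
no proof of nonvanishing has to be carried along. -/
def idealClass (I : Ideal S) : ClassGroup S :=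
  if h : I = ⊥ then 1 else ClassGroup.mk0 ⟨I, mem_nonZeroDivisors_iff_ne_zero.mpr h⟩

theorem idealClass_of_ne_bot {I : Ideal S} (h : I ≠ ⊥) :
    idealClass I = ClassGroup.mk0 ⟨I, mem_nonZeroDivisors_iff_ne_zero.mpr h⟩ := dif_neg h

theorem exists_idealClass_eq (c : ClassGroup S) : ∃ I : Ideal S, I ≠ ⊥ ∧ idealClass I = c := by
  obtain ⟨I, rfl⟩ := ClassGroup.mk0_surjective c
  exact ⟨I, nonZeroDivisors.ne_zero I.2, idealClass_of_ne_bot (nonZeroDivisors.ne_zero I.2)⟩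

theorem idealClass_mul {I J : Ideal S} (hI : I ≠ ⊥) (hJ : J ≠ ⊥) :
    idealClass (I * J) = idealClass I * idealClass J := by
  rw [idealClass_of_ne_bot hI, idealClass_of_ne_bot hJ,
    idealClass_of_ne_bot (mul_ne_zero hI hJ), ← map_mul]
  rfl

theorem idealClass_span_singleton (x : S) : idealClass (Ideal.span {x}) = 1 := by
  rcases eq_or_ne x 0 with rfl | h
  · simp [idealClass]
  · rw [idealClass_of_ne_bot (mt Ideal.span_singleton_eq_bot.mp h), ClassGroup.mk0_eq_one_iff]
    exact ⟨⟨x, rfl⟩⟩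

theorem idealClass_eq_one_iff {I : Ideal S} (hI : I ≠ ⊥) :
    idealClass I = 1 ↔ ∃ x ≠ 0, I = Ideal.span {x} := by
  refine ⟨fun h => ?_, fun ⟨x, _, hx⟩ => hx ▸ idealClass_span_singleton x⟩
  rw [idealClass_of_ne_bot hI, ClassGroup.mk0_eq_one_iff] at h
  obtain ⟨x, hx : I = Ideal.span {x}⟩ := h.principal
  exact ⟨x, fun h0 => hI (by simpa [h0] using hx), hx⟩

theorem idealClass_eq_iff {I J : Ideal S} (hI : I ≠ ⊥) (hJ : J ≠ ⊥) :
    idealClass I = idealClass J ↔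
      ∃ x y : S, x ≠ 0 ∧ y ≠ 0 ∧ Ideal.span {x} * I = Ideal.span {y} * J := by
  rw [idealClass_of_ne_bot hI, idealClass_of_ne_bot hJ, ClassGroup.mk0_eq_mk0_iff]
  simp only [exists_prop, exists_and_left]

end IdealClass

namespace QuadraticConj

/-! ### Ambiguous ideal classes -/

section Ambiguous

variable {R S : Type*} [CommRing R] [CommRing S] [IsDedekindDomain S] [Algebra R S]
  (Q : QuadraticConj R S)

/-- A prime ideal ramified over `R`, which is here taken to mean that it squares to a prime of `R`
and that `σ` acts trivially on its residue field. -/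
structure IsRamified (P : Ideal S) : Prop where
  isPrime : P.IsPrime
  exists_sq : ∃ ℓ : R, Prime ℓ ∧ P * P = Ideal.span {algebraMap R S ℓ}
  sub_mem : ∀ x, x - Q.σ x ∈ P

theorem sub_σ_mem_of_sq_eq_span {P : Ideal S} [P.IsPrime] (h0 : P ≠ ⊥) (hσ : P.map Q.σ = P)
    {ℓ : R} (hℓ : ∀ r, algebraMap R S r ∈ P → ℓ ∣ r)
    (hsq : P ^ 2 = Ideal.span {algebraMap R S ℓ}) (x : S) : x - Q.σ x ∈ P := by
  have hσP : ∀ z ∈ P, Q.σ z ∈ P := fun z hz => by rwa [← Q.mem_map_iff, hσ]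
  have trace_mem : ∀ z ∈ P, z + Q.σ z ∈ P ^ 2 := fun z hz => by
    obtain ⟨r, hr⟩ := Q.exists_trace z
    rw [← hr, hsq, Ideal.mem_span_singleton]
    exact map_dvd _ (hℓ r (hr ▸ P.add_mem hz (hσP z hz)))
  obtain ⟨y, hyP, hy2⟩ : ∃ y ∈ P, y ∉ P ^ 2 :=
    SetLike.exists_of_lt (Ideal.pow_lt_self P h0 (Ideal.IsPrime.ne_top ‹_›) 2 le_rfl)
  have hxy : (x - Q.σ x) * y ∈ P ^ 2 := by
    have : (x - Q.σ x) * y = (y + Q.σ y) * x - (x * Q.σ y + Q.σ (x * Q.σ y)) := by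
      rw [map_mul, Q.σ_σ]; ring
    rw [this]
    exact sub_mem (Ideal.mul_mem_right _ _ (trace_mem y hyP))
      (trace_mem _ (P.mul_mem_left _ (hσP y hyP)))
  exact (Ideal.IsPrime.mul_mem_pow P hxy).resolve_right hy2

theorem mul_lt_right_of_ne_top {I J : Ideal S} (hI : I ≠ ⊤) (hJ : J ≠ ⊥) : I * J < J := by
  refine lt_of_le_of_ne Ideal.mul_le_right fun h => hI ?_
  exact mul_right_cancel₀ hJ (by rw [h, ← Ideal.one_eq_top, one_mul])

theorem exists_eq_map_mul {P J : Ideal S} [hP : P.IsPrime] (h0 : P ≠ ⊥) (hPσ : P.map Q.σ ≠ P)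
    (h : (P * J).map Q.σ = P * J) : ∃ L, J = P.map Q.σ * L ∧ L.map Q.σ = L := by
  have hσP0 := Q.map_ne_bot h0
  have hσP := Ideal.prime_of_isPrime hσP0 (Ideal.map_isPrime_of_equiv Q.σ)
  have hdvd : P.map Q.σ ∣ P * J := ⟨J.map Q.σ, by rw [← Ideal.map_mul, h]⟩
  obtain ⟨L, rfl⟩ := (hσP.dvd_or_dvd hdvd).resolve_left fun hd =>
    hPσ (associated_iff_eq.mp (hσP.associated_of_dvd (Ideal.prime_of_isPrime h0 hP) hd))
  refine ⟨L, rfl, mul_left_cancel₀ (mul_ne_zero h0 hσP0) ?_⟩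
  rw [Ideal.map_mul, Ideal.map_mul, Q.map_map, ← mul_assoc] at h
  rw [mul_comm P, h, ← mul_assoc, mul_comm P]

theorem associated_norm_mul [IsDomain R] [FaithfulSMul R S] {I J : Ideal S} {m n : R} {a b : S}
    (hm : I * I.map Q.σ = Ideal.span {algebraMap R S m})
    (hn : J * J.map Q.σ = Ideal.span {algebraMap R S n})
    (h : Ideal.span {a} * I = Ideal.span {b} * J) :
    Associated (Q.norm a * m) (Q.norm b * n) := by
  have hσ := congrArg (Ideal.map Q.σ) h
  rw [Ideal.map_mul, Ideal.map_mul, Q.map_span_singleton, Q.map_span_singleton] at hσ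
  refine Q.associated_of_associated_algebraMap (Ideal.span_singleton_eq_span_singleton.mp ?_)
  simp only [map_mul, Q.algebraMap_norm, ← Ideal.span_singleton_mul_span_singleton, ← hm, ← hn]
  rw [mul_mul_mul_comm, h, hσ, mul_mul_mul_comm]

variable [IsPrincipalIdealRing R]

theorem idealClass_mul_map {I : Ideal S} (hI : I ≠ ⊥) :
    idealClass I * idealClass (I.map Q.σ) = 1 := by
  obtain ⟨n, hn⟩ := Q.exists_mul_map_eq_span I
  rw [← idealClass_mul hI (Q.map_ne_bot hI), hn, idealClass_span_singleton]

include Q in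
theorem exists_prime_mem_iff_dvd {P : Ideal S} [P.IsPrime] (h0 : P ≠ ⊥) :
    ∃ ℓ : R, Prime ℓ ∧ ∀ r, algebraMap R S r ∈ P ↔ ℓ ∣ r := by
  let p := P.comap (algebraMap R S)
  have : p.IsPrime := Ideal.comap_isPrime _ P
  obtain ⟨x, hxP, hx0⟩ := Submodule.exists_mem_ne_zero_of_ne_bot h0
  have hp0 : p ≠ ⊥ := (Submodule.ne_bot_iff p).mpr
    ⟨Q.norm x, by simpa [p, Q.algebraMap_norm] using P.mul_mem_right _ hxP, Q.norm_ne_zero hx0⟩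
  exact ⟨Submodule.IsPrincipal.generator p,
    Submodule.IsPrincipal.prime_generator_of_isPrime p hp0,
    fun r => Submodule.IsPrincipal.mem_iff_generator_dvd p⟩

theorem idealClass_eq_one_or_isRamified {P : Ideal S} [hP : P.IsPrime] (h0 : P ≠ ⊥)
    (hσ : P.map Q.σ = P) : idealClass P = 1 ∨ Q.IsRamified P := by
  obtain ⟨n, hn⟩ := Q.exists_mul_map_eq_span P
  rw [hσ, ← sq] at hn
  obtain ⟨ℓ, hℓ, hmem⟩ := Q.exists_prime_mem_iff_dvd h0
  have hnP : algebraMap R S n ∈ P :=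
    Ideal.pow_le_self two_ne_zero (hn ▸ Ideal.mem_span_singleton_self _)
  have hdvd : Ideal.span {algebraMap R S ℓ} ∣ P ^ 2 := by
    rw [hn, Ideal.dvd_span_singleton, Ideal.mem_span_singleton]
    exact map_dvd _ ((hmem n).mp hnP)
  obtain ⟨i, hi, hspan⟩ := (dvd_prime_pow (Ideal.prime_of_isPrime h0 hP) 2).mp hdvd
  rw [associated_iff_eq] at hspan
  interval_cases i
  · have hℓP : Ideal.span {algebraMap R S ℓ} ≤ P :=
      (Ideal.span_singleton_le_iff_mem _).mpr ((hmem ℓ).mpr dvd_rfl)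
    rw [hspan, pow_zero, Ideal.one_eq_top, top_le_iff] at hℓP
    exact absurd hℓP hP.ne_top
  · exact .inl (by rw [← pow_one P, ← hspan, idealClass_span_singleton])
  · exact .inr ⟨hP, ⟨ℓ, hℓ, by rw [hspan, sq]⟩,
      Q.sub_σ_mem_of_sq_eq_span h0 hσ (fun r => (hmem r).mp) hspan.symm⟩

/-- The subgroup of the class group generated by the ramified primes. -/
def ramifiedClasses : Subgroup (ClassGroup S) :=
  Subgroup.closure {c | ∃ P : Ideal S, Q.IsRamified P ∧ c = idealClass P}

theorem idealClass_mem_ramifiedClasses (I : Ideal S) (hI : I ≠ ⊥) (hσ : I.map Q.σ = I) :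
    idealClass I ∈ Q.ramifiedClasses := by
  induction I using WellFoundedGT.induction with
  | ind I ih =>
  by_cases htop : I = ⊤
  · rw [htop, ← Ideal.span_singleton_one, idealClass_span_singleton]
    exact one_mem _
  obtain ⟨P, hPmax, hPI⟩ := Ideal.exists_le_maximal I htop
  have hP : P.IsPrime := hPmax.isPrime
  have hP0 : P ≠ ⊥ := fun h => hI (by rwa [h, le_bot_iff] at hPI)
  obtain ⟨J, rfl⟩ := Ideal.dvd_iff_le.mpr hPI
  have hJ0 : J ≠ ⊥ := right_ne_zero_of_mul hI
  by_cases hPσ : P.map Q.σ = P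
  · have hJσ : J.map Q.σ = J := mul_left_cancel₀ hP0 (by rwa [Ideal.map_mul, hPσ] at hσ)
    rw [idealClass_mul hP0 hJ0]
    refine mul_mem ?_ (ih J (mul_lt_right_of_ne_top hP.ne_top hJ0) hJ0 hJσ)
    rcases Q.idealClass_eq_one_or_isRamified hP0 hPσ with h | h
    · exact h ▸ one_mem _
    · exact Subgroup.subset_closure ⟨P, h, rfl⟩
  · obtain ⟨L, rfl, hLσ⟩ := Q.exists_eq_map_mul hP0 hPσ hσ
    have hσP0 : P.map Q.σ ≠ ⊥ := Q.map_ne_bot hP0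
    have hL0 : L ≠ ⊥ := right_ne_zero_of_mul hJ0
    have hlt : P * P.map Q.σ * L < L :=
      mul_lt_right_of_ne_top (ne_top_of_le_ne_top hP.ne_top Ideal.mul_le_left) hL0
    rw [idealClass_mul hP0 hJ0, idealClass_mul hσP0 hL0, ← mul_assoc,
      Q.idealClass_mul_map hP0, one_mul]
    exact ih L (mul_assoc P _ L ▸ hlt) hL0 hLσ

variable [IsDomain R] [FaithfulSMul R S]

theorem exists_mul_unit_norm_eq {I : Ideal S} (hI : I ≠ ⊥) (hc : idealClass I ^ 2 = 1) :
    ∃ (a b : S) (u : Rˣ), a ≠ 0 ∧ b ≠ 0 ∧ Ideal.span {a} * I = Ideal.span {b} * I.map Q.σ ∧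
      Q.norm a * u = Q.norm b := by
  have hσI := Q.map_ne_bot hI
  have hclass : idealClass I = idealClass (I.map Q.σ) :=
    mul_left_cancel (((sq _).symm.trans hc).trans (Q.idealClass_mul_map hI).symm)
  obtain ⟨a, b, ha, hb, hab⟩ := (idealClass_eq_iff hI hσI).mp hclass
  obtain ⟨n, hn⟩ := Q.exists_mul_map_eq_span I
  have hn0 : n ≠ 0 := by
    rintro rfl
    exact mul_ne_zero hI hσI (by simpa using hn)
  have hassoc := Q.associated_norm_mul hn (by rw [Q.map_map, mul_comm, hn]) hab
  obtain ⟨u, hu⟩ := hassoc.of_mul_right (Associated.refl n) hn0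
  exact ⟨a, b, u, ha, hb, hab, hu⟩

/-- Ambiguous class number theory: under the hypothesis `hN` on units, a class of order two contains
an ideal fixed by `σ`. -/
theorem mem_ramifiedClasses_of_sq_eq_one {s : S} (hs0 : s ≠ 0) (hs : Q.σ s = -s)
    (hN : ∀ (u : Rˣ) (a b : S), a ≠ 0 → b ≠ 0 → Q.norm a * u = Q.norm b →
      ∃ w : Sˣ, Q.norm w = u) {c : ClassGroup S} (hc : c ^ 2 = 1) : c ∈ Q.ramifiedClasses := by
  obtain ⟨I, hI, rfl⟩ := exists_idealClass_eq c
  obtain ⟨a, b, u, ha, hb, hab, hu⟩ := Q.exists_mul_unit_norm_eq hI hc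
  obtain ⟨w, hw⟩ := hN u a b ha hb hu
  have hnorm : a * w * Q.σ (a * w) = b * Q.σ b := by
    rw [← Q.algebraMap_norm b, ← hu, ← hw, map_mul, map_mul, Q.algebraMap_norm,
      Q.algebraMap_norm]
    ring
  obtain ⟨z, hz0, hz⟩ := Q.exists_mul_σ_eq hs0 hs hb hnorm
  have hz0' : Ideal.span {z} ≠ ⊥ := mt Ideal.span_singleton_eq_bot.mp hz0
  have hinv : (Ideal.span {z} * I).map Q.σ = Ideal.span {z} * I := by
    refine mul_left_cancel₀ (mt Ideal.span_singleton_eq_bot.mp hb) ?_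
    calc Ideal.span {b} * (Ideal.span {z} * I).map Q.σ
        = Ideal.span {Q.σ z} * (Ideal.span {b} * I.map Q.σ) := by
          rw [Ideal.map_mul, Q.map_span_singleton]; ring
      _ = Ideal.span {a * w * Q.σ z} * I := by
          rw [← hab, ← Ideal.span_singleton_mul_span_singleton,
            Ideal.span_singleton_mul_right_unit w.isUnit]
          ring
      _ = Ideal.span {b} * (Ideal.span {z} * I) := by
          rw [hz, ← Ideal.span_singleton_mul_span_singleton, mul_assoc]
  have hmem := Q.idealClass_mem_ramifiedClasses _ (mul_ne_zero hz0' hI) hinv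
  rwa [idealClass_mul hz0' hI, idealClass_span_singleton, one_mul] at hmem

theorem exists_norm_eq_of_isSquare_idealClass {I : Ideal S} (hI : I ≠ ⊥) {n : R}
    (hn : I * I.map Q.σ = Ideal.span {algebraMap R S n}) (hsq : IsSquare (idealClass I)) :
    ∃ (u : Rˣ) (c : R) (z : S), c ≠ 0 ∧ Q.norm z = u * n * c ^ 2 := by
  obtain ⟨d, hd⟩ := hsq
  obtain ⟨J, hJ, rfl⟩ := exists_idealClass_eq d
  obtain ⟨m, hm⟩ := Q.exists_mul_map_eq_span J
  rw [← idealClass_mul hJ hJ] at hd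
  obtain ⟨a, b, ha, -, hab⟩ := (idealClass_eq_iff hI (mul_ne_zero hJ hJ)).mp hd
  have hmm : (J * J) * (J * J).map Q.σ = Ideal.span {algebraMap R S (m * m)} := by
    rw [Ideal.map_mul, mul_mul_mul_comm, hm, map_mul, Ideal.span_singleton_mul_span_singleton]
  obtain ⟨u, hu⟩ := Q.associated_norm_mul hn hmm hab
  refine ⟨u, Q.norm a, a * b * algebraMap R S m, Q.norm_ne_zero ha,
    FaithfulSMul.algebraMap_injective R S ?_⟩
  have : u * n * Q.norm a ^ 2 = Q.norm a * (Q.norm b * (m * m)) := by rw [← hu]; ring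
  rw [this]
  simp only [map_mul, Q.algebraMap_norm, AlgEquiv.commutes]
  ring

end Ambiguous

section NormResidue

variable {R S k : Type*} [CommRing R] [IsDomain R] [Field k] (φ : R →+* k) {ϖ d m : R}

/-- Descent on the power of `ϖ` dividing `c`: if `ϖ ∣ c`, the equation forces `ϖ ∣ t` and then
`ϖ ∣ y`. -/
theorem isSquare_of_sq_sub_mul_sq [WfDvdMonoid R] (hϖ : Prime ϖ) (hφ : ∀ x, φ x = 0 ↔ ϖ ∣ x)
    (h2 : ¬ ϖ ∣ 2) (hd : ¬ ϖ ∣ d) {c t y : R} (hc : c ≠ 0)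
    (h : 4 * d * m * c ^ 2 = d * t ^ 2 - ϖ * y ^ 2) : IsSquare (φ m) := by
  obtain ⟨n, c₀, hc₀, rfl⟩ := WfDvdMonoid.max_power_factor hc hϖ.irreducible
  induction n generalizing t y with
  | zero =>
    have hϖ0 : φ ϖ = 0 := (hφ ϖ).mpr dvd_rfl
    have h20 : (2 : k) ≠ 0 := by simpa only [map_ofNat] using (hφ 2).not.mpr h2
    have hd0 : φ d ≠ 0 := (hφ d).not.mpr hd
    have hc0 : φ c₀ ≠ 0 := (hφ c₀).not.mpr hc₀
    have h' := congrArg φ h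
    simp only [pow_zero, one_mul, map_mul, map_pow, map_sub, hϖ0, map_ofNat] at h'
    refine ⟨φ t / (2 * φ c₀), ?_⟩
    field_simp
    refine mul_left_cancel₀ hd0 ?_
    linear_combination h'
  | succ n ih =>
    obtain ⟨t, rfl⟩ : ϖ ∣ t := by
      have : ϖ ∣ d * t ^ 2 := ⟨y ^ 2 + 4 * d * m * ϖ ^ (2 * n + 1) * c₀ ^ 2, by
        linear_combination -h⟩
      exact hϖ.dvd_of_dvd_pow ((hϖ.dvd_or_dvd this).resolve_left hd)
    obtain ⟨y, rfl⟩ : ϖ ∣ y := by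
      have : ϖ * ϖ ∣ ϖ * y ^ 2 := ⟨d * t ^ 2 - 4 * d * m * ϖ ^ (2 * n) * c₀ ^ 2, by
        linear_combination h⟩
      exact hϖ.dvd_of_dvd_pow ((mul_dvd_mul_iff_left hϖ.ne_zero).mp this)
    refine ih (t := t) (y := y) (mul_ne_zero (pow_ne_zero _ hϖ.ne_zero) ?_) ?_
    · exact fun h0 => hc₀ (h0 ▸ dvd_zero ϖ)
    · refine mul_left_cancel₀ (pow_ne_zero 2 hϖ.ne_zero) ?_
      linear_combination h

/-- In `R(√(ϖd))` a relative norm is, up to squares, a square modulo the odd ramified prime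
`ϖ`. -/
theorem isSquare_of_norm_eq [WfDvdMonoid R] [CommRing S] [Algebra R S] [FaithfulSMul R S]
    (Q : QuadraticConj R S) (hϖ : Prime ϖ) (hφ : ∀ x, φ x = 0 ↔ ϖ ∣ x) (h2 : ¬ ϖ ∣ 2)
    (hd : ¬ ϖ ∣ d) {s : S} (hs : Q.σ s = -s) (hsd : s ^ 2 = algebraMap R S (ϖ * d))
    {c : R} {z : S} (hc : c ≠ 0) (h : Q.norm z = m * c ^ 2) : IsSquare (φ m) := by
  obtain ⟨t, ht⟩ := Q.exists_trace z
  obtain ⟨y, hy⟩ := Q.exists_algebraMap_eq ((z - Q.σ z) * s)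
    (by rw [map_mul, map_sub, Q.σ_σ, hs]; ring)
  have hdisc : 4 * (ϖ * d) * (m * c ^ 2) = ϖ * d * t ^ 2 - y ^ 2 := by
    apply FaithfulSMul.algebraMap_injective R S
    rw [← h, map_mul, Q.algebraMap_norm, map_mul, map_sub, map_mul _ (ϖ * d), map_pow, map_pow,
      ht, hy, ← hsd, map_ofNat]
    ring
  obtain ⟨y, rfl⟩ : ϖ ∣ y := by
    have : ϖ ∣ y ^ 2 := ⟨d * t ^ 2 - 4 * d * m * c ^ 2, by linear_combination hdisc⟩
    exact hϖ.dvd_of_dvd_pow this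
  refine isSquare_of_sq_sub_mul_sq φ hϖ hφ h2 hd (t := t) (y := y) hc ?_
  refine mul_left_cancel₀ hϖ.ne_zero ?_
  linear_combination hdisc

end NormResidue

end QuadraticConj

/-! ### Finite abelian groups of 2-rank two -/

section PowerMaps

variable {G : Type*} [CommGroup G]

theorem card_quotient_range_pow [Finite G] (n : ℕ) :
    Nat.card (G ⧸ (powMonoidHom n : G →* G).range) =
      Nat.card (powMonoidHom n : G →* G).ker := by
  have hker := Subgroup.card_mul_index (powMonoidHom n : G →* G).ker
  rw [Subgroup.index_ker,
    Subgroup.card_eq_card_quotient_mul_card_subgroup (powMonoidHom n : G →* G).range] at hker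
  exact (Nat.eq_of_mul_eq_mul_right Nat.card_pos hker).symm

theorem card_ker_pow_mul_le [Finite G] (m n : ℕ) :
    Nat.card (powMonoidHom (m * n) : G →* G).ker ≤
      Nat.card (powMonoidHom m : G →* G).ker * Nat.card (powMonoidHom n : G →* G).ker := by
  let H := (powMonoidHom (m * n) : G →* G).ker
  have hle : (powMonoidHom m : G →* G).ker ≤ H := fun a (ha : a ^ m = 1) =>
    show a ^ (m * n) = 1 by rw [pow_mul, ha, one_pow]
  have hmap : H.map (powMonoidHom m) ≤ (powMonoidHom n : G →* G).ker := by
    rintro _ ⟨a, ha : a ^ (m * n) = 1, rfl⟩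
    change (a ^ m) ^ n = 1
    rwa [← pow_mul]
  have hcard := Subgroup.relIndex_mul_relIndex ⊥ _ H bot_le hle
  rw [Subgroup.relIndex_bot_left, Subgroup.relIndex_bot_left, Subgroup.relIndex_ker] at hcard
  rw [← hcard]
  exact Nat.mul_le_mul_left _ (Subgroup.card_le_of_le hmap)

theorem mem_sylow_of_pow_eq_one [Finite G] {p : ℕ} [Fact p.Prime] (P : Sylow p G) {z : G} {k : ℕ}
    (hz : z ^ p ^ k = 1) : z ∈ P := by
  obtain ⟨Q, hQ⟩ := (CommGroup.primaryComponent.isPGroup (G := G) (p := p)).exists_le_sylow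
  have := Sylow.unique_of_normal P inferInstance
  exact Subsingleton.elim Q P ▸ hQ (CommMonoid.mem_primaryComponent.mpr ⟨k, hz⟩)

theorem isCyclic_of_card_ker_pow_le [Finite G] {p : ℕ} [Fact p.Prime] (hG : IsPGroup p G)
    (h : Nat.card (powMonoidHom p : G →* G).ker ≤ p) : IsCyclic G := by
  classical
  have := Fintype.ofFinite G
  have hk (k : ℕ) : Nat.card (powMonoidHom (p ^ k) : G →* G).ker ≤ p ^ k := by
    induction k with
    | zero =>
      have : (powMonoidHom 1 : G →* G).ker = ⊥ := (MonoidHom.ker_eq_bot_iff _).mpr fun a b => by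
        simp
      simp [this]
    | succ k ih =>
      rw [pow_succ]
      exact (card_ker_pow_mul_le _ _).trans (Nat.mul_le_mul ih h)
  refine isCyclic_of_card_pow_eq_one_le fun n hn => ?_
  obtain ⟨N, hN⟩ := IsPGroup.iff_card.mp hG
  obtain ⟨k, -, hgcd⟩ := (Nat.dvd_prime_pow Fact.out).mp (Nat.gcd_dvd_right n (p ^ N))
  calc Finset.card {a : G | a ^ n = 1}
      ≤ Finset.card {a : G | a ^ p ^ k = 1} := by
        refine Finset.card_le_card fun a ha => ?_
        simp only [Finset.mem_filter, Finset.mem_univ, true_and] at ha ⊢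
        rw [← hgcd]
        exact pow_gcd_eq_one.mpr ⟨ha, hN ▸ pow_card_eq_one'⟩
    _ = Nat.card (powMonoidHom (p ^ k) : G →* G).ker := by
        rw [← Fintype.card_subtype, ← Nat.card_eq_fintype_card]
        rfl
    _ ≤ p ^ k := hk k
    _ ≤ n := hgcd ▸ Nat.gcd_le_left _ hn

/-- The complement is the kernel of a quadratic character that is nontrivial at `x`. -/
theorem exists_isComplement'_zpowers [Finite G] {x : G} (hx : x ^ 2 = 1) (hxs : ¬ IsSquare x) :
    ∃ H : Subgroup G, (Subgroup.zpowers x).IsComplement' H ∧ ∀ z : G, z * z ∈ H := by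
  let q := QuotientGroup.mk' (powMonoidHom 2 : G →* G).range
  have hqx : q x ≠ 1 := by
    refine (QuotientGroup.eq_one_iff x).not.mpr ?_
    rintro ⟨a, rfl⟩
    exact hxs ⟨a, sq a⟩
  obtain ⟨χ, hχ⟩ := CommGroup.exists_apply_ne_one_of_hasEnoughRootsOfUnity _ ℂ hqx
  let ψ := χ.comp q
  have hψ (z : G) : ψ (z * z) = 1 := by
    have : q (z * z) = 1 := (QuotientGroup.eq_one_iff _).mpr ⟨z, sq z⟩
    rw [MonoidHom.comp_apply, this, map_one]
  have hψ1 (z : G) : ψ z = 1 ∨ ψ z = -1 := by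
    have := congrArg Units.val (hψ z)
    rw [map_mul, Units.val_mul, Units.val_one, mul_self_eq_one_iff] at this
    exact this.imp (fun h => Units.ext h) (fun h => Units.ext h)
  have hψx : ψ x = -1 := (hψ1 x).resolve_left hχ
  refine ⟨ψ.ker, Subgroup.isComplement'_of_disjoint_and_mul_eq_univ ?_ ?_, hψ⟩
  · rw [Subgroup.disjoint_def]
    rintro _ ⟨k, rfl⟩ hk
    rcases Int.even_or_odd' k with ⟨j, rfl | rfl⟩
    · exact (zpow_mul x 2 j).trans (by norm_cast; rw [hx, one_zpow])
    · have hxk : x ^ (2 * j + 1) = x := by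
        rw [zpow_add_one, zpow_mul]
        norm_cast
        rw [hx, one_zpow, one_mul]
      exact absurd ((congrArg ψ hxk).symm.trans hk) hχ
  · refine Set.eq_univ_of_forall fun z => ?_
    rcases hψ1 z with hz | hz
    · exact ⟨1, one_mem _, z, hz, one_mul z⟩
    · refine ⟨x, Subgroup.mem_zpowers x, x⁻¹ * z, ?_, mul_inv_cancel_left x z⟩
      change ψ (x⁻¹ * z) = 1
      rw [map_mul, map_inv, hψx, hz, inv_mul_cancel]

theorem exists_sq_eq_of_isComplement'_zpowers {x y : G} (hx : x ^ 2 = 1) {H : Subgroup G}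
    (hH : (Subgroup.zpowers x).IsComplement' H) (hy : IsSquare y) : ∃ b : H, (b : G) ^ 2 = y := by
  obtain ⟨w, rfl⟩ := hy
  obtain ⟨⟨⟨_, k, rfl⟩, b⟩, rfl⟩ := hH.surjective w
  have hxk : (x ^ k) ^ 2 = 1 := by
    rw [← zpow_natCast, ← zpow_mul, mul_comm, zpow_mul, zpow_natCast, hx, one_zpow]
  refine ⟨b, ?_⟩
  change (b : G) ^ 2 = x ^ k * b * (x ^ k * b)
  rw [← sq, mul_pow, hxk, one_mul]

theorem nonempty_prod_mulEquiv_of_isComplement' {H K : Subgroup G} (h : H.IsComplement' K) :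
    Nonempty (H × K ≃* G) :=
  ⟨MulEquiv.ofBijective (H.subtype.coprod K.subtype) h⟩

end PowerMaps

section TwoRankTwo

variable {G : Type*} [CommGroup G] {x y : G}
  (h : ∀ z : G, z ^ 2 = 1 ↔ z = 1 ∨ z = x ∨ z = y ∨ z = x * y)

include h

theorem card_ker_sq_eq_two (hy1 : y ≠ 1) {H : Subgroup G} (hxH : x ∉ H) (hyH : y ∈ H) :
    Nat.card (powMonoidHom 2 : H →* H).ker = 2 := by
  have hxyH : x * y ∉ H := fun hxy => hxH ((H.mul_mem_cancel_right hyH).mp hxy)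
  have hker : ((powMonoidHom 2 : H →* H).ker : Set H) = {1, ⟨y, hyH⟩} := by
    ext ⟨z, hz⟩
    simp only [SetLike.mem_coe, MonoidHom.mem_ker, powMonoidHom_apply, Subtype.ext_iff,
      Subgroup.coe_pow, Subgroup.coe_one, Set.mem_insert_iff, Set.mem_singleton_iff, h]
    refine ⟨?_, by tauto⟩
    rintro (rfl | rfl | rfl | rfl)
    · exact .inl rfl
    · exact absurd hz hxH
    · exact .inr rfl
    · exact absurd hz hxyH
  rw [← SetLike.coe_sort_coe, hker, Nat.card_coe_set_eq,
    Set.ncard_pair fun h0 => hy1 (congrArg Subtype.val h0).symm]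

theorem card_ker_sq_eq_four (hx1 : x ≠ 1) (hy1 : y ≠ 1) (hxy : x ≠ y) :
    Nat.card (powMonoidHom 2 : G →* G).ker = 4 := by
  have hy2 : y * y = 1 := by rw [← sq, h]; tauto
  have hxy1 : x * y ≠ 1 := fun h0 => hxy (mul_right_cancel (h0.trans hy2.symm))
  have hker : ((powMonoidHom 2 : G →* G).ker : Set G) = {1, x, y, x * y} := Set.ext h
  rw [← SetLike.coe_sort_coe, hker, Nat.card_coe_set_eq, Set.ncard_insert_of_notMem,
    Set.ncard_insert_of_notMem, Set.ncard_pair]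
  · simpa using hx1
  · simpa [hxy, eq_comm] using hy1
  · simpa [hx1.symm, hy1.symm] using hxy1.symm

variable [Finite G]

theorem exists_equiv_zmod_prod_of_isPGroup (hG : IsPGroup 2 G) (hxs : ¬ IsSquare x)
    (hy1 : y ≠ 1) (hy : IsSquare y) :
    ∃ m : ℕ, 2 ≤ m ∧ Nonempty (G ≃* Multiplicative (ZMod 2 × ZMod (2 ^ m))) := by
  have : Fact (Nat.Prime 2) := ⟨Nat.prime_two⟩
  have hx2 : x ^ 2 = 1 := (h x).mpr (by tauto)
  have hx1 : x ≠ 1 := by rintro rfl; exact hxs (IsSquare.one)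
  obtain ⟨H, hH, hsq⟩ := exists_isComplement'_zpowers hx2 hxs
  have hxH : x ∉ H := fun hxH =>
    hx1 ((Subgroup.disjoint_def.mp hH.disjoint) (Subgroup.mem_zpowers x) hxH)
  have hyH : y ∈ H := by obtain ⟨w, rfl⟩ := hy; exact hsq w
  have hHcyc : IsCyclic H :=
    isCyclic_of_card_ker_pow_le (hG.to_subgroup H) (card_ker_sq_eq_two h hy1 hxH hyH).le
  obtain ⟨m, hm⟩ := IsPGroup.iff_card.mp (hG.to_subgroup H)
  refine ⟨m, ?_, ?_⟩
  swap
  · obtain ⟨e⟩ := nonempty_prod_mulEquiv_of_isComplement' hH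
    let e₁ := zmodCyclicMulEquiv (inferInstance : IsCyclic (Subgroup.zpowers x))
    let e₂ := zmodCyclicMulEquiv hHcyc
    rw [Nat.card_zpowers, orderOf_eq_prime hx2 hx1] at e₁
    rw [hm] at e₂
    exact ⟨e.symm.trans
      ((e₁.symm.prodCongr e₂.symm).trans (MulEquiv.prodMultiplicative _ _).symm)⟩
  obtain ⟨b, hb⟩ := exists_sq_eq_of_isComplement'_zpowers hx2 hH hy
  have hb2 : ¬ b ^ 2 ^ 1 = 1 := fun h0 => hy1 (hb ▸ congrArg Subtype.val h0)
  have hb4 : b ^ 2 ^ 2 = 1 := Subtype.ext (by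
    change (b : G) ^ (2 * 2) = 1
    rw [pow_mul, hb, h]
    tauto)
  refine (Nat.pow_dvd_pow_iff_le_right one_lt_two).mp ?_
  rw [← hm, ← orderOf_eq_prime_pow hb2 hb4]
  exact orderOf_dvd_natCard b

theorem exists_sylow_equiv_zmod_prod (hxs : ¬ IsSquare x) (hy1 : y ≠ 1) (hy : IsSquare y) :
    ∃ m : ℕ, 2 ≤ m ∧ ∀ P : Sylow 2 G, Nonempty (P ≃* Multiplicative (ZMod 2 × ZMod (2 ^ m))) := by
  have : Fact (Nat.Prime 2) := ⟨Nat.prime_two⟩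
  obtain ⟨P⟩ : Nonempty (Sylow 2 G) := inferInstance
  have := Sylow.unique_of_normal P inferInstance
  have hmem {z : G} (hz : z ^ 2 = 1) : z ∈ P := mem_sylow_of_pow_eq_one P (k := 1) (by simpa)
  have hxP : x ∈ P := hmem ((h x).mpr (by tauto))
  have hy2 : y ^ 2 = 1 := (h y).mpr (by tauto)
  obtain ⟨w, rfl⟩ := hy
  have hwP : w ∈ P := mem_sylow_of_pow_eq_one P (k := 2) (by rw [← hy2, ← sq, ← pow_mul]; rfl)
  have hP (z : P) : z ^ 2 = 1 ↔ z = 1 ∨ z = ⟨x, hxP⟩ ∨ z = ⟨w, hwP⟩ * ⟨w, hwP⟩ ∨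
      z = ⟨x, hxP⟩ * (⟨w, hwP⟩ * ⟨w, hwP⟩) := by
    simpa only [Subtype.ext_iff] using! h z
  obtain ⟨m, hm, e⟩ := exists_equiv_zmod_prod_of_isPGroup hP P.isPGroup'
    (fun ⟨a, ha⟩ => hxs ⟨a, congrArg Subtype.val ha⟩)
    (fun h0 => hy1 (congrArg Subtype.val h0)) ⟨_, rfl⟩
  exact ⟨m, hm, fun Q => Subsingleton.elim P Q ▸ e⟩

theorem card_quotient_range_sq_eq_four (hxs : ¬ IsSquare x) (hy1 : y ≠ 1) (hy : IsSquare y) :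
    Nat.card (G ⧸ (powMonoidHom 2 : G →* G).range) = 4 := by
  rw [card_quotient_range_pow]
  refine card_ker_sq_eq_four h ?_ hy1 ?_
  · rintro rfl
    exact hxs IsSquare.one
  · rintro rfl
    exact hxs hy

theorem card_range_sq_quotient_range_pow_four (hxs : ¬ IsSquare x) (hy1 : y ≠ 1)
    (hy : IsSquare y) :
    Nat.card ((powMonoidHom 2 : G →* G).range ⧸
      ((powMonoidHom 4 : G →* G).range.subgroupOf (powMonoidHom 2 : G →* G).range)) = 2 := by
  have hrange : (powMonoidHom 4 : G →* G).range.subgroupOf (powMonoidHom 2 : G →* G).range =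
      (powMonoidHom 2 : (powMonoidHom 2 : G →* G).range →* _).range := by
    ext ⟨z, hz⟩
    rw [Subgroup.mem_subgroupOf]
    constructor
    · rintro ⟨a, ha⟩
      exact ⟨⟨a ^ 2, a, rfl⟩, Subtype.ext ((pow_mul a 2 2).symm.trans ha)⟩
    · rintro ⟨⟨_, a, rfl⟩, ha⟩
      exact ⟨a, (pow_mul a 2 2).trans (congrArg Subtype.val ha)⟩
  rw [hrange, card_quotient_range_pow]
  refine card_ker_sq_eq_two h hy1 ?_ ?_
  · rintro ⟨a, rfl⟩
    exact hxs ⟨a, sq a⟩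
  · obtain ⟨w, rfl⟩ := hy
    exact ⟨w, sq w⟩

end TwoRankTwo

/-! ### Relations between units modulo squares -/

theorem exists_isSquare_prod_pow {G κ ι : Type*} [CommGroup G] [Fintype κ] [Fintype ι]
    {g : κ → G} (hg : Subgroup.closure (Set.range g) = ⊤)
    (hcard : Fintype.card κ < Fintype.card ι) (u : ι → G) :
    ∃ e : ι → ℕ, e ≠ 0 ∧ (∀ i, e i ≤ 1) ∧ IsSquare (∏ i, u i ^ e i) := by
  let V := Additive (G ⧸ (powMonoidHom 2 : G →* G).range)
  let q : Additive G →+ V := (QuotientGroup.mk' _).toAdditive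
  have hV (v : V) : 2 • v = 0 := by
    obtain ⟨z, rfl⟩ := QuotientGroup.mk_surjective v
    exact (QuotientGroup.eq_one_iff (z ^ 2)).mpr ⟨z, rfl⟩
  let _ : Module (ZMod 2) V := AddCommGroup.zmodModule hV
  have hspan (z : G) :
      q (.ofMul z) ∈ Submodule.span (ZMod 2) (Set.range fun j => q (.ofMul (g j))) := by
    induction hg ▸ Subgroup.mem_top z using Subgroup.closure_induction with
    | mem z hz =>
      obtain ⟨j, rfl⟩ := hz
      exact Submodule.subset_span ⟨j, rfl⟩
    | one => exact zero_mem _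
    | mul a b _ _ ha hb => exact add_mem ha hb
    | inv a _ ha => exact neg_mem ha
  have := Module.Finite.span_of_finite (ZMod 2) (Set.finite_range fun j => q (.ofMul (g j)))
  have hdep : ¬ LinearIndependent (ZMod 2) fun i => q (.ofMul (u i)) := fun hind =>
    hcard.not_ge <| calc
      Fintype.card ι = (Set.range fun i => q (.ofMul (u i))).finrank (ZMod 2) :=
        linearIndependent_iff_card_eq_finrank_span.mp hind
      _ ≤ (Set.range fun j => q (.ofMul (g j))).finrank (ZMod 2) :=
        Submodule.finrank_mono (Submodule.span_le.mpr (Set.range_subset_iff.mpr fun i => hspan _))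
      _ ≤ Fintype.card κ := finrank_range_le_card _
  obtain ⟨c, hc, i, hi⟩ := Fintype.not_linearIndependent_iff.mp hdep
  refine ⟨fun i => (c i).val, fun h => hi ?_, fun i => Nat.lt_succ_iff.mp (ZMod.val_lt _), ?_⟩
  · exact (ZMod.val_eq_zero _).mp (congrFun h i)
  have hq : q (.ofMul (∏ i, u i ^ (c i).val)) = ∑ i, c i • q (.ofMul (u i)) := by
    simp only [ofMul_prod, map_sum, ofMul_pow, map_nsmul, ← Nat.cast_smul_eq_nsmul (ZMod 2),
      ZMod.natCast_val, ZMod.cast_id', id]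
  obtain ⟨a, ha⟩ := (QuotientGroup.eq_one_iff _).mp (hq.trans hc)
  exact ⟨a, ha.symm.trans (sq a)⟩

theorem exists_isSquare_prod_units_pow (K : Type*) [Field K] [NumberField K] {n : ℕ}
    (hn : Units.rank K + 1 < n) (u : Fin n → (𝓞 K)ˣ) :
    ∃ e : Fin n → ℕ, e ≠ 0 ∧ (∀ i, e i ≤ 1) ∧ IsSquare (∏ i, u i ^ e i) := by
  obtain ⟨ω, hω⟩ := IsCyclic.exists_zpow_surjective (G := Units.torsion K)
  let g : Option (Fin (Units.rank K)) → (𝓞 K)ˣ := fun o => o.elim ω (Units.fundSystem K)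
  have hg : Subgroup.closure (Set.range g) = ⊤ := by
    rw [eq_top_iff, ← Units.closure_fundSystem_sup_torsion_eq_top, sup_le_iff,
      Subgroup.closure_le]
    refine ⟨?_, fun z hz => ?_⟩
    · rintro _ ⟨j, rfl⟩
      exact Subgroup.subset_closure ⟨some j, rfl⟩
    · obtain ⟨k, hk⟩ := hω ⟨z, hz⟩
      have hωk : (ω : (𝓞 K)ˣ) ^ k = z := congrArg Subtype.val hk
      have hω : (ω : (𝓞 K)ˣ) ∈ Set.range g := ⟨none, rfl⟩
      exact hωk ▸ zpow_mem (Subgroup.subset_closure hω) k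
  exact exists_isSquare_prod_pow hg (by simpa using hn) u

/-! ### The ring of integers of the eighth cyclotomic field -/

namespace CyclotomicEight

section RingOfIntegers

variable (F : Type*) [Field F] [NumberField F] [hF : IsCyclotomicExtension {8} ℚ F]

/-- A primitive eighth root of unity in the ring of integers of `F`. -/
def ζ : 𝓞 F := (IsCyclotomicExtension.zeta_spec 8 ℚ F).toInteger

theorem isPrimitiveRoot_ζ : IsPrimitiveRoot (ζ F) 8 :=
  (IsCyclotomicExtension.zeta_spec 8 ℚ F).toInteger_isPrimitiveRoot

theorem ζ_pow_four : ζ F ^ 4 = -1 := by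
  have h := isPrimitiveRoot_ζ F
  have h0 : (ζ F ^ 4 - 1) * (ζ F ^ 4 + 1) = 0 := by linear_combination h.pow_eq_one
  exact eq_neg_of_add_eq_zero_left <| (mul_eq_zero.mp h0).resolve_left <|
    sub_ne_zero.mpr (h.pow_ne_one_of_pos_of_lt (by norm_num) (by norm_num))

/-- The integral power basis `1, ζ, ζ², ζ³`. -/
def powerBasis : PowerBasis ℤ (𝓞 F) :=
  haveI : IsCyclotomicExtension {2 ^ 3} ℚ F := hF
  IsPrimitiveRoot.integralPowerBasisOfPrimePow (p := 2) (k := 3)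
    (IsCyclotomicExtension.zeta_spec 8 ℚ F)

theorem powerBasis_gen : (powerBasis F).gen = ζ F :=
  haveI : IsCyclotomicExtension {2 ^ 3} ℚ F := hF
  IsPrimitiveRoot.integralPowerBasisOfPrimePow_gen (p := 2) (k := 3)
    (IsCyclotomicExtension.zeta_spec 8 ℚ F)

theorem powerBasis_dim : (powerBasis F).dim = 4 :=
  haveI : IsCyclotomicExtension {2 ^ 3} ℚ F := hF
  (IsPrimitiveRoot.integralPowerBasisOfPrimePow_dim (p := 2) (k := 3)
    (IsCyclotomicExtension.zeta_spec 8 ℚ F)).trans (by decide)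

theorem exists_eq_add_mul_ζ (x : 𝓞 F) :
    ∃ a b c d : ℤ, x = a + b * ζ F + c * ζ F ^ 2 + d * ζ F ^ 3 := by
  have h := (powerBasis F).basis.sum_repr x
  let e : Fin 4 ≃ Fin (powerBasis F).dim := finCongr (powerBasis_dim F).symm
  rw [← e.sum_comp, Fin.sum_univ_four] at h
  simp only [PowerBasis.coe_basis, powerBasis_gen, zsmul_eq_mul] at h
  let c i := (powerBasis F).basis.repr x (e i)
  exact ⟨c 0, c 1, c 2, c 3, h.symm.trans (by simp [c, e])⟩

theorem minpoly_ζ : minpoly ℤ (ζ F) = Polynomial.X ^ 4 + 1 := by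
  have hζ : minpoly ℤ (algebraMap (𝓞 F) F (ζ F)) = minpoly ℤ (ζ F) :=
    minpoly.algebraMap_eq RingOfIntegers.coe_injective _
  have h8 := Polynomial.cyclotomic_prime_pow_eq_geom_sum (R := ℤ) (p := 2) (n := 2) Nat.prime_two
  simp only [Finset.sum_range_succ, Finset.sum_range_zero, Nat.reducePow, Nat.reduceAdd,
    pow_zero, pow_one, zero_add] at h8
  rw [← hζ, add_comm, ← h8]
  exact (Polynomial.cyclotomic_eq_minpoly (IsCyclotomicExtension.zeta_spec 8 ℚ F)
    (by norm_num)).symm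

variable {F}

/-- The ring homomorphism from `ℤ[ζ]` sending `ζ` to a root `t` of `X⁴ + 1`. -/
def lift {A : Type*} [CommRing A] (t : A) (ht : t ^ 4 = -1) : 𝓞 F →+* A :=
  ((powerBasis F).lift t (by rw [powerBasis_gen, minpoly_ζ]; simp [ht])).toRingHom

@[simp]
theorem lift_ζ {A : Type*} [CommRing A] (t : A) (ht : t ^ 4 = -1) : lift t ht (ζ F) = t := by
  have h := (powerBasis F).lift_gen t (by rw [powerBasis_gen, minpoly_ζ]; simp [ht])
  conv_lhs => rw [← powerBasis_gen]
  exact h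

theorem ringHom_ext {A : Type*} [CommRing A] {f g : 𝓞 F →+* A} (h : f (ζ F) = g (ζ F)) :
    f = g := by
  ext x
  obtain ⟨a, b, c, d, rfl⟩ := exists_eq_add_mul_ζ F x
  simp [h]

variable (F)

theorem finrank_eq_four : Module.finrank ℚ F = 4 := by
  rw [IsCyclotomicExtension.finrank (n := 8) F (Polynomial.cyclotomic.irreducible_rat (by simp))]
  decide

theorem nrComplexPlaces_eq_two : InfinitePlace.nrComplexPlaces F = 2 := by
  rw [IsCyclotomicExtension.Rat.nrComplexPlaces_eq_totient_div_two 8]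
  decide

theorem natAbs_discr : (discr F).natAbs = 256 := by
  have htot : Nat.totient 8 = 4 := by decide
  have hfac : Nat.primeFactors 8 = {2} :=
    Nat.primeFactors_prime_pow (k := 3) (by norm_num) Nat.prime_two
  rw [IsCyclotomicExtension.Rat.natAbs_discr 8, htot, hfac]
  norm_num

theorem rank_units_eq_one : Units.rank F = 1 := by
  have h := InfinitePlace.card_add_two_mul_card_eq_rank F
  rw [nrComplexPlaces_eq_two, finrank_eq_four] at h
  rw [Units.rank, InfinitePlace.card_eq_nrRealPlaces_add_nrComplexPlaces, nrComplexPlaces_eq_two]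
  lia

theorem minkowskiBound_lt_three :
    (4 / Real.pi) ^ InfinitePlace.nrComplexPlaces F *
      ((Module.finrank ℚ F).factorial / (Module.finrank ℚ F : ℝ) ^ Module.finrank ℚ F *
        √|(discr F : ℝ)|) < 3 := by
  have hd : |(discr F : ℝ)| = 16 ^ 2 := by
    rw [← Int.cast_abs, Int.abs_eq_natAbs, natAbs_discr]
    norm_num
  have hpi : 9 < Real.pi ^ 2 := by nlinarith [Real.pi_gt_three]
  rw [finrank_eq_four, nrComplexPlaces_eq_two, hd, Real.sqrt_sq (by norm_num), div_pow,
    show Nat.factorial 4 = 24 from rfl, div_mul_eq_mul_div, div_lt_iff₀ (by positivity)]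
  norm_num
  linarith

theorem ker_lift_one_eq_span :
    RingHom.ker (lift (F := F) (1 : ZMod 2) (by decide)) = Ideal.span {1 - ζ F} := by
  have h2 : 1 - ζ F ∣ 2 := ⟨1 + ζ F + ζ F ^ 2 + ζ F ^ 3, by linear_combination ζ_pow_four F⟩
  apply le_antisymm
  · intro x hx
    obtain ⟨a, b, c, d, rfl⟩ := exists_eq_add_mul_ζ F x
    have hsum : ((a + b + c + d : ℤ) : ZMod 2) = 0 := by simpa using hx
    obtain ⟨k, hk⟩ := (ZMod.intCast_zmod_eq_zero_iff_dvd _ 2).mp hsum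
    have hk' : (a + b + c + d : 𝓞 F) = 2 * k := mod_cast congrArg (Int.cast (R := 𝓞 F)) hk
    rw [Ideal.mem_span_singleton]
    refine (dvd_sub_right (h2.mul_right (k : 𝓞 F))).mp
      ⟨b + c * (1 + ζ F) + d * (1 + ζ F + ζ F ^ 2), ?_⟩
    linear_combination -hk'
  · simp [RingHom.mem_ker]

variable {F} in
theorem eq_span_of_two_mem {I : Ideal (𝓞 F)} [hI : I.IsPrime] (h2 : 2 ∈ I) :
    I = Ideal.span {1 - ζ F} := by
  have hmax : (Ideal.span {1 - ζ F}).IsMaximal := by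
    have : Fact (Nat.Prime 2) := ⟨Nat.prime_two⟩
    rw [← ker_lift_one_eq_span]
    exact RingHom.ker_isMaximal_of_surjective _ (ZMod.ringHom_surjective _)
  refine (hmax.eq_of_le hI.ne_top ((Ideal.span_singleton_le_iff_mem _).mpr ?_)).symm
  refine hI.mem_of_pow_mem 4 ?_
  have : (1 - ζ F) ^ 4 = (3 * ζ F ^ 2 - 2 * ζ F - 2 * ζ F ^ 3) * 2 := by
    linear_combination ζ_pow_four F
  exact this ▸ I.mul_mem_left _ h2

/-- The Minkowski bound is less than three, and the only prime above two is generated by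
`1 - ζ`. -/
theorem isPrincipalIdealRing : IsPrincipalIdealRing (𝓞 F) := by
  apply RingOfIntegers.isPrincipalIdealRing_of_isPrincipal_of_norm_le_of_isPrime
  intro I hI hN
  have hlt : Ideal.absNorm (I : Ideal (𝓞 F)) < 3 :=
    mod_cast hN.trans_lt (minkowskiBound_lt_three F)
  have h0 : Ideal.absNorm (I : Ideal (𝓞 F)) ≠ 0 :=
    Ideal.absNorm_eq_zero_iff.not.mpr (nonZeroDivisors.ne_zero I.2)
  have h1 : Ideal.absNorm (I : Ideal (𝓞 F)) ≠ 1 := Ideal.absNorm_eq_one_iff.not.mpr hI.ne_top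
  have h2 : Ideal.absNorm (I : Ideal (𝓞 F)) = 2 := by lia
  have hmem := Ideal.absNorm_mem (I : Ideal (𝓞 F))
  rw [h2] at hmem
  exact ⟨1 - ζ F, eq_span_of_two_mem (mod_cast hmem)⟩

end RingOfIntegers

/-! ### Units of the eighth cyclotomic field modulo squares -/

section Units

variable (F : Type*) [Field F] [NumberField F] [hF : IsCyclotomicExtension {8} ℚ F]

/-- The square root `√2 = ζ + ζ⁻¹` of two. -/
def sqrtTwo : 𝓞 F := ζ F - ζ F ^ 3

theorem sqrtTwo_sq : sqrtTwo F ^ 2 = 2 := by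
  rw [sqrtTwo]
  linear_combination (ζ F ^ 2 - 2) * ζ_pow_four F

/-- `ζ` as a unit. -/
def ζUnit : (𝓞 F)ˣ :=
  ⟨ζ F, -ζ F ^ 3, by linear_combination -ζ_pow_four F, by linear_combination -ζ_pow_four F⟩

/-- The fundamental unit `1 + √2`. -/
def fundUnit : (𝓞 F)ˣ :=
  ⟨1 + sqrtTwo F, sqrtTwo F - 1, by linear_combination sqrtTwo_sq F,
    by linear_combination sqrtTwo_sq F⟩

theorem coe_ζUnit : (ζUnit F : 𝓞 F) = ζ F := rfl

theorem coe_fundUnit : (fundUnit F : 𝓞 F) = 1 + sqrtTwo F := rfl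

theorem not_isSquare_ζ : ¬ IsSquare (ζ F) := fun h => by
  have h41 := h.map (lift (F := F) (3 : ZMod 41) (by decide))
  rw [lift_ζ] at h41
  revert h41
  decide

theorem not_isSquare_fundUnit : ¬ IsSquare (fundUnit F : 𝓞 F) := fun h => by
  have h17 := h.map (lift (F := F) (2 : ZMod 17) (by decide))
  rw [coe_fundUnit, sqrtTwo, map_add, map_sub, map_pow, map_one, lift_ζ] at h17
  revert h17
  decide

theorem not_isSquare_ζ_mul_fundUnit : ¬ IsSquare (ζ F * fundUnit F : 𝓞 F) := fun h => by
  have h17 := h.map (lift (F := F) (2 : ZMod 17) (by decide))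
  rw [coe_fundUnit, sqrtTwo, map_mul, map_add, map_sub, map_pow, map_one, lift_ζ] at h17
  revert h17
  decide

variable {F}

theorem eq_zero_of_isSquare_ζ_pow_mul {a b : ℕ} (ha : a ≤ 1) (hb : b ≤ 1)
    (h : IsSquare (↑(ζUnit F ^ a * fundUnit F ^ b) : 𝓞 F)) : a = 0 ∧ b = 0 := by
  rw [Units.val_mul, Units.val_pow_eq_pow_val, Units.val_pow_eq_pow_val, coe_ζUnit] at h
  interval_cases a <;> interval_cases b <;>
    simp only [pow_zero, pow_one, one_mul, mul_one] at h
  · exact ⟨rfl, rfl⟩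
  · exact absurd h (not_isSquare_fundUnit F)
  · exact absurd h (not_isSquare_ζ F)
  · exact absurd h (not_isSquare_ζ_mul_fundUnit F)

theorem exists_unit_eq_mul_sq (u : (𝓞 F)ˣ) :
    ∃ (a b : ℕ) (w : (𝓞 F)ˣ), a ≤ 1 ∧ b ≤ 1 ∧ u = ζUnit F ^ a * fundUnit F ^ b * w ^ 2 := by
  obtain ⟨e, he0, he, hsq⟩ := exists_isSquare_prod_units_pow F (n := 3)
    (by rw [rank_units_eq_one]; norm_num) ![ζUnit F, fundUnit F, u]
  simp only [Fin.prod_univ_three, Matrix.cons_val_zero, Matrix.cons_val_one,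
    Matrix.cons_val] at hsq
  rcases Nat.le_one_iff_eq_zero_or_eq_one.mp (he 2) with h2 | h2
  · rw [h2, pow_zero, mul_one] at hsq
    obtain ⟨h0, h1⟩ := eq_zero_of_isSquare_ζ_pow_mul (he 0) (he 1)
      (hsq.map (Units.coeHom (𝓞 F)))
    exact absurd (funext (Fin.forall_fin_succ.mpr ⟨h0, by simp [Fin.forall_fin_two, h1, h2]⟩)) he0
  · obtain ⟨v, hv⟩ := hsq
    refine ⟨e 0, e 1, (ζUnit F ^ e 0 * fundUnit F ^ e 1)⁻¹ * v, he 0, he 1, ?_⟩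
    rw [h2, pow_one] at hv
    generalize ζUnit F ^ e 0 * fundUnit F ^ e 1 = x at hv ⊢
    rw [mul_pow, sq v, ← hv, sq, mul_assoc x⁻¹, inv_mul_cancel_left, mul_inv_cancel_left]

end Units

end CyclotomicEight

/-! ### Primes of degree one in the eighth cyclotomic field -/

theorem dvd_of_intCast_dvd {K : Type*} [Field K] [NumberField K] {m n : ℤ}
    (h : (m : 𝓞 K) ∣ n) : m ∣ n := by
  have hnorm (k : ℤ) : Algebra.norm ℤ (k : 𝓞 K) = k ^ Module.finrank ℤ (𝓞 K) :=
    Algebra.norm_algebraMap (S := 𝓞 K) k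
  have h' := map_dvd (Algebra.norm ℤ) h
  rw [hnorm, hnorm] at h'
  exact (Int.pow_dvd_pow_iff Module.finrank_pos.ne').mp h'

theorem zmod_two_ne_zero {p : ℕ} [hp : Fact p.Prime] (hp2 : p ≠ 2) : (2 : ZMod p) ≠ 0 := fun h =>
  hp2 ((Nat.prime_dvd_prime_iff_eq hp.out Nat.prime_two).mp
    ((ZMod.natCast_eq_zero_iff 2 p).mp (mod_cast h)))

section FourthPower

variable {A : Type*} [CommRing A] {t : A} (ht : t ^ 4 = -1)

include ht

theorem odd_pow_pow_four (k : ℕ) : (t ^ (2 * k + 1)) ^ 4 = -1 := by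
  rw [← pow_mul, mul_comm, pow_mul, ht]
  exact Odd.neg_one_pow ⟨k, rfl⟩

theorem pow_eq_pow_of_modEq_eight {m n : ℕ} (h : m ≡ n [MOD 8]) : t ^ m = t ^ n := by
  have h8 : t ^ 8 = 1 := by linear_combination (t ^ 4 - 1) * ht
  rw [pow_eq_pow_mod m h8, pow_eq_pow_mod n h8, h]

theorem odd_pow_injective (h2 : (2 : A) ≠ 0) :
    Function.Injective fun k : Fin 4 => t ^ (2 * (k : ℕ) + 1) := by
  have h8 : orderOf t = 8 := by
    refine orderOf_eq_prime_pow (p := 2) (n := 2) (fun h => h2 ?_) ?_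
    · linear_combination ht - h
    · linear_combination (t ^ 4 - 1) * ht
  intro j k hjk
  have h := pow_injOn_Iio_orderOf (Set.mem_Iio.mpr (by lia)) (Set.mem_Iio.mpr (by lia)) hjk
  lia

end FourthPower

namespace CyclotomicEight

section Split

variable {F : Type*} [Field F] [NumberField F] [IsCyclotomicExtension {8} ℚ F]

/-- The conjugation `ζ ↦ ζ ^ (2 * k + 1)` of `ℤ[ζ]`. -/
def conj (k : Fin 4) : 𝓞 F →+* 𝓞 F :=
  lift (ζ F ^ (2 * (k : ℕ) + 1)) (odd_pow_pow_four (ζ_pow_four F) k)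

theorem conj_ζ (k : Fin 4) : conj k (ζ F) = ζ F ^ (2 * (k : ℕ) + 1) := lift_ζ _ _

theorem conj_conj_of_modEq {i j k : Fin 4}
    (h : (2 * i + 1) * (2 * j + 1) ≡ (2 * k + 1 : ℕ) [MOD 8]) (x : 𝓞 F) :
    conj i (conj j x) = conj k x := by
  have : (conj (F := F) i).comp (conj j) = conj k := ringHom_ext <| by
    rw [RingHom.comp_apply, conj_ζ, map_pow, conj_ζ, conj_ζ, ← pow_mul]
    exact pow_eq_pow_of_modEq_eight (ζ_pow_four F) h
  exact DFunLike.congr_fun this x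

@[simp]
theorem conj_zero (x : 𝓞 F) : conj 0 x = x := by
  have : conj (F := F) 0 = RingHom.id _ := ringHom_ext (by simp [conj_ζ])
  exact DFunLike.congr_fun this x

theorem conj_conj (k : Fin 4) (x : 𝓞 F) : conj k (conj k x) = x := by
  rw [conj_conj_of_modEq (k := 0) (by revert k; decide), conj_zero]

variable {p : ℕ} [hp : Fact p.Prime] {r : ZMod p} (hr : r ^ 4 = -1)

/-- The residue map `ζ ↦ r ^ (2 * k + 1)` to the prime field. -/
def residue (k : Fin 4) : 𝓞 F →+* ZMod p := lift (r ^ (2 * (k : ℕ) + 1)) (odd_pow_pow_four hr k)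

theorem residue_ζ (k : Fin 4) : residue hr k (ζ F) = r ^ (2 * (k : ℕ) + 1) := lift_ζ _ _

theorem residue_conj {i j k : Fin 4}
    (h : (2 * i + 1) * (2 * j + 1) ≡ (2 * k + 1 : ℕ) [MOD 8]) (x : 𝓞 F) :
    residue hr i (conj j x) = residue hr k x := by
  have : (residue (F := F) hr i).comp (conj j) = residue hr k := ringHom_ext <| by
    rw [RingHom.comp_apply, conj_ζ, map_pow, residue_ζ, residue_ζ, ← pow_mul]
    exact pow_eq_pow_of_modEq_eight hr h
  exact DFunLike.congr_fun this x

theorem residue_zero_conj (k : Fin 4) (x : 𝓞 F) : residue hr 0 (conj k x) = residue hr k x :=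
  residue_conj hr (by simp [Nat.ModEq]) x

variable (F) in
theorem exists_residue_eq_zero_iff : ∃ π : 𝓞 F, ∀ x, residue hr 0 x = 0 ↔ π ∣ x := by
  have := isPrincipalIdealRing F
  obtain ⟨π, hπ⟩ := (IsPrincipalIdealRing.principal (RingHom.ker (residue (F := F) hr 0))).principal
  exact ⟨π, fun x => by rw [← RingHom.mem_ker, hπ]; exact Ideal.mem_span_singleton⟩

variable {π : 𝓞 F} (hπ : ∀ x, residue hr 0 x = 0 ↔ π ∣ x)

include hπ

theorem residue_eq_zero_iff (k : Fin 4) (x : 𝓞 F) : residue hr k x = 0 ↔ conj k π ∣ x := by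
  rw [← residue_zero_conj, hπ]
  constructor <;> intro h
  · simpa only [conj_conj] using map_dvd (conj k) h
  · simpa only [conj_conj] using map_dvd (conj k) h

theorem conj_dvd_prime (k : Fin 4) : conj k π ∣ (p : 𝓞 F) := by
  rw [← residue_eq_zero_iff hr hπ, map_natCast, ZMod.natCast_self]

theorem prime_conj (k : Fin 4) : Prime (conj k π) := by
  have hker : RingHom.ker (residue hr k) = Ideal.span {conj k π} := by
    ext x
    rw [RingHom.mem_ker, residue_eq_zero_iff hr hπ, Ideal.mem_span_singleton]
  have h0 : conj k π ≠ 0 := fun h => by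
    have hdvd := conj_dvd_prime hr hπ k
    rw [h, zero_dvd_iff] at hdvd
    exact hp.out.ne_zero (mod_cast hdvd)
  rw [← Ideal.span_singleton_prime h0, ← hker]
  exact RingHom.ker_isPrime _

variable (hp2 : p ≠ 2)

include hp2

/-- An integer lifting the image of `ζ` under the `k`-th residue map separates it from the
others. -/
theorem residue_conj_ne_zero {j k : Fin 4} (hjk : j ≠ k) : residue hr j (conj k π) ≠ 0 := by
  rw [Ne, residue_eq_zero_iff hr hπ]
  intro h
  have hζ (i : Fin 4) : residue hr i (ζ F - ((r ^ (2 * (k : ℕ) + 1)).val : 𝓞 F)) =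
      r ^ (2 * (i : ℕ) + 1) - r ^ (2 * (k : ℕ) + 1) := by
    rw [map_sub, residue_ζ, map_natCast, ZMod.natCast_zmod_val]
  have hk := (residue_eq_zero_iff hr hπ k _).mp ((hζ k).trans (sub_self _))
  have hj := (residue_eq_zero_iff hr hπ j _).mpr (h.trans hk)
  rw [hζ, sub_eq_zero] at hj
  exact hjk (odd_pow_injective hr (zmod_two_ne_zero hp2) hj)

theorem residue_self_ne_zero {k : Fin 4} (hk : k ≠ 0) : residue hr k π ≠ 0 := by
  simpa only [conj_zero] using residue_conj_ne_zero hr hπ hp2 hk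

theorem not_conj_dvd_conj {j k : Fin 4} (hjk : j ≠ k) : ¬ conj j π ∣ conj k π :=
  (residue_eq_zero_iff hr hπ j _).not.mp (residue_conj_ne_zero hr hπ hp2 hjk)

theorem eq_prime_of_prod_conj_eq {n : ℤ} (hn0 : 0 ≤ n) (hn : ∏ k, conj k π = n) : n = p := by
  have := isPrincipalIdealRing F
  have hdvd : ∏ k, conj k π ∣ (p : 𝓞 F) :=
    Fintype.prod_dvd_of_isRelPrime (fun j k hjk =>
      (prime_conj hr hπ j).irreducible.isRelPrime_iff_not_dvd.mpr
        (not_conj_dvd_conj hr hπ hp2 hjk)) (conj_dvd_prime hr hπ)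
  have hpn : residue hr 0 (n : 𝓞 F) = 0 := by
    rw [residue_eq_zero_iff hr hπ, ← hn]
    exact Finset.dvd_prod_of_mem _ (Finset.mem_univ _)
  rw [map_intCast, ZMod.intCast_zmod_eq_zero_iff_dvd] at hpn
  rw [hn] at hdvd
  exact Int.dvd_antisymm hn0 (by positivity) (dvd_of_intCast_dvd (K := F) (mod_cast hdvd)) hpn

end Split

end CyclotomicEight

/-! ### Quadratic symbols of representations by `x² - 2y²` -/

section Symbols

open NumberTheorySymbols

variable {p : ℕ}

theorem jacobiSym_cast_eq_pow [Fact p.Prime] (a : ℤ) :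
    ((J(a | p) : ℤ) : ZMod p) = (a : ZMod p) ^ (p / 2) := by
  rw [← jacobiSym.legendreSym.to_jacobiSym, legendreSym.eq_pow]

theorem isSquare_intCast_iff_jacobiSym [Fact p.Prime] {a : ℤ} (ha : (a : ZMod p) ≠ 0) :
    IsSquare (a : ZMod p) ↔ J(a | p) = 1 := by
  rw [← jacobiSym.legendreSym.to_jacobiSym, legendreSym.eq_one_iff p ha]

theorem isCoprime_of_sq_add_mul_sq_eq_prime [hp : Fact p.Prime] {a b m : ℤ}
    (h : a ^ 2 + m * b ^ 2 = p) : IsCoprime a b := by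
  rw [Int.isCoprime_iff_gcd_eq_one, ← Int.natAbs_natCast (Int.gcd a b), ← Int.isUnit_iff_natAbs_eq]
  refine (Nat.prime_iff_prime_int.mp hp.out).squarefree _ ?_
  rw [← sq, ← h]
  exact dvd_add (pow_dvd_pow_of_dvd (Int.gcd_dvd_left ..) 2)
    ((pow_dvd_pow_of_dvd (Int.gcd_dvd_right ..) 2).mul_left m)

theorem jacobiSym_natAbs_sq {a : ℤ} {b : ℤ} (h : IsCoprime a b) : J(a ^ 2 | b.natAbs) = 1 := by
  refine jacobiSym.sq_one' ?_
  rw [Int.gcd_def, Int.natAbs_natCast, ← Int.gcd_def]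
  exact Int.isCoprime_iff_gcd_eq_one.mp h

section ModEight

variable (hp8 : p % 8 = 1)

include hp8

theorem jacobiSym_two_eq_one : J(2 | p) = 1 := by
  rw [jacobiSym.at_two (Nat.odd_iff.mpr (by lia)), ZMod.χ₈_nat_eq_if_mod_eight,
    if_neg (by lia), if_pos (.inl hp8)]

theorem jacobiSym_neg_one_eq_one : J(-1 | p) = 1 := by
  rw [jacobiSym.at_neg_one (Nat.odd_iff.mpr (by lia)), ZMod.χ₄_nat_one_mod_four (by lia)]

theorem jacobiSym_eq_jacobiSym_natAbs {n : ℤ} (hn : Odd n) : J(n | p) = J((p : ℤ) | n.natAbs) := by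
  have habs : J(n | p) = J((n.natAbs : ℤ) | p) := by
    rcases Int.natAbs_eq n with h | h
    · rw [← h]
    · conv_lhs => rw [h, ← neg_one_mul, jacobiSym.mul_left, jacobiSym_neg_one_eq_one hp8, one_mul]
  rw [habs, ← jacobiSym.quadratic_reciprocity_one_mod_four (by lia) (Int.natAbs_odd.mpr hn)]

/-- The part of `n` prime to two is handled by reciprocity, the power of two by `(2/p) = 1`. -/
theorem jacobiSym_eq_one_of_mul_sq_eq {n u m k : ℤ} (hn : n ≠ 0) (hun : IsCoprime u n)
    (h : (p : ℤ) * m ^ 2 = u ^ 2 + n * k) : J(n | p) = 1 := by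
  obtain ⟨n, hnn, hn2⟩ := (Int.finiteMultiplicity_iff.mpr
    ⟨by decide, hn⟩ : FiniteMultiplicity (2 : ℤ) n).exists_eq_pow_mul_and_not_dvd
  rw [hnn] at h hun ⊢
  have hodd : Odd n := by rwa [← Int.not_even_iff_odd, even_iff_two_dvd]
  rw [jacobiSym.mul_left, jacobiSym.pow_left, jacobiSym_two_eq_one hp8, one_pow, one_mul,
    jacobiSym_eq_jacobiSym_natAbs hp8 hodd]
  have hmod : J((p : ℤ) * m ^ 2 | n.natAbs) = J(u ^ 2 | n.natAbs) := by
    refine jacobiSym.mod_left' (Int.ModEq.symm (Int.modEq_iff_dvd.mpr ?_))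
    rw [h, add_sub_cancel_left, Int.natAbs_dvd, mul_right_comm]
    exact dvd_mul_left _ _
  rw [jacobiSym_natAbs_sq hun.of_mul_right_right, jacobiSym.mul_left, jacobiSym.pow_left] at hmod
  rcases jacobiSym.trichotomy m n.natAbs with hm | hm | hm <;> rw [hm] at hmod <;> linarith

end ModEight

theorem jacobiSym_two_natAbs {b : ℤ} (hb : Odd b) :
    J(2 | b.natAbs) = if b ^ 2 % 16 = 1 then 1 else -1 := by
  have hb' := Int.natAbs_odd.mpr hb
  have hsq : b ^ 2 % 16 = ((b.natAbs % 16) ^ 2 % 16 : ℕ) := by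
    rw [← Nat.pow_mod]
    push_cast
    rw [sq_abs]
  rw [jacobiSym.at_two hb', ZMod.χ₈_nat_eq_if_mod_eight, hsq,
    ← Nat.mod_mod_of_dvd b.natAbs (by norm_num : 2 ∣ 16),
    ← Nat.mod_mod_of_dvd b.natAbs (by norm_num : 8 ∣ 16)]
  have hlt : b.natAbs % 16 < 16 := Nat.mod_lt _ (by norm_num)
  have hodd : b.natAbs % 16 % 2 = 1 := by
    rwa [Nat.mod_mod_of_dvd _ (by norm_num), ← Nat.odd_iff]
  generalize b.natAbs % 16 = n at hlt hodd
  interval_cases n <;> simp_all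

section Biquadratic

variable [hp : Fact p.Prime] (hp8 : p % 8 = 1) (h2 : (2 : ZMod p) ^ ((p - 1) / 4) = -1)

include hp8 h2

theorem jacobiSym_eq_neg_of_sq_eq_two_mul_sq {a b : ℤ}
    (h : (b : ZMod p) ^ 2 = 2 * (a : ZMod p) ^ 2) : J(b | p) = -J(a | p) := by
  have hhalf : p / 2 = 2 * ((p - 1) / 4) := by lia
  have hcast : ((J(b | p) : ℤ) : ZMod p) = ((-J(a | p) : ℤ) : ZMod p) := by
    rw [Int.cast_neg, jacobiSym_cast_eq_pow, jacobiSym_cast_eq_pow, hhalf, pow_mul, pow_mul, h,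
      mul_pow, h2]
    ring
  have hp9 : 9 ≤ p := by have := hp.out.two_le; lia
  refine (sub_eq_zero.mp (Int.eq_zero_of_abs_lt_dvd
    ((ZMod.intCast_eq_intCast_iff_dvd_sub _ _ _).mp hcast) ?_)).symm
  rcases jacobiSym.trichotomy a p with ha | ha | ha <;>
    rcases jacobiSym.trichotomy b p with hb | hb | hb <;> rw [ha, hb] <;> norm_num <;> lia

variable {e f : ℤ} (hef : e ^ 2 - 2 * f ^ 2 = p)

include hef

omit hp h2 in
theorem odd_and_even_of_sq_sub_two_mul_sq : Odd e ∧ Even f := by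
  have he : Odd e := by
    have : Odd (e ^ 2) := by rw [Int.odd_iff]; lia
    exact Int.odd_pow.mp this |>.resolve_right two_ne_zero
  refine ⟨he, Int.not_odd_iff_even.mp fun hf => ?_⟩
  have he4 := Int.sq_mod_four_eq_one_of_odd he
  have hf4 := Int.sq_mod_four_eq_one_of_odd hf
  lia

/-- Since `e² ≡ 2f² (mod p)`, the symbols of `e` and `f` differ by `(2/p)₄ = -1`, and `(f/p) = 1`
because `p ≡ e² (mod f)`. -/
theorem jacobiSym_eq_neg_one_of_sq_sub_two_mul_sq : J(e | p) = -1 := by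
  have hef' : e ^ 2 + -2 * f ^ 2 = p := by rw [← hef]; ring
  have hf0 : f ≠ 0 := by
    rintro rfl
    exact (Nat.prime_iff_prime_int.mp hp.out).irreducible.not_isSquare ⟨e, by rw [← hef]; ring⟩
  have hf : J(f | p) = 1 := jacobiSym_eq_one_of_mul_sq_eq hp8 (u := e) (m := 1) (k := -2 * f) hf0
    (isCoprime_of_sq_add_mul_sq_eq_prime hef') (by rw [← hef]; ring)
  rw [jacobiSym_eq_neg_of_sq_eq_two_mul_sq hp8 h2 ?_, hf]
  have hcast := congrArg (Int.cast (R := ZMod p)) hef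
  push_cast [ZMod.natCast_self] at hcast
  linear_combination hcast

variable (hp16 : p % 16 = 9)

include hp16

omit h2 in
/-- For `x = e + 2f` we have `x² = 2(e + f)² - p ≡ 9 (mod 16)`, so `(x/p) = (p/x) = (2/x) = -1`. -/
theorem jacobiSym_add_two_mul_eq_neg_one : J(e + 2 * f | p) = -1 := by
  obtain ⟨he, hf⟩ := odd_and_even_of_sq_sub_two_mul_sq hp8 hef
  have hx : (e + 2 * f) ^ 2 = 2 * (e + f) ^ 2 - p := by rw [← hef]; ring
  have hxodd : Odd (e + 2 * f) := he.add_even (even_two_mul f)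
  have hg8 := Int.eight_dvd_sq_sub_one_of_odd (he.add_even hf)
  have hcop : IsCoprime (e + f) (e + 2 * f) := by
    obtain ⟨a, b, hab⟩ := isCoprime_of_sq_add_mul_sq_eq_prime (p := p) (a := e) (b := f) (m := -2)
      (by rw [← hef]; ring)
    exact ⟨2 * a - b, b - a, by linear_combination hab⟩
  have hmod : J((p : ℤ) | (e + 2 * f).natAbs) = J(2 * (e + f) ^ 2 | (e + 2 * f).natAbs) := by
    refine jacobiSym.mod_left' (Int.modEq_iff_dvd.mpr (Int.natAbs_dvd.mpr ⟨e + 2 * f, ?_⟩))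
    linear_combination -hx
  rw [jacobiSym_eq_jacobiSym_natAbs hp8 hxodd, hmod, jacobiSym.mul_left, jacobiSym_natAbs_sq hcop,
    mul_one, jacobiSym_two_natAbs hxodd, if_neg (by lia)]

/-- As `(e + 2f)² ≡ 2(e + f)² (mod p)`, the symbols of `e + 2f` and `e + f` differ by
`(2/p)₄ = -1`. -/
theorem jacobiSym_add_eq_one : J(e + f | p) = 1 := by
  have hsym := jacobiSym_eq_neg_of_sq_eq_two_mul_sq hp8 h2 (a := e + f) (b := e + 2 * f) (by
    have hcast := congrArg (Int.cast (R := ZMod p)) hef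
    push_cast [ZMod.natCast_self] at hcast ⊢
    linear_combination -hcast)
  rw [jacobiSym_add_two_mul_eq_neg_one hp8 hef hp16] at hsym
  linarith

end Biquadratic

end Symbols

/-! ### Pell equations -/

section Pell

open NumberTheorySymbols

theorem exists_eq_sq_of_mul_eq_sq {A B z : ℤ} (hA : 0 ≤ A) (h : IsCoprime A B)
    (hz : A * B = z ^ 2) : ∃ a, A = a ^ 2 := by
  obtain ⟨a, ha | ha⟩ := Int.sq_of_isCoprime h hz
  · exact ⟨a, ha⟩
  · exact ⟨0, by nlinarith⟩

theorem eq_sq_of_mul_eq_prime_mul_sq {q : ℕ} (hq : q.Prime) {A B z : ℤ} (hA : 0 ≤ A)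
    (hB : 0 ≤ B) (h : IsCoprime A B) (hz : A * B = q * z ^ 2) :
    (∃ a b, A = a ^ 2 ∧ B = q * b ^ 2) ∨ ∃ a b, A = q * b ^ 2 ∧ B = a ^ 2 := by
  have hq0 : (0 : ℤ) < q := mod_cast hq.pos
  rcases (Nat.prime_iff_prime_int.mp hq).dvd_or_dvd ⟨z ^ 2, hz⟩ with ⟨A, rfl⟩ | ⟨B, rfl⟩
  · have hz' : A * B = z ^ 2 := mul_left_cancel₀ hq0.ne' (by rw [← hz, mul_assoc])
    have h' := h.of_mul_left_right
    obtain ⟨b, rfl⟩ := exists_eq_sq_of_mul_eq_sq (nonneg_of_mul_nonneg_right hA hq0) h' hz'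
    obtain ⟨a, rfl⟩ := exists_eq_sq_of_mul_eq_sq hB h'.symm (by rwa [mul_comm])
    exact .inr ⟨a, b, rfl, rfl⟩
  · have hz' : A * B = z ^ 2 := mul_left_cancel₀ hq0.ne' (by rw [← hz, mul_left_comm])
    have h' := h.of_mul_right_right
    obtain ⟨a, rfl⟩ := exists_eq_sq_of_mul_eq_sq hA h' hz'
    obtain ⟨b, rfl⟩ := exists_eq_sq_of_mul_eq_sq (nonneg_of_mul_nonneg_right hB hq0) h'.symm
      (by rwa [mul_comm])
    exact .inl ⟨a, b, rfl, rfl⟩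

theorem odd_and_even_of_sq_sub_mul_sq_eq_one {D x y : ℤ} (hD : D % 4 = 1 ∨ D % 4 = 2)
    (h : x ^ 2 - D * y ^ 2 = 1) : Odd x ∧ Even y := by
  have hsq (k : ℤ) : k ^ 2 % 4 = k % 2 := by
    rcases Int.even_or_odd k with ⟨k, rfl⟩ | hk
    · rw [← two_mul, mul_pow]; lia
    · rw [Int.sq_mod_four_eq_one_of_odd hk, Int.odd_iff.mp hk]
  obtain ⟨m, hm⟩ : ∃ m, D = 4 * m + D % 4 := ⟨D / 4, by lia⟩
  have hx := hsq x
  have hy := hsq y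
  rw [Int.odd_iff, Int.even_iff]
  rcases hD with hD | hD <;> rw [hD] at hm <;> rw [hm] at h <;> ring_nf at h <;> lia

/-- The descent from the fundamental solution of `x² - D y² = 1`, written as `x = 2A + 1` and
`y = 2z`: by minimality `A` and `A + 1` are not of the form `D b²` and `a²`. -/
theorem exists_mul_add_one_eq_mul_sq {D : ℤ} (hD0 : 0 < D) (hsq : ¬ IsSquare D)
    (hD : D % 4 = 1 ∨ D % 4 = 2) :
    ∃ A z : ℤ, 0 ≤ A ∧ A * (A + 1) = D * z ^ 2 ∧
      ¬ ∃ a b : ℤ, A = D * b ^ 2 ∧ A + 1 = a ^ 2 := by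
  obtain ⟨s, hs⟩ := Pell.IsFundamental.exists_of_not_isSquare hD0 hsq
  have hprop := s.prop
  obtain ⟨⟨A, hA⟩, z, hz⟩ := odd_and_even_of_sq_sub_mul_sq_eq_one hD hprop
  have hx : 1 < s.x := hs.1
  refine ⟨A, z, by lia, ?_, ?_⟩
  · rw [hA, hz] at hprop
    exact mul_left_cancel₀ (four_ne_zero (α := ℤ)) (by linear_combination hprop)
  rintro ⟨a, b, hAb, hAa⟩
  have hsol : |a| ^ 2 - D * b ^ 2 = 1 := by rw [sq_abs]; linarith
  have ha : 1 < |a| := (one_lt_sq_iff_one_lt_abs a).mp (by lia)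
  have hle := hs.x_le_x (a := Pell.Solution₁.mk |a| b hsol) (by simpa using ha)
  rw [Pell.Solution₁.x_mk, hA] at hle
  have := sq_abs a
  nlinarith

variable {p : ℕ} [hp : Fact p.Prime]

theorem exists_sq_add_one_eq_prime_mul_sq (hp4 : p % 4 = 1) :
    ∃ T U : ℤ, T ^ 2 + 1 = p * U ^ 2 := by
  obtain ⟨A, z, hA, hAz, hno⟩ := exists_mul_add_one_eq_mul_sq (D := p) (mod_cast hp.out.pos)
    (Nat.prime_iff_prime_int.mp hp.out).irreducible.not_isSquare (by lia)
  rcases eq_sq_of_mul_eq_prime_mul_sq hp.out hA (by lia) ⟨-1, 1, by ring⟩ hAz with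
    ⟨a, b, ha, hb⟩ | ⟨a, b, hb, ha⟩
  · exact ⟨a, b, by rw [← ha, ← hb]⟩
  · exact absurd ⟨a, b, hb, ha⟩ hno

/-- A solution would make `2` a fourth power modulo `p`. -/
theorem two_mul_sq_add_one_ne (hp8 : p % 8 = 1) (h2 : (2 : ZMod p) ^ ((p - 1) / 4) = -1)
    (a b : ℤ) : 2 * a ^ 2 + 1 ≠ p * b ^ 2 := by
  intro h
  have ha0 : a ≠ 0 := by
    rintro rfl
    exact (Nat.prime_iff_prime_int.mp hp.out).not_isUnit
      (IsUnit.of_mul_eq_one (b ^ 2) (by rw [← h]; ring))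
  have hJ : J(a | p) = 1 := jacobiSym_eq_one_of_mul_sq_eq hp8 (u := 1) (m := b) (k := 2 * a) ha0
    isCoprime_one_left (by rw [← h]; ring)
  have hpow := jacobiSym_cast_eq_pow (p := p) a
  have hhalf : p / 2 = 2 * ((p - 1) / 4) := by lia
  have hcast : (2 : ZMod p) * (a : ZMod p) ^ 2 = -1 := by
    have h' := congrArg (Int.cast (R := ZMod p)) h
    push_cast [ZMod.natCast_self] at h'
    linear_combination h'
  have h4 := congrArg (· ^ ((p - 1) / 4)) hcast
  simp only [mul_pow, h2] at h4
  rw [← pow_mul, ← hhalf, ← hpow, hJ, Int.cast_one, mul_one,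
    Even.neg_one_pow (Nat.even_iff.mpr (by lia))] at h4
  exact zmod_two_ne_zero (p := p) (by lia) (by linear_combination -h4)

/-- A solution would give `(2/b) = 1`, hence `b² ≡ 1 (mod 16)` and `a² ≡ 5 (mod 8)`. -/
theorem two_mul_sq_sub_one_ne {n : ℕ} (hn : n % 16 = 9) (a b : ℤ) : 2 * a ^ 2 - 1 ≠ n * b ^ 2 := by
  intro h
  obtain ⟨m, hm⟩ : ∃ m : ℤ, (n : ℤ) = 16 * m + 9 := ⟨n / 16, by lia⟩
  have hb : Odd b := by
    have : Odd (n * b ^ 2) := h ▸ ⟨a ^ 2 - 1, by ring⟩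
    exact (Int.odd_pow.mp (Int.odd_mul.mp this).2).resolve_right two_ne_zero
  have hJ : J(2 | b.natAbs) = 1 := by
    rw [← jacobiSym_natAbs_sq (a := 2 * a) (b := b) ⟨a, -n * b, by linarith⟩]
    refine jacobiSym.mod_left' (Int.modEq_iff_dvd.mpr (Int.natAbs_dvd.mpr ⟨2 * n * b, ?_⟩))
    linear_combination 2 * h
  have hb16 : b ^ 2 % 16 = 1 := by
    by_contra hne
    rw [jacobiSym_two_natAbs hb, if_neg hne] at hJ
    contradiction
  have ha8 : a ^ 2 % 8 = 5 := by
    rw [hm, add_mul, mul_assoc] at h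
    lia
  rcases Int.even_or_odd a with ⟨k, rfl⟩ | ha
  · rw [← two_mul, mul_pow] at ha8
    lia
  · have := Int.eight_dvd_sq_sub_one_of_odd ha
    lia

theorem exists_sq_add_one_eq_two_mul_prime_mul_sq (hp16 : p % 16 = 9)
    (h2 : (2 : ZMod p) ^ ((p - 1) / 4) = -1) : ∃ T U : ℤ, T ^ 2 + 1 = 2 * p * U ^ 2 := by
  have hsq : ¬ IsSquare (2 * p : ℤ) := by
    rintro ⟨r, hr⟩
    rcases Int.even_or_odd' r with ⟨k, rfl | rfl⟩ <;> lia
  obtain ⟨A, z, hA, hAz, hno⟩ := exists_mul_add_one_eq_mul_sq (D := 2 * p)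
    (by have := hp.out.pos; lia) hsq (by lia)
  rcases Int.even_or_odd' A with ⟨C, rfl | rfl⟩
  · rcases eq_sq_of_mul_eq_prime_mul_sq hp.out (A := C) (B := 2 * C + 1) (z := z) (by lia) (by lia)
      ⟨-2, 1, by ring⟩ (by linarith) with ⟨a, b, rfl, hb⟩ | ⟨a, b, rfl, ha⟩
    · exact absurd hb (two_mul_sq_add_one_ne (by lia) h2 a b)
    · exact absurd ⟨a, b, by ring, ha⟩ hno
  · rcases eq_sq_of_mul_eq_prime_mul_sq hp.out (A := 2 * C + 1) (B := C + 1) (z := z) hA (by lia)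
      ⟨-1, 2, by ring⟩ (by linarith) with ⟨a, b, ha, hb⟩ | ⟨a, b, hb, ha⟩
    · exact ⟨a, b, by rw [← ha]; linarith⟩
    · exact absurd (by rw [← hb, ← ha]; ring) (two_mul_sq_sub_one_ne hp16 a b)

/-- The prime comes from Dirichlet's theorem on primes in arithmetic progressions. -/
theorem exists_prime_mod_four_eq_three_jacobiSym_eq_neg_one (hp2 : p ≠ 2) :
    ∃ q : ℕ, q.Prime ∧ q % 4 = 3 ∧ J((q : ℤ) | p) = -1 := by
  obtain ⟨n, hn⟩ := FiniteField.exists_nonsquare (F := ZMod p) (by rwa [ZMod.ringChar_zmod_n])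
  have hcop : Nat.Coprime 4 p :=
    Nat.Coprime.pow_left 2 ((Nat.coprime_primes Nat.prime_two hp.out).mpr hp2.symm)
  obtain ⟨a, ha4, hap⟩ := Nat.chineseRemainder hcop 3 n.val
  have hapn : (a : ZMod p) = n := by
    rw [(ZMod.natCast_eq_natCast_iff _ _ _).mpr hap, ZMod.natCast_zmod_val]
  have ha : a.Coprime (4 * p) := by
    refine Nat.Coprime.mul_right ?_ ?_
    · exact ha4.gcd_eq.trans (by norm_num)
    · rw [Nat.coprime_comm, hp.out.coprime_iff_not_dvd, ← ZMod.natCast_eq_zero_iff, hapn]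
      exact fun h0 => hn (h0 ▸ IsSquare.zero)
  obtain ⟨q, -, hq, hqa⟩ := Nat.forall_exists_prime_gt_and_modEq p
    (mul_ne_zero (by norm_num) hp.out.ne_zero) ha
  refine ⟨q, hq, (hqa.of_mul_right p).trans ha4, ?_⟩
  rw [ZMod.nonsquare_iff_jacobiSym_eq_neg_one, Int.cast_natCast,
    (ZMod.natCast_eq_natCast_iff _ _ _).mpr (hqa.of_mul_left 4), hapn]
  exact hn

theorem exists_dvd_sq_add_and_isCoprime (hp4 : p % 4 = 1) {q : ℕ} (hq : q.Prime)
    (hq4 : q % 4 = 3) (hJ : J((q : ℤ) | p) = -1) :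
    ∃ w : ℤ, (q : ℤ) ∣ w ^ 2 + p ∧ IsCoprime (q : ℤ) (2 * w) := by
  have := Fact.mk hq
  have hqodd : Odd q := Nat.odd_iff.mpr (by lia)
  have hneg : J(-(p : ℤ) | q) = 1 := by
    rw [jacobiSym.neg _ hqodd, ZMod.χ₄_nat_three_mod_four hq4,
      jacobiSym.quadratic_reciprocity_one_mod_four hp4 hqodd, hJ]
    norm_num
  obtain ⟨w, hw⟩ := ZMod.isSquare_of_jacobiSym_eq_one hneg
  have hdvd : (q : ℤ) ∣ (w.val : ℤ) ^ 2 + p := by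
    rw [← ZMod.intCast_zmod_eq_zero_iff_dvd]
    push_cast at hw ⊢
    rw [ZMod.natCast_zmod_val, sq, ← hw, neg_add_cancel]
  refine ⟨w.val, hdvd, ?_⟩
  have hqp := Nat.prime_iff_prime_int.mp hq
  rw [Prime.coprime_iff_not_dvd hqp, hqp.dvd_mul, not_or]
  constructor
  · intro h2
    have := (Nat.prime_dvd_prime_iff_eq hq Nat.prime_two).mp (mod_cast h2)
    lia
  · intro hqw
    have hqdvd : (q : ℤ) ∣ p := (dvd_add_right (hqw.pow two_ne_zero)).mp hdvd
    have := (Nat.prime_dvd_prime_iff_eq hq hp.out).mp (mod_cast hqdvd)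
    lia

end Pell

/-! ### Quadratic extensions of number fields -/

theorem exists_algEquiv_involution (F K : Type*) [Field F] [Field K] [Algebra F K] [IsGalois F K]
    [Algebra.IsQuadraticExtension F K] :
    ∃ σ : K ≃ₐ[F] K, (∀ x, σ (σ x) = x) ∧ ∀ x, σ x = x → ∃ y, algebraMap F K y = x := by
  have hcard : Nat.card (K ≃ₐ[F] K) = 2 :=
    (IsGalois.card_aut_eq_finrank F K).trans (Algebra.IsQuadraticExtension.finrank_eq_two F K)
  obtain ⟨σ, -, hσ⟩ := (Nat.card_eq_two_iff' (1 : K ≃ₐ[F] K)).mp hcard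
  refine ⟨σ, fun x => ?_, fun x hx => ?_⟩
  · have h2 : σ ^ 2 = 1 := hcard ▸ pow_card_eq_one'
    exact DFunLike.congr_fun ((sq σ).symm.trans h2) x
  · refine IntermediateField.mem_bot.mp ((IsGalois.mem_bot_iff_fixed x).mpr fun f => ?_)
    rcases eq_or_ne f 1 with rfl | hf
    · rfl
    · rwa [hσ f hf]

/-- The base ring `R` is `ℤ` or the ring of integers of `F`. -/
theorem exists_quadraticConj (R F K : Type*) [CommRing R] [Field F] [Field K] [CharZero F]
    [Algebra R F] [IsIntegralClosure R ℤ F] [Algebra F K] [Algebra.IsQuadraticExtension F K]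
    [Algebra R (𝓞 K)] [Algebra R K] [IsScalarTower R (𝓞 K) K] [IsScalarTower R F K]
    {s : 𝓞 K} {d : R}
    (hs : s ^ 2 = algebraMap R (𝓞 K) d) (hd : ¬ IsSquare d) :
    ∃ Q : QuadraticConj R (𝓞 K), Q.σ s = -s := by
  obtain ⟨σ, hσσ, hσ⟩ := exists_algEquiv_involution F K
  have hRK (r : R) : ((algebraMap R (𝓞 K) r : 𝓞 K) : K) = algebraMap F K (algebraMap R F r) := by
    rw [← IsScalarTower.algebraMap_apply R F K, IsScalarTower.algebraMap_apply R (𝓞 K) K]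
  have hinj : Function.Injective (algebraMap R (𝓞 K)) := fun a b hab =>
    IsIntegralClosure.algebraMap_injective R ℤ F <| (algebraMap F K).injective <| by
      rw [← hRK, ← hRK, hab]
  let τ : 𝓞 K ≃ₐ[R] 𝓞 K := AlgEquiv.ofRingEquiv (f := RingOfIntegers.mapRingEquiv σ.toRingEquiv)
    fun r => RingOfIntegers.ext <| by
      change σ (algebraMap R (𝓞 K) r : 𝓞 K) = (algebraMap R (𝓞 K) r : 𝓞 K)
      rw [hRK, σ.commutes]
  have hτ (x : 𝓞 K) : ((τ x : 𝓞 K) : K) = σ x := rfl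
  have exists_algebraMap_eq (x : 𝓞 K) (hx : τ x = x) : ∃ r, algebraMap R (𝓞 K) r = x := by
    obtain ⟨y, hy⟩ := hσ x (by rw [← hτ, hx])
    have hyint : IsIntegral ℤ y :=
      (isIntegral_algebraMap_iff (FaithfulSMul.algebraMap_injective F K)).mp
        (hy ▸ x.isIntegral_coe)
    obtain ⟨z, rfl⟩ := (IsIntegralClosure.isIntegral_iff (A := R)).mp hyint
    exact ⟨z, RingOfIntegers.ext ((hRK z).trans hy)⟩
  refine ⟨⟨τ, fun x => RingOfIntegers.ext (by rw [hτ, hτ, hσσ]), exists_algebraMap_eq⟩, ?_⟩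
  have hsq : τ s ^ 2 = s ^ 2 := by rw [← map_pow, hs, τ.commutes]
  refine (sq_eq_sq_iff_eq_or_eq_neg.mp hsq).resolve_left fun h => hd ?_
  obtain ⟨r, rfl⟩ := exists_algebraMap_eq s h
  exact ⟨r, hinj (by rw [← hs, sq, map_mul])⟩

/-! ### The class group of `ℚ(√-p)` -/

theorem ideal_eq_of_sq_eq_sq {S : Type*} [CommRing S] [IsDedekindDomain S] {I J : Ideal S}
    (h : I ^ 2 = J ^ 2) : I = J :=
  pow_left_injective (M := Ideal S) two_ne_zero h

theorem isSquare_mul_of_sq_eq_one {G : Type*} [CommGroup G] [Finite G] {c : G}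
    (h : ∀ z : G, z ^ 2 = 1 → z = 1 ∨ z = c) {a b : G} (ha : ¬ IsSquare a)
    (hb : ¬ IsSquare b) : IsSquare (a * b) := by
  have hrange (g : G) : g ∈ (powMonoidHom 2 : G →* G).range ↔ IsSquare g := by
    simp only [MonoidHom.mem_range, powMonoidHom_apply, isSquare_iff_exists_sq, eq_comm]
  have hker : Nat.card (powMonoidHom 2 : G →* G).ker ≤ 2 :=
    (Set.ncard_le_ncard (t := {1, c}) h).trans
      ((Set.ncard_insert_le 1 {c}).trans_eq (by rw [Set.ncard_singleton]))
  have hindex : (powMonoidHom 2 : G →* G).range.index = 2 := by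
    refine le_antisymm (Subgroup.index_range.trans_le hker) ?_
    refine (Subgroup.one_lt_index_of_ne_top fun htop => ha ?_)
    rw [← hrange, htop]
    exact Subgroup.mem_top a
  rw [← hrange, Subgroup.mul_mem_iff_of_index_two hindex, hrange, hrange]
  exact iff_of_false ha hb

namespace ImaginaryQuadratic

open NumberTheorySymbols

variable {p : ℕ} {k : Type*} [Field k] [NumberField k] (Q : QuadraticConj ℤ (𝓞 k)) {t : 𝓞 k}
  (ht : t ^ 2 = -p) (hσ : Q.σ t = -t)

theorem span_pair_ne_bot {n : ℤ} (w : ℤ) (hn : n ≠ 0) : Ideal.span {(n : 𝓞 k), w + t} ≠ ⊥ := by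
  intro h
  have hmem : (n : 𝓞 k) ∈ Ideal.span {(n : 𝓞 k), w + t} := Ideal.subset_span (by simp)
  rw [h, Ideal.mem_bot] at hmem
  exact hn (mod_cast hmem)

include ht hσ

theorem span_pair_mul_map {n w : ℤ} (hn : n ∣ w ^ 2 + p) (hc : IsCoprime n (2 * w)) :
    Ideal.span {(n : 𝓞 k), w + t} * (Ideal.span {(n : 𝓞 k), w + t}).map Q.σ =
      Ideal.span {algebraMap ℤ (𝓞 k) n} := by
  have hmap : (Ideal.span {(n : 𝓞 k), w + t}).map Q.σ = Ideal.span {(n : 𝓞 k), w - t} := by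
    rw [Ideal.map_span, Set.image_pair, map_intCast, map_add, map_intCast, hσ, sub_eq_add_neg]
  rw [hmap, Ideal.span_pair_mul_span_pair, eq_intCast]
  obtain ⟨m, hm⟩ := hn
  have hm' : (w : 𝓞 k) ^ 2 + p = n * m := mod_cast congrArg (Int.cast : ℤ → 𝓞 k) hm
  apply le_antisymm
  · rw [Ideal.span_le]
    rintro x (rfl | rfl | rfl | rfl) <;> refine Ideal.mem_span_singleton.mpr ?_
    · exact dvd_mul_right _ _
    · exact dvd_mul_right _ _
    · exact dvd_mul_left _ _
    · exact ⟨m, by linear_combination hm' - ht⟩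
  · rw [Ideal.span_singleton_le_iff_mem]
    obtain ⟨a, b, hab⟩ := hc
    have hab' : (a : 𝓞 k) * n + b * (2 * w) = 1 := mod_cast congrArg (Int.cast : ℤ → 𝓞 k) hab
    have hn : (n : 𝓞 k) = a * (n * n) + b * (n * (w - t)) + b * ((w + t) * n) := by
      linear_combination -n * hab'
    set M := Ideal.span {(n : 𝓞 k) * n, n * (w - t), (w + t) * n, (w + t) * (w - t)}
    rw [hn]
    refine M.add_mem (M.add_mem ?_ ?_) ?_ <;>
      exact M.mul_mem_left _ (Ideal.subset_span (by simp))

variable [hp : Fact p.Prime]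

theorem norm_pos {x : 𝓞 k} (hx : x ≠ 0) : 0 < Q.norm x := by
  obtain ⟨a, ha⟩ := Q.exists_trace x
  obtain ⟨m, hm⟩ := Q.exists_algebraMap_eq ((x - Q.σ x) * t)
    (by rw [map_mul, map_sub, Q.σ_σ, hσ]; ring)
  have hn := Q.algebraMap_norm x
  rw [eq_intCast] at ha hm hn
  have h4 : 4 * p * Q.norm x = p * a ^ 2 + m ^ 2 := by
    have : ((4 * p * Q.norm x : ℤ) : 𝓞 k) = ((p * a ^ 2 + m ^ 2 : ℤ) : 𝓞 k) := by
      push_cast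
      rw [hn, ha, hm]
      linear_combination -(x - Q.σ x) ^ 2 * ht
    exact_mod_cast this
  have hp0 : (0 : ℤ) < p := mod_cast hp.out.pos
  refine lt_of_le_of_ne (le_of_not_gt fun hneg => ?_) (Q.norm_ne_zero hx).symm
  nlinarith [sq_nonneg a, sq_nonneg m]

theorem mem_ramifiedClasses {c : ClassGroup (𝓞 k)} (hc : c ^ 2 = 1) : c ∈ Q.ramifiedClasses := by
  have ht0 : t ≠ 0 := by
    rintro rfl
    have hp0 : (p : 𝓞 k) = 0 := by linear_combination ht
    exact hp.out.ne_zero (mod_cast hp0)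
  refine Q.mem_ramifiedClasses_of_sq_eq_one ht0 hσ (fun u a b ha hb h => ⟨1, ?_⟩) hc
  have hapos := norm_pos Q ht hσ ha
  have hbpos := norm_pos Q ht hσ hb
  rcases Int.units_eq_one_or u with rfl | rfl
  · simpa using Q.algebraMap_norm 1
  · rw [Units.val_neg, Units.val_one] at h
    lia

/-- The prime above `p` is generated by `√-p`. -/
theorem idealClass_eq_one_or_sq_eq_span_two {P : Ideal (𝓞 k)} (hP : Q.IsRamified P) :
    idealClass P = 1 ∨ P ^ 2 = Ideal.span {2} := by
  obtain ⟨ℓ, hℓ, hPP⟩ := hP.exists_sq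
  rw [eq_intCast, ← sq] at hPP
  have dvd_of_mem {n : ℤ} {x : 𝓞 k} (hx : x ∈ P) (hxn : x ^ 2 = n) : ℓ ∣ n := by
    have := Ideal.pow_mem_pow hx 2
    rw [hPP, Ideal.mem_span_singleton, hxn] at this
    exact dvd_of_intCast_dvd this
  have span_eq {n : ℤ} (h : Associated ℓ n) : P ^ 2 = Ideal.span {(n : 𝓞 k)} := by
    rw [hPP, Ideal.span_singleton_eq_span_singleton]
    exact h.map (Int.castRingHom (𝓞 k))
  have h2t := hP.sub_mem t
  rw [hσ, sub_neg_eq_add, ← two_mul] at h2t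
  rcases hP.isPrime.mem_or_mem h2t with h2 | htP
  · have hℓ2 : ℓ ∣ 2 := hℓ.dvd_of_dvd_pow (dvd_of_mem (n := 2 ^ 2) h2 (by norm_num))
    exact .inr (by simpa using span_eq (hℓ.associated_of_dvd Int.prime_two hℓ2))
  · have hℓp : ℓ ∣ p := by simpa using dvd_of_mem (n := -p) htP (by simpa using ht)
    have hPt : P ^ 2 = Ideal.span {t} ^ 2 := by
      rw [Ideal.span_singleton_pow, ht, Ideal.span_singleton_neg]
      simpa using span_eq (hℓ.associated_of_dvd (Nat.prime_iff_prime_int.mp hp.out) hℓp)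
    left
    rw [ideal_eq_of_sq_eq_sq hPt, idealClass_span_singleton]

theorem exists_eq_one_or_eq_of_sq_eq_one :
    ∃ c : ClassGroup (𝓞 k), ∀ z : ClassGroup (𝓞 k), z ^ 2 = 1 → z = 1 ∨ z = c := by
  obtain ⟨c, hc2, hc⟩ : ∃ c : ClassGroup (𝓞 k), c ^ 2 = 1 ∧
      ∀ P : Ideal (𝓞 k), P ^ 2 = Ideal.span {2} → idealClass P = c := by
    by_cases hex : ∃ P : Ideal (𝓞 k), P ^ 2 = Ideal.span {2}
    · obtain ⟨P, hP⟩ := hex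
      have hP0 : P ≠ ⊥ := by
        rintro rfl
        rw [Ideal.bot_pow two_ne_zero, eq_comm, Ideal.span_singleton_eq_bot] at hP
        exact two_ne_zero hP
      refine ⟨idealClass P, ?_, fun P' hP' => ?_⟩
      · rw [sq, ← idealClass_mul hP0 hP0, ← sq, hP, idealClass_span_singleton]
      · rw [ideal_eq_of_sq_eq_sq (hP'.trans hP.symm)]
    · exact ⟨1, one_pow 2, fun P hP => absurd ⟨P, hP⟩ hex⟩
  have hle : Q.ramifiedClasses ≤ Subgroup.zpowers c := by
    refine (Subgroup.closure_le _).mpr ?_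
    rintro _ ⟨P, hP, rfl⟩
    rcases idealClass_eq_one_or_sq_eq_span_two Q ht hσ hP with h | h
    · exact h ▸ one_mem _
    · exact hc P h ▸ Subgroup.mem_zpowers _
  refine ⟨c, fun z hz => ?_⟩
  obtain ⟨j, rfl⟩ := hle (mem_ramifiedClasses Q ht hσ hz)
  have hc2' : c ^ (2 : ℤ) = 1 := mod_cast hc2
  rcases Int.even_or_odd' j with ⟨i, rfl | rfl⟩
  · exact .inl (by simp only [zpow_mul, hc2', one_zpow])
  · exact .inr (by simp only [zpow_add, zpow_mul, hc2', one_zpow, one_mul, zpow_one])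

/-- The Legendre symbol of the norm is a genus character. -/
theorem not_isSquare_idealClass (hp8 : p % 8 = 1) {I : Ideal (𝓞 k)} (hI : I ≠ ⊥) {n : ℤ}
    (hn : I * I.map Q.σ = Ideal.span {algebraMap ℤ (𝓞 k) n}) (hJ : J(n | p) = -1) :
    ¬ IsSquare (idealClass I) := by
  intro hsq
  obtain ⟨u, c, z, hc, hz⟩ := Q.exists_norm_eq_of_isSquare_idealClass hI hn hsq
  have hpp := Nat.prime_iff_prime_int.mp hp.out
  have hp2 : ¬ (p : ℤ) ∣ 2 := fun h => by
    have := (Nat.prime_dvd_prime_iff_eq hp.out Nat.prime_two).mp (mod_cast h)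
    lia
  have hun : IsSquare ((Int.castRingHom (ZMod p)) (u * n)) :=
    QuadraticConj.isSquare_of_norm_eq (Int.castRingHom (ZMod p)) Q hpp
      (fun x => ZMod.intCast_zmod_eq_zero_iff_dvd x p) hp2
      (by rw [dvd_neg]; exact hpp.not_dvd_one) hσ (d := -1) (by rw [ht]; simp) hc hz
  have hJun : J((u : ℤ) * n | p) = -1 := by
    rw [jacobiSym.mul_left, hJ]
    rcases Int.units_eq_one_or u with rfl | rfl
    · simp
    · simp [jacobiSym_neg_one_eq_one hp8]
  exact ZMod.nonsquare_of_jacobiSym_eq_neg_one hJun hun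

/-- There are at most two genera, and the principal one consists of the squares. -/
theorem isSquare_idealClass_span_pair (hp8 : p % 8 = 1) {g x : ℤ} (hg : g ∣ x ^ 2 + p)
    (hc : IsCoprime g (2 * x)) (hg0 : g ≠ 0) (hJ : J(g | p) = 1) :
    IsSquare (idealClass (Ideal.span {(g : 𝓞 k), x + t})) := by
  obtain ⟨q, hq, hq4, hqJ⟩ := exists_prime_mod_four_eq_three_jacobiSym_eq_neg_one (p := p) (by lia)
  obtain ⟨w, hqw, hqc⟩ := exists_dvd_sq_add_and_isCoprime (by lia) hq hq4 hqJ
  obtain ⟨c, htor⟩ := exists_eq_one_or_eq_of_sq_eq_one Q ht hσ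
  have hI := span_pair_mul_map Q ht hσ hg hc
  have hI0 := span_pair_ne_bot (t := t) x hg0
  have hA := span_pair_mul_map Q ht hσ hqw hqc
  have hA0 := span_pair_ne_bot (t := t) w (Nat.cast_ne_zero.mpr hq.ne_zero)
  set I := Ideal.span {(g : 𝓞 k), x + t}
  set A := Ideal.span {((q : ℤ) : 𝓞 k), w + t}
  have hnA : ¬ IsSquare (idealClass A) := not_isSquare_idealClass Q ht hσ hp8 hA0 hA hqJ
  have hnIA : ¬ IsSquare (idealClass (I * A)) := by
    refine not_isSquare_idealClass Q ht hσ hp8 (mul_ne_zero hI0 hA0) (n := g * q) ?_ ?_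
    · rw [Ideal.map_mul, mul_mul_mul_comm, hI, hA, Ideal.span_singleton_mul_span_singleton, map_mul]
    · rw [jacobiSym.mul_left, hJ, hqJ, one_mul]
  have hsq := isSquare_mul_of_sq_eq_one htor hnIA hnA
  rw [idealClass_mul hI0 hA0, mul_assoc] at hsq
  have := hsq.div (IsSquare.mul_self (idealClass A))
  rwa [mul_div_cancel_right] at this

end ImaginaryQuadratic

/-! ### Factorisations in the Gaussian integers -/

section Gaussian

theorem exists_eq_unit_mul_sq_of_dvd {R : Type*} [CommRing R] [IsDomain R] [IsBezout R] [StarRing R]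
    {z π c : R} (hπ : π ≠ 0) (hz : z * star z = π * star π * c ^ 2) (hc : IsCoprime z (star z))
    (h : π ∣ z) : ∃ (u : Rˣ) (w : R), z = u * π * w ^ 2 := by
  obtain ⟨y, rfl⟩ := h
  rw [star_mul'] at hz hc
  have hy : y * star y = c ^ 2 :=
    mul_left_cancel₀ (mul_ne_zero hπ (star_ne_zero.mpr hπ)) (by linear_combination hz)
  obtain ⟨w, v, hv⟩ :=
    exists_associated_pow_of_mul_eq_pow' hc.of_mul_left_right.of_mul_right_right hy
  exact ⟨v, w, by rw [← hv]; ring⟩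

theorem exists_eq_unit_mul_sq {R : Type*} [CommRing R] [IsDomain R] [IsBezout R] [StarRing R]
    {z π c : R} (hπ : Prime π) (hz : z * star z = π * star π * c ^ 2)
    (hc : IsCoprime z (star z)) :
    ∃ z', (z' = z ∨ z' = star z) ∧ ∃ (u : Rˣ) (w : R), z' = u * π * w ^ 2 := by
  rcases hπ.dvd_or_dvd ⟨star π * c ^ 2, by rw [hz, mul_assoc]⟩ with h | h
  · exact ⟨z, .inl rfl, exists_eq_unit_mul_sq_of_dvd hπ.ne_zero hz hc h⟩
  · refine ⟨star z, .inr rfl, exists_eq_unit_mul_sq_of_dvd (c := c) hπ.ne_zero ?_ ?_ h⟩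
    · rw [star_star, mul_comm, hz]
    · rw [star_star]
      exact hc.symm

theorem gaussianInt_norm_mk (x y : ℤ) : (⟨x, y⟩ : GaussianInt).norm = x ^ 2 + y ^ 2 := by
  rw [Zsqrtd.norm_def]
  ring

theorem gaussianInt_mul_star_mk (x y : ℤ) :
    (⟨x, y⟩ : GaussianInt) * star ⟨x, y⟩ = ((x ^ 2 + y ^ 2 : ℤ) : GaussianInt) := by
  rw [← Zsqrtd.norm_eq_mul_conj, gaussianInt_norm_mk]

theorem prime_gaussianInt_mk {p : ℕ} (hp : p.Prime) {A B : ℤ} (h : A ^ 2 + B ^ 2 = p) :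
    Prime (⟨A, B⟩ : GaussianInt) := by
  have hn : (⟨A, B⟩ : GaussianInt).norm.natAbs = p := by
    rw [gaussianInt_norm_mk, h, Int.natAbs_natCast]
  rw [← irreducible_iff_prime]
  refine ⟨fun hu => hp.ne_one (hn ▸ Zsqrtd.norm_eq_one_iff.mpr hu), fun a b hab => ?_⟩
  rw [hab, Zsqrtd.norm_mul, Int.natAbs_mul] at hn
  rw [← Zsqrtd.norm_eq_one_iff, ← Zsqrtd.norm_eq_one_iff]
  exact (Nat.prime_mul_iff.mp (hn ▸ hp)).elim (fun h => .inr h.2) fun h => .inl h.2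

/-- A common divisor of `x ± iy` divides `2x` and `2y`, and is prime to two as `x² + y²` is odd. -/
theorem isCoprime_star_gaussianInt_mk {x y : ℤ} (hxy : IsCoprime x y) (hodd : Odd (x + y)) :
    IsCoprime (⟨x, y⟩ : GaussianInt) (star ⟨x, y⟩) := by
  obtain ⟨a, b, hab⟩ := hxy
  obtain ⟨k, hk⟩ : Odd (x ^ 2 + y ^ 2) := by
    rw [show x ^ 2 + y ^ 2 = (x + y) ^ 2 - 2 * (x * y) by ring]
    exact hodd.pow.sub_even (even_two_mul _)
  refine ⟨⟨x - k * a, -y + k * b⟩, ⟨-k * a, -k * b⟩, ?_⟩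
  ext
  · simp only [Zsqrtd.star_mk, Zsqrtd.re_add, Zsqrtd.re_mul, Zsqrtd.re_one]
    linear_combination hk - 2 * k * hab
  · simp only [Zsqrtd.star_mk, Zsqrtd.im_add, Zsqrtd.im_mul, Zsqrtd.im_one]
    ring

theorem exists_gaussianInt_mk_eq {p : ℕ} (hp : p.Prime) {A B x y U : ℤ} (h : A ^ 2 + B ^ 2 = p)
    (hxy : x ^ 2 + y ^ 2 = p * U ^ 2) (hc : IsCoprime x y) (hodd : Odd (x + y)) :
    ∃ y' : ℤ, (y' = y ∨ y' = -y) ∧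
      ∃ (u : GaussianIntˣ) (w : GaussianInt), (⟨x, y'⟩ : GaussianInt) = u * ⟨A, B⟩ * w ^ 2 := by
  obtain ⟨z, rfl | rfl, hz⟩ := exists_eq_unit_mul_sq (prime_gaussianInt_mk hp h)
    (z := ⟨x, y⟩) (c := (U : GaussianInt))
    (by rw [gaussianInt_mul_star_mk, gaussianInt_mul_star_mk, hxy, h]; push_cast; rfl)
    (isCoprime_star_gaussianInt_mk hc hodd)
  · exact ⟨y, .inl rfl, hz⟩
  · exact ⟨-y, .inr rfl, by rwa [Zsqrtd.star_mk] at hz⟩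

end Gaussian

namespace CyclotomicEight

variable {F : Type*} [Field F] [NumberField F] [IsCyclotomicExtension {8} ℚ F]

variable (F) in
/-- The embedding of the Gaussian integers sending `i` to `ζ ^ 2`. -/
def gaussianHom : GaussianInt →+* 𝓞 F :=
  Zsqrtd.lift ⟨ζ F ^ 2, by push_cast; linear_combination ζ_pow_four F⟩

theorem gaussianHom_mk (x y : ℤ) : gaussianHom F ⟨x, y⟩ = x + y * ζ F ^ 2 := rfl

theorem isSquare_gaussianHom_unit (u : GaussianIntˣ) : IsSquare (gaussianHom F u) := by
  obtain ⟨⟨x, y⟩, -, h, -⟩ := u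
  have hnorm := Zsqrtd.norm_eq_one_iff.mpr (IsUnit.of_mul_eq_one _ h)
  rw [gaussianInt_norm_mk] at hnorm
  have h1 : x ^ 2 + y ^ 2 = 1 := by
    have : 0 ≤ x ^ 2 + y ^ 2 := by positivity
    lia
  obtain ⟨hx₁, hx₂⟩ : -1 ≤ x ∧ x ≤ 1 := ⟨by nlinarith, by nlinarith⟩
  obtain ⟨hy₁, hy₂⟩ : -1 ≤ y ∧ y ≤ 1 := ⟨by nlinarith, by nlinarith⟩
  have h4 := ζ_pow_four F
  change IsSquare (gaussianHom F ⟨x, y⟩)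
  rw [gaussianHom_mk]
  interval_cases x <;> interval_cases y <;> first | (exfalso; revert h1; norm_num; done) | norm_num
  · exact ⟨ζ F ^ 2, by linear_combination -h4⟩
  · exact ⟨ζ F ^ 3, by linear_combination -ζ F ^ 2 * h4⟩
  · exact ⟨ζ F, by ring⟩

variable {p : ℕ} [hp : Fact p.Prime] {A B : ℤ} (hAB : A ^ 2 + B ^ 2 = p)

include hAB

theorem exists_add_mul_eq {x y U : ℤ} (hxy : x ^ 2 + y ^ 2 = p * U ^ 2) (hc : IsCoprime x y)
    (hodd : Odd (x + y)) :
    ∃ y' : ℤ, (y' = y ∨ y' = -y) ∧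
      ∃ w : 𝓞 F, x + y' * ζ F ^ 2 = (A + B * ζ F ^ 2) * w ^ 2 := by
  obtain ⟨y', hy', u, w, h⟩ := exists_gaussianInt_mk_eq hp.out hAB hxy hc hodd
  obtain ⟨v, hv⟩ := isSquare_gaussianHom_unit (F := F) u
  refine ⟨y', hy', v * gaussianHom F w, ?_⟩
  have hF := congrArg (gaussianHom F) h
  rw [map_mul, map_mul, map_pow, hv, gaussianHom_mk, gaussianHom_mk] at hF
  linear_combination hF

theorem exists_one_add_mul_eq (hp4 : p % 4 = 1) : ∃ T U : ℤ, T ^ 2 + 1 = p * U ^ 2 ∧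
    ∃ w : 𝓞 F, 1 + ζ F ^ 2 * T = (A + B * ζ F ^ 2) * w ^ 2 := by
  obtain ⟨T, U, hTU⟩ := exists_sq_add_one_eq_prime_mul_sq hp4
  have hodd : Odd (1 + T) := by
    refine odd_one.add_even (Int.not_odd_iff_even.mp fun hT => ?_)
    have hT4 := Int.sq_mod_four_eq_one_of_odd hT
    obtain ⟨m, rfl⟩ : ∃ m, p = 4 * m + 1 := ⟨p / 4, by lia⟩
    rcases U.even_or_odd with ⟨u, rfl⟩ | hU
    · push_cast at hTU
      ring_nf at hTU hT4
      lia
    · have hU4 := Int.sq_mod_four_eq_one_of_odd hU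
      push_cast at hTU
      ring_nf at hTU hT4 hU4
      lia
  obtain ⟨T', hT', w, hw⟩ := exists_add_mul_eq (F := F) hAB (x := 1) (y := T) (U := U)
    (by rw [← hTU]; ring) isCoprime_one_left hodd
  refine ⟨T', U, by rcases hT' with rfl | rfl <;> rw [← hTU]; ring, w, ?_⟩
  rw [← hw, Int.cast_one, mul_comm]

theorem exists_one_add_mul_eq_one_add_mul (hp16 : p % 16 = 9)
    (h2 : (2 : ZMod p) ^ ((p - 1) / 4) = -1) : ∃ T U : ℤ, T ^ 2 + 1 = 2 * p * U ^ 2 ∧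
    ∃ w : 𝓞 F, 1 + ζ F ^ 2 * T = (1 + ζ F ^ 2) * (A + B * ζ F ^ 2) * w ^ 2 := by
  obtain ⟨T, U, hTU⟩ := exists_sq_add_one_eq_two_mul_prime_mul_sq hp16 h2
  obtain ⟨m, rfl⟩ : Odd T := by
    have hodd : Odd (T ^ 2) := ⟨p * U ^ 2 - 1, by linear_combination hTU⟩
    exact (Int.odd_pow.mp hodd).resolve_right two_ne_zero
  obtain ⟨m', hm', w, hw⟩ := exists_add_mul_eq (F := F) hAB (x := m + 1) (y := m) (U := U)
    (mul_left_cancel₀ (two_ne_zero (α := ℤ)) (by linear_combination hTU)) ⟨1, -1, by ring⟩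
    ⟨m, by ring⟩
  have h4 := ζ_pow_four F
  rcases hm' with rfl | rfl
  · refine ⟨2 * m' + 1, U, hTU, w, ?_⟩
    push_cast at hw ⊢
    linear_combination (1 + ζ F ^ 2) * hw - m' * h4
  · -- here `1 - i T = -i (1 + i) (m + 1 - i m)`
    refine ⟨-(2 * m + 1), U, by rw [← hTU]; ring, ζ F ^ 3 * w, ?_⟩
    push_cast at hw ⊢
    linear_combination ζ F ^ 6 * (1 + ζ F ^ 2) * hw +
      (m * ζ F ^ 6 - ζ F ^ 4 - (2 * m + 1) * ζ F ^ 2 + 1) * h4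

end CyclotomicEight

/-! ### Relative norms from `ℤ[ζ]` -/

namespace CyclotomicEight

variable {F : Type*} [Field F] [NumberField F] [IsCyclotomicExtension {8} ℚ F]

theorem exists_eq_add_mul_ζ_and_conj_eq (x : 𝓞 F) : ∃ a b c d : ℤ,
    x = a + b * ζ F + c * ζ F ^ 2 + d * ζ F ^ 3 ∧
    conj 1 x = a + b * ζ F ^ 3 - c * ζ F ^ 2 + d * ζ F ∧
    conj 2 x = a - b * ζ F + c * ζ F ^ 2 - d * ζ F ^ 3 ∧
    conj 3 x = a - b * ζ F ^ 3 - c * ζ F ^ 2 - d * ζ F := by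
  obtain ⟨a, b, c, d, rfl⟩ := exists_eq_add_mul_ζ F x
  have h4 := ζ_pow_four F
  have h1 : conj 1 (ζ F) = ζ F ^ 3 := conj_ζ 1
  have h2 : conj 2 (ζ F) = -ζ F := by
    refine (conj_ζ 2).trans ?_
    change ζ F ^ 5 = _
    linear_combination ζ F * h4
  have h3 : conj 3 (ζ F) = -ζ F ^ 3 := by
    refine (conj_ζ 3).trans ?_
    change ζ F ^ 7 = _
    linear_combination ζ F ^ 3 * h4
  refine ⟨a, b, c, d, rfl, ?_, ?_, ?_⟩ <;>
    simp only [map_add, map_mul, map_pow, map_intCast, h1, h2, h3]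
  · linear_combination (c * ζ F ^ 2 + d * (ζ F ^ 5 - ζ F)) * h4
  · ring
  · linear_combination (c * ζ F ^ 2 - d * (ζ F ^ 5 - ζ F)) * h4

/-- The norms to `ℤ[√2]` and `ℤ[i]`, and their common norm to `ℤ`. -/
theorem exists_mul_conj_eq (x : 𝓞 F) : ∃ e f A B : ℤ, x * conj 3 x = e + f * sqrtTwo F ∧
    conj 1 x * conj 2 x = e - f * sqrtTwo F ∧ x * conj 2 x = A + B * ζ F ^ 2 ∧
    e ^ 2 - 2 * f ^ 2 = A ^ 2 + B ^ 2 := by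
  obtain ⟨a, b, c, d, h0, h1, h2, h3⟩ := exists_eq_add_mul_ζ_and_conj_eq x
  have h4 := ζ_pow_four F
  refine ⟨a ^ 2 + b ^ 2 + c ^ 2 + d ^ 2, a * b + b * c + c * d - d * a, a ^ 2 - c ^ 2 + 2 * b * d,
    2 * a * c - b ^ 2 + d ^ 2, ?_, ?_, ?_, by ring⟩ <;>
    push_cast
  · rw [h3, h0, sqrtTwo]
    linear_combination (-b * b - c * c - d * d - b * d * ζ F ^ 2 - b * c * ζ F - c * d * ζ F) * h4
  · rw [h1, h2, sqrtTwo]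
    linear_combination (-b * b - c * c - d * d - b * d * ζ F ^ 2 + b * c * ζ F + c * d * ζ F) * h4
  · rw [h2, h0]
    linear_combination (c ^ 2 - d ^ 2 * ζ F ^ 2 - 2 * b * d) * h4

theorem exists_mul_conj_eq_of_residue {p : ℕ} [Fact p.Prime] {r : ZMod p} (hr : r ^ 4 = -1)
    (hp2 : p ≠ 2) {π : 𝓞 F} (hπ : ∀ x, residue hr 0 x = 0 ↔ π ∣ x) :
    ∃ e f A B : ℤ, π * conj 3 π = e + f * sqrtTwo F ∧ conj 1 π * conj 2 π = e - f * sqrtTwo F ∧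
      π * conj 2 π = A + B * ζ F ^ 2 ∧ e ^ 2 - 2 * f ^ 2 = p ∧ A ^ 2 + B ^ 2 = p := by
  obtain ⟨e, f, A, B, h3, h12, h2, hef⟩ := exists_mul_conj_eq π
  have hp : e ^ 2 - 2 * f ^ 2 = p := by
    refine eq_prime_of_prod_conj_eq hr hπ hp2 (hef ▸ by positivity) ?_
    calc ∏ k, conj k π = (π * conj 3 π) * (conj 1 π * conj 2 π) := by
          rw [Fin.prod_univ_four, conj_zero]
          ring
      _ = ((e ^ 2 - 2 * f ^ 2 : ℤ) : 𝓞 F) := by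
          rw [h3, h12]
          push_cast
          linear_combination (-f ^ 2 : 𝓞 F) * sqrtTwo_sq F
  exact ⟨e, f, A, B, h3, h12, h2, hp, hef ▸ hp⟩

end CyclotomicEight

/-! ### Units of norm `-1` and `1 + √2` -/

theorem exists_eq_mul_and_sq_eq {S : Type*} [CommRing S] [IsDomain S] [IsIntegrallyClosed S]
    {x y z : S} (hy : y ≠ 0) (h : x ^ 2 = y ^ 2 * z) : ∃ q, x = y * q ∧ q ^ 2 = z := by
  obtain ⟨q, rfl⟩ := (IsIntegrallyClosed.pow_dvd_pow_iff two_ne_zero).mp ⟨z, h⟩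
  exact ⟨q, rfl, mul_left_cancel₀ (pow_ne_zero 2 hy) (by rw [← h, mul_pow])⟩

namespace QuadraticConj

variable {R S : Type*} [CommRing R] [CommRing S] [Algebra R S] (Q : QuadraticConj R S)

section Norm

variable [FaithfulSMul R S]

theorem norm_eq_iff {x : S} {r : R} : Q.norm x = r ↔ x * Q.σ x = algebraMap R S r := by
  rw [← Q.algebraMap_norm, (FaithfulSMul.algebraMap_injective R S).eq_iff]

theorem norm_mul (x y : S) : Q.norm (x * y) = Q.norm x * Q.norm y := by
  rw [norm_eq_iff, map_mul, map_mul, Q.algebraMap_norm, Q.algebraMap_norm, mul_mul_mul_comm]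

theorem norm_pow (x : S) (n : ℕ) : Q.norm (x ^ n) = Q.norm x ^ n := by
  rw [norm_eq_iff, map_pow, map_pow, Q.algebraMap_norm, mul_pow]

theorem norm_algebraMap (r : R) : Q.norm (algebraMap R S r) = r ^ 2 := by
  rw [norm_eq_iff, AlgEquiv.commutes, map_pow, sq]

end Norm

section Unit

variable [IsDomain R] [IsDomain S] [FaithfulSMul R S] [IsIntegrallyClosed S]

/-- The unit is `ε = T + U√d`, a root of `X² - 2TX - 1`, so that `(1 + iε)² = (1 + i)²ε(1 + iT)`. -/
theorem exists_unit_norm_eq_neg_one {t : S} (hσ : Q.σ t = -t) {d T U i m w : R}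
    (ht : t ^ 2 = algebraMap R S d) (hTU : T ^ 2 + 1 = d * U ^ 2) (hi : i ^ 2 = -1)
    (h2 : (2 : R) ≠ 0) (hT : 1 + i * T ≠ 0) (hw : 1 + i * T = m * w ^ 2) :
    ∃ (ε : Sˣ) (α : S), Q.norm (ε : S) = -1 ∧ α ^ 2 = ε * algebraMap R S m := by
  have hinj := FaithfulSMul.algebraMap_injective R S
  have hTU' := congrArg (algebraMap R S) hTU
  have hi' := congrArg (algebraMap R S) hi
  have hw' := congrArg (algebraMap R S) hw
  simp only [map_add, map_mul, map_pow, map_one, map_neg] at hTU' hi' hw'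
  have hTd : (algebraMap R S T + algebraMap R S U * t) *
      (algebraMap R S T - algebraMap R S U * t) = -1 := by
    linear_combination hTU' - algebraMap R S U ^ 2 * ht
  let ε : Sˣ := ⟨algebraMap R S T + algebraMap R S U * t,
    -(algebraMap R S T - algebraMap R S U * t), by linear_combination -hTd,
    by linear_combination -hTd⟩
  have hε : (ε : S) = algebraMap R S T + algebraMap R S U * t := rfl
  have hroot : (ε : S) ^ 2 = 2 * algebraMap R S T * ε + 1 := by
    rw [hε]
    linear_combination -hTd
  have hw0 : w ≠ 0 := by
    rintro rfl
    exact hT (by rw [hw]; ring)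
  have hi0 : 1 + i ≠ 0 := fun h0 => h2 (by linear_combination (1 - i) * h0 + hi)
  obtain ⟨α, -, hα⟩ := exists_eq_mul_and_sq_eq (x := 1 + algebraMap R S i * ε)
    (y := algebraMap R S ((1 + i) * w)) (z := ε * algebraMap R S m)
    ((map_ne_zero_iff _ hinj).mpr (mul_ne_zero hi0 hw0)) (by
      rw [map_mul, map_add, map_one]
      linear_combination (ε ^ 2 - ε - algebraMap R S i * algebraMap R S T * ε -
        2 * algebraMap R S T * ε) * hi' - hroot + (1 + algebraMap R S i) ^ 2 * ε * hw')
  refine ⟨ε, α, Q.norm_eq_iff.mpr ?_, hα⟩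
  rw [hε, map_add, map_mul, AlgEquiv.commutes, AlgEquiv.commutes, hσ, map_neg, map_one]
  linear_combination hTd

/-- `αβ / m` is a unit with square `εε'v⁻¹`, hence of norm `± v⁻¹`; its product with `v`, and with
`i` if the sign is negative, has norm `v`. -/
theorem exists_unit_norm_eq {ε ε' : Sˣ} {v i : Rˣ} {m : R} {α β : S}
    (hε : Q.norm (ε : S) = -1) (hε' : Q.norm (ε' : S) = -1) (hi : (i : R) ^ 2 = -1) (hm : m ≠ 0)
    (hα : α ^ 2 = ε * algebraMap R S m) (hβ : β ^ 2 = ε' * algebraMap R S (↑v⁻¹ * m)) :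
    ∃ η : Sˣ, Q.norm (η : S) = v := by
  obtain ⟨γ, -, hγ⟩ := exists_eq_mul_and_sq_eq (x := α * β) (y := algebraMap R S m)
    (z := ε * ε' * algebraMap R S ↑v⁻¹)
    ((map_ne_zero_iff _ (FaithfulSMul.algebraMap_injective R S)).mpr hm)
    (by rw [mul_pow, hα, hβ, map_mul]; ring)
  have hγu : IsUnit γ := (isUnit_pow_iff two_ne_zero).mp <|
    hγ ▸ (ε * ε' * Units.map (algebraMap R S).toMonoidHom v⁻¹).isUnit
  have hnorm : (v * Q.norm γ) ^ 2 = 1 := by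
    rw [mul_pow, ← Q.norm_pow, hγ, Q.norm_mul, Q.norm_mul, hε, hε', Q.norm_algebraMap, neg_mul_neg,
      one_mul, one_mul, ← mul_pow, Units.mul_inv, one_pow]
  let η := Units.map (algebraMap R S).toMonoidHom v * hγu.unit
  have hη : Q.norm (η : S) = v * (v * Q.norm γ) := by
    change Q.norm (algebraMap R S v * γ) = _
    rw [Q.norm_mul, Q.norm_algebraMap, sq, mul_assoc]
  rcases mul_self_eq_one_iff.mp ((sq _).symm.trans hnorm) with h | h
  · exact ⟨η, by rw [hη, h, mul_one]⟩
  · refine ⟨Units.map (algebraMap R S).toMonoidHom i * η, ?_⟩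
    change Q.norm (algebraMap R S i * η) = _
    rw [Q.norm_mul, Q.norm_algebraMap, hη, hi, h]
    ring

end Unit

end QuadraticConj

namespace CyclotomicEight

variable {F K : Type*} [Field F] [NumberField F] [IsCyclotomicExtension {8} ℚ F]
  [Field K] [NumberField K] [Algebra F K]

theorem one_add_ζ_sq_mul_intCast_ne_zero (T : ℤ) : 1 + ζ F ^ 2 * T ≠ 0 := fun h => by
  have h1 : ((T ^ 2 + 1 : ℤ) : 𝓞 F) = 0 := by
    push_cast
    linear_combination (1 - ζ F ^ 2 * T) * h + T ^ 2 * ζ_pow_four F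
  have h2 : T ^ 2 + 1 = 0 := mod_cast h1
  nlinarith

/-- The units are `T + U√p` and one built from `T' + U'√(2p)`, for solutions of the negative Pell
equations; for the latter recall `1 + i = (1 + ζ)²(√2 - 1)`. -/
theorem exists_units {p : ℕ} [Fact p.Prime] (hp16 : p % 16 = 9)
    (h2 : (2 : ZMod p) ^ ((p - 1) / 4) = -1) {Q : QuadraticConj (𝓞 F) (𝓞 K)} {s : 𝓞 K}
    (hσ : Q.σ s = -s) (hs : s ^ 2 = p) {A B : ℤ} (hAB : A ^ 2 + B ^ 2 = p) :
    ∃ (ε η : (𝓞 K)ˣ) (α : 𝓞 K), Q.norm (ε : 𝓞 K) = -1 ∧ Q.norm (η : 𝓞 K) = fundUnit F ∧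
      α ^ 2 = ε * algebraMap (𝓞 F) (𝓞 K) (A + B * ζ F ^ 2) := by
  obtain ⟨T, U, hTU, w, hw⟩ := exists_one_add_mul_eq (F := F) hAB (by lia)
  obtain ⟨T', U', hTU', w', hw'⟩ := exists_one_add_mul_eq_one_add_mul (F := F) hAB hp16 h2
  have hi : (ζ F ^ 2) ^ 2 = -1 := by rw [← pow_mul, ζ_pow_four]
  obtain ⟨ε, α, hε, hα⟩ := Q.exists_unit_norm_eq_neg_one hσ (d := p) (T := T) (U := U)
    (by rw [hs, map_natCast]) (by exact_mod_cast hTU) hi two_ne_zero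
    (one_add_ζ_sq_mul_intCast_ne_zero T) hw
  obtain ⟨ε', β, hε', hβ⟩ := Q.exists_unit_norm_eq_neg_one
    (t := algebraMap (𝓞 F) (𝓞 K) (sqrtTwo F) * s) (d := 2 * p) (T := T') (U := U')
    (m := ↑(fundUnit F)⁻¹ * (A + B * ζ F ^ 2)) (w := (1 + ζ F) * w')
    (by rw [map_mul, AlgEquiv.commutes, hσ, mul_neg])
    (by rw [mul_pow, ← map_pow, sqrtTwo_sq, hs, map_mul, map_natCast]) (by exact_mod_cast hTU')
    hi two_ne_zero (one_add_ζ_sq_mul_intCast_ne_zero T') (by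
      have h1 : 1 + ζ F ^ 2 = (1 + ζ F) ^ 2 * ↑(fundUnit F)⁻¹ := by
        change _ = _ * (sqrtTwo F - 1)
        rw [sqrtTwo]
        linear_combination (2 + ζ F) * ζ_pow_four F
      rw [hw', h1]
      ring)
  obtain ⟨η, hη⟩ := Q.exists_unit_norm_eq (i := ζUnit F ^ 2) hε hε' hi
    (fun h0 => one_add_ζ_sq_mul_intCast_ne_zero T (by rw [hw, h0, zero_mul])) hα hβ
  exact ⟨ε, η, α, hε, hη, hα⟩

end CyclotomicEight

/-! ### Norm residues at the ramified primes -/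

theorem not_isSquare_of_pow_four_eq_neg_one {p : ℕ} [Fact p.Prime] (hp16 : p % 16 = 9)
    {r : ZMod p} (hr : r ^ 4 = -1) : ¬ IsSquare r := by
  rintro ⟨x, rfl⟩
  have hx8 : x ^ 8 = -1 := by rw [← hr]; ring
  have hx0 : x ≠ 0 := by
    rintro rfl
    exact neg_ne_zero.mpr one_ne_zero (hx8.symm.trans (zero_pow (by norm_num)))
  have h1 := ZMod.pow_card_sub_one_eq_one hx0
  rw [show p - 1 = 8 * (2 * (p / 16) + 1) by lia, pow_mul, hx8,
    (odd_two_mul_add_one _).neg_one_pow] at h1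
  exact zmod_two_ne_zero (p := p) (by lia) (by linear_combination -h1)

namespace CyclotomicEight

variable {F : Type*} [Field F] [NumberField F] [IsCyclotomicExtension {8} ℚ F]
  {p : ℕ} [Fact p.Prime] {r : ZMod p} (hr : r ^ 4 = -1) (hp2 : p ≠ 2)
  {π : 𝓞 F} (hπ : ∀ x, residue hr 0 x = 0 ↔ π ∣ x)

include hp2 hπ

theorem prod_conj_eq_prime : ∏ k, conj k π = p := by
  obtain ⟨e, f, A, B, h3, h12, -, hp, -⟩ := exists_mul_conj_eq_of_residue hr hp2 hπ
  have hp' : (e : 𝓞 F) ^ 2 - 2 * f ^ 2 = p := mod_cast hp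
  rw [Fin.prod_univ_four, conj_zero]
  linear_combination conj 1 π * conj 2 π * h3 + (e + f * sqrtTwo F) * h12 + hp' -
    f ^ 2 * sqrtTwo_sq F

theorem exists_prime_eq_conj_mul (k : Fin 4) :
    ∃ d : 𝓞 F, (p : 𝓞 F) = conj k π * d ∧ ¬ conj k π ∣ d := by
  refine ⟨∏ j ∈ Finset.univ.erase k, conj j π, ?_, fun h => ?_⟩
  · rw [← prod_conj_eq_prime hr hp2 hπ,
      Finset.mul_prod_erase _ (fun j => conj j π) (Finset.mem_univ k)]
  · obtain ⟨j, hj, hdvd⟩ := ((prime_conj hr hπ k).dvd_finsetProd_iff _).mp h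
    exact not_conj_dvd_conj hr hπ hp2 (Finset.ne_of_mem_erase hj).symm hdvd

variable {K : Type*} [Field K] [NumberField K] [Algebra F K]
  {Q : QuadraticConj (𝓞 F) (𝓞 K)} {s : 𝓞 K} (hσ : Q.σ s = -s) (hs : s ^ 2 = p)

include hσ hs

theorem isSquare_residue_of_norm_eq (k : Fin 4) {m c : 𝓞 F} {z : 𝓞 K} (hc : c ≠ 0)
    (h : Q.norm z = m * c ^ 2) : IsSquare (residue hr k m) := by
  have := isPrincipalIdealRing F
  obtain ⟨d, hd, hnd⟩ := exists_prime_eq_conj_mul hr hp2 hπ k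
  refine QuadraticConj.isSquare_of_norm_eq (residue hr k) Q (prime_conj hr hπ k)
    (residue_eq_zero_iff hr hπ k) ?_ hnd hσ ?_ hc h
  · rw [← residue_eq_zero_iff hr hπ, map_ofNat]
    exact zmod_two_ne_zero hp2
  · rw [hs, ← hd, map_natCast]

variable {η : (𝓞 K)ˣ} (hη : Q.norm (η : 𝓞 K) = fundUnit F)

include hη

theorem isSquare_residue_fundUnit (k : Fin 4) : IsSquare (residue hr k (fundUnit F : 𝓞 F)) :=
  isSquare_residue_of_norm_eq hr hp2 hπ hσ hs k (c := 1) one_ne_zero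
    (by rw [hη, one_pow, mul_one])

theorem exists_residue_unit_eq (u : (𝓞 F)ˣ) : ∃ (a b : ℕ) (w : (𝓞 F)ˣ), a ≤ 1 ∧
    u = ζUnit F ^ a * fundUnit F ^ b * w ^ 2 ∧
    ∀ k, ∃ y, y ≠ 0 ∧ residue hr k (u : 𝓞 F) = (r ^ (2 * (k : ℕ) + 1)) ^ a * y ^ 2 := by
  obtain ⟨a, b, w, ha, -, rfl⟩ := exists_unit_eq_mul_sq u
  refine ⟨a, b, w, ha, rfl, fun k => ?_⟩
  obtain ⟨y, hy⟩ := isSquare_residue_fundUnit hr hp2 hπ hσ hs hη k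
  have hy0 : y ≠ 0 := by
    rintro rfl
    exact ((fundUnit F).isUnit.map (residue hr k)).ne_zero (by rw [hy, mul_zero])
  have hw0 : residue hr k (w : 𝓞 F) ≠ 0 := (w.isUnit.map (residue hr k)).ne_zero
  refine ⟨y ^ b * residue hr k (w : 𝓞 F), mul_ne_zero (pow_ne_zero b hy0) hw0, ?_⟩
  simp only [Units.val_mul, Units.val_pow_eq_pow_val, coe_ζUnit, map_mul, map_pow, residue_ζ, hy]
  ring

/-- Up to squares a unit is `ζᵃ(1 + √2)ᵇ`; here `1 + √2` is a norm, and `ζ` is not a square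
modulo `π`. -/
theorem exists_unit_norm_eq_of_norm_mul_eq (hp16 : p % 16 = 9) (u : (𝓞 F)ˣ) {x y : 𝓞 K}
    (hx : x ≠ 0) (h : Q.norm x * u = Q.norm y) : ∃ w : (𝓞 K)ˣ, Q.norm (w : 𝓞 K) = u := by
  obtain ⟨a, b, w, ha, hu, hres⟩ := exists_residue_unit_eq hr hp2 hπ hσ hs hη u
  have ha0 : a = 0 := by
    by_contra ha0
    obtain ⟨z, hz0, hz⟩ := hres 0
    have hsq : IsSquare (residue hr 0 (u : 𝓞 F)) :=
      isSquare_residue_of_norm_eq hr hp2 hπ hσ hs 0 (z := x * y) (Q.norm_ne_zero hx)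
        (by rw [Q.norm_mul, ← h]; ring)
    rw [hz, show a = 1 by lia, pow_one, Fin.val_zero, mul_zero, zero_add, pow_one] at hsq
    refine not_isSquare_of_pow_four_eq_neg_one hp16 hr ?_
    rw [← mul_div_cancel_right₀ r (pow_ne_zero 2 hz0)]
    exact hsq.div (IsSquare.sq z)
  refine ⟨η ^ b * Units.map (algebraMap (𝓞 F) (𝓞 K)).toMonoidHom w, ?_⟩
  rw [hu, ha0, pow_zero, one_mul, Units.val_mul, Units.val_pow_eq_pow_val, Units.val_mul,
    Units.val_pow_eq_pow_val, Units.val_pow_eq_pow_val, Q.norm_mul, Q.norm_pow, hη]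
  exact congrArg _ (Q.norm_algebraMap _)

theorem isSquare_residue_unit_mul (u : (𝓞 F)ˣ) :
    IsSquare (residue hr 1 (u : 𝓞 F) * residue hr 2 (u : 𝓞 F)) := by
  obtain ⟨a, -, -, -, -, hres⟩ := exists_residue_unit_eq hr hp2 hπ hσ hs hη u
  obtain ⟨y, -, hy⟩ := hres 1
  obtain ⟨z, -, hz⟩ := hres 2
  refine ⟨(r ^ 4) ^ a * y * z, ?_⟩
  rw [hy, hz, Fin.val_one, Fin.val_two]
  ring

end CyclotomicEight

/-! ### The ramified primes and the 2-torsion of the class group -/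

theorem span_pair_mul_self {S : Type*} [CommRing S] {x y s : S} (hxy : IsCoprime x y)
    (hs : s ^ 2 = x * y) : Ideal.span {x, s} * Ideal.span {x, s} = Ideal.span {x} := by
  obtain ⟨a, b, hab⟩ := hxy
  rw [Ideal.span_pair_mul_span_pair]
  apply le_antisymm
  · simp only [Ideal.span_le, Set.insert_subset_iff, Set.singleton_subset_iff, SetLike.mem_coe,
      Ideal.mem_span_singleton, ← sq s, hs]
    exact ⟨dvd_mul_right _ _, dvd_mul_right _ _, dvd_mul_left _ _, dvd_mul_right _ _⟩
  · rw [Ideal.span_singleton_le_iff_mem]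
    have hmem : a * (x * x) + b * (s * s) ∈ Ideal.span {x * x, x * s, s * x, s * s} :=
      Ideal.add_mem _ (Ideal.mul_mem_left _ _ (Ideal.subset_span (by simp)))
        (Ideal.mul_mem_left _ _ (Ideal.subset_span (by simp)))
    rwa [show a * (x * x) + b * (s * s) = x by linear_combination x * hab + b * hs] at hmem

theorem eq_of_mem_closure_pair {G : Type*} [CommGroup G] {a b c : G} (ha : a ^ 2 = 1)
    (hb : b ^ 2 = 1) (hc : c ∈ Subgroup.closure {a, b}) :
    c = 1 ∨ c = a ∨ c = b ∨ c = a * b := by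
  have hpow {x : G} (hx : x ^ 2 = 1) (n : ℤ) : x ^ n = 1 ∨ x ^ n = x := by
    rcases n.even_or_odd' with ⟨m, rfl | rfl⟩
    · exact .inl (by rw [zpow_mul, zpow_two, ← sq, hx, one_zpow])
    · exact .inr (by rw [zpow_add_one, zpow_mul, zpow_two, ← sq, hx, one_zpow, one_mul])
  obtain ⟨m, n, rfl⟩ := Subgroup.mem_closure_pair.mp hc
  rcases hpow ha m with hm | hm <;> rcases hpow hb n with hn | hn <;> rw [hm, hn] <;> simp

theorem idealClass_eq_of_mul_self_eq_span {S : Type*} [CommRing S] [IsDedekindDomain S]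
    {I J : Ideal S} {x y z : S} (hx : x ≠ 0) (hy : y ≠ 0) (hI : I * I = Ideal.span {x})
    (hJ : J * J = Ideal.span {y}) (hz : Associated (z ^ 2) (x * y)) :
    idealClass I = idealClass J := by
  have hne {K : Ideal S} {w : S} (hw : w ≠ 0) (hK : K * K = Ideal.span {w}) : K ≠ ⊥ := by
    rintro rfl
    exact hw (Ideal.span_singleton_eq_bot.mp (by rw [← hK, Ideal.bot_mul]))
  have hIJ : I * J = Ideal.span {z} := by
    apply ideal_eq_of_sq_eq_sq
    rw [sq, mul_mul_mul_comm, hI, hJ, Ideal.span_singleton_mul_span_singleton,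
      Ideal.span_singleton_pow, Ideal.span_singleton_eq_span_singleton]
    exact hz.symm
  have h1 : idealClass I * idealClass J = 1 := by
    rw [← idealClass_mul (hne hx hI) (hne hy hJ), hIJ, idealClass_span_singleton]
  have h2 : idealClass J * idealClass J = 1 := by
    rw [← idealClass_mul (hne hy hJ) (hne hy hJ), hJ, idealClass_span_singleton]
  exact mul_right_cancel (h1.trans h2.symm)

theorem two_dvd_one_add_of_sq_eq {S : Type*} [CommRing S] [IsDomain S] [IsIntegrallyClosed S]
    {s : S} {n : ℕ} (hs : s ^ 2 = n) (hn : n % 4 = 1) : 2 ∣ 1 + s := by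
  have hn' : (n : S) = 4 * ((n / 4 : ℕ) : S) + 1 := by
    exact_mod_cast congrArg (Nat.cast : ℕ → S) (show n = 4 * (n / 4) + 1 by lia)
  exact dvd_of_sq_sub_mul_add_eq_zero (t := 1) (m := -((n / 4 : ℕ) : S))
    (by linear_combination hs + hn')

theorem QuadraticConj.exists_sub_σ_eq {R S : Type*} [CommRing R] [CommRing S] [Algebra R S]
    [IsDomain S] [IsIntegrallyClosed S] [CharZero S] (Q : QuadraticConj R S) {s : S}
    (hσ : Q.σ s = -s) {n : ℕ} (hs : s ^ 2 = n) (hn : n % 4 = 1) : ∃ x, x - Q.σ x = s := by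
  obtain ⟨x, hx⟩ := two_dvd_one_add_of_sq_eq hs hn
  refine ⟨x, mul_left_cancel₀ (two_ne_zero (α := S)) ?_⟩
  have hσx := congrArg Q.σ hx
  rw [map_add, map_one, hσ, map_mul, map_ofNat] at hσx
  linear_combination hσx - hx

namespace CyclotomicEight

variable {F K : Type*} [Field F] [NumberField F] [IsCyclotomicExtension {8} ℚ F]
  [Field K] [Algebra F K]

/-- The ideal `(conj k π, s)`: for `s = √p`, the prime of `F(√p)` above the factor `conj k π`
of `p`. -/
def ramifiedPrime (π : 𝓞 F) (s : 𝓞 K) (k : Fin 4) : Ideal (𝓞 K) :=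
  Ideal.span {algebraMap (𝓞 F) (𝓞 K) (conj k π), s}

variable {Q : QuadraticConj (𝓞 F) (𝓞 K)} {s : 𝓞 K} (hσ : Q.σ s = -s)

include hσ in
theorem map_ramifiedPrime (π : 𝓞 F) (k : Fin 4) :
    (ramifiedPrime π s k).map Q.σ = ramifiedPrime π s k := by
  rw [ramifiedPrime, Ideal.map_span, Set.image_pair, AlgEquiv.commutes, hσ, Ideal.span_insert,
    Ideal.span_singleton_neg, ← Ideal.span_insert]

variable {p : ℕ} [hp : Fact p.Prime] (hs : s ^ 2 = p)

variable {r : ZMod p} (hr : r ^ 4 = -1) (hp2 : p ≠ 2) {π : 𝓞 F}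
  (hπ : ∀ x, residue hr 0 x = 0 ↔ π ∣ x)

include hs hp2 hπ in
theorem ramifiedPrime_mul_self (k : Fin 4) : ramifiedPrime π s k * ramifiedPrime π s k =
    Ideal.span {algebraMap (𝓞 F) (𝓞 K) (conj k π)} := by
  have := isPrincipalIdealRing F
  obtain ⟨d, hd, hnd⟩ := exists_prime_eq_conj_mul hr hp2 hπ k
  have hcop : IsCoprime (conj k π) d := (prime_conj hr hπ k).irreducible.coprime_iff_not_dvd.mpr hnd
  refine span_pair_mul_self (hcop.map (algebraMap (𝓞 F) (𝓞 K))) ?_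
  rw [hs, ← map_mul, ← hd, map_natCast]

variable [NumberField K]

include hs in
theorem sqrt_ne_zero : s ≠ 0 := by
  rintro rfl
  rw [zero_pow two_ne_zero] at hs
  exact hp.out.ne_zero (mod_cast hs.symm)

include hs in
theorem ramifiedPrime_ne_bot (π : 𝓞 F) (k : Fin 4) : ramifiedPrime π s k ≠ ⊥ := fun h =>
  sqrt_ne_zero hs <| by
    rw [← Ideal.mem_bot, ← h]
    exact Ideal.subset_span (by simp)

include hs hp2 hπ

theorem idealClass_ramifiedPrime_sq (k : Fin 4) : idealClass (ramifiedPrime π s k) ^ 2 = 1 := by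
  have h0 := ramifiedPrime_ne_bot hs π k
  rw [sq, ← idealClass_mul h0 h0, ramifiedPrime_mul_self hs hr hp2 hπ, idealClass_span_singleton]

theorem idealClass_ramifiedPrime_eq {j k : Fin 4} {z : 𝓞 K}
    (hz : Associated (z ^ 2) (algebraMap (𝓞 F) (𝓞 K) (conj j π * conj k π))) :
    idealClass (ramifiedPrime π s j) = idealClass (ramifiedPrime π s k) := by
  have hne (i : Fin 4) : algebraMap (𝓞 F) (𝓞 K) (conj i π) ≠ 0 :=
    (map_ne_zero_iff _ (FaithfulSMul.algebraMap_injective _ _)).mpr (prime_conj hr hπ i).ne_zero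
  exact idealClass_eq_of_mul_self_eq_span (hne j) (hne k)
    (ramifiedPrime_mul_self hs hr hp2 hπ j) (ramifiedPrime_mul_self hs hr hp2 hπ k)
    (by rwa [← map_mul])

section Coincidence

variable {ε : (𝓞 K)ˣ} {α : 𝓞 K}
  (hα : α ^ 2 = ε * algebraMap (𝓞 F) (𝓞 K) (π * conj 2 π))

include hα

theorem idealClass_ramifiedPrime_zero_eq_two :
    idealClass (ramifiedPrime π s 0) = idealClass (ramifiedPrime π s 2) := by
  refine idealClass_ramifiedPrime_eq hs hr hp2 hπ (z := α) ?_
  rw [hα, conj_zero]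
  exact associated_unit_mul_left _ _ ε.isUnit

/-- Since `p = (π · conj 2 π)(conj 1 π · conj 3 π)`, the quotient `√p / α` plays the role of `α`. -/
theorem idealClass_ramifiedPrime_one_eq_three :
    idealClass (ramifiedPrime π s 1) = idealClass (ramifiedPrime π s 3) := by
  have hs' : s ^ 2 = α ^ 2 * (↑ε⁻¹ * algebraMap (𝓞 F) (𝓞 K) (conj 1 π * conj 3 π)) := by
    have hprod := congrArg (algebraMap (𝓞 F) (𝓞 K)) (prod_conj_eq_prime hr hp2 hπ)
    rw [Fin.prod_univ_four, conj_zero, map_natCast, ← hs] at hprod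
    rw [hα, ← hprod]
    simp only [map_mul]
    linear_combination -(algebraMap (𝓞 F) (𝓞 K) π * algebraMap (𝓞 F) (𝓞 K) (conj 1 π) *
      algebraMap (𝓞 F) (𝓞 K) (conj 2 π) * algebraMap (𝓞 F) (𝓞 K) (conj 3 π)) * ε.mul_inv
  have hα0 : α ≠ 0 := by
    rintro rfl
    exact sqrt_ne_zero hs (pow_eq_zero_iff two_ne_zero |>.mp (by rw [hs']; ring))
  obtain ⟨q, -, hq⟩ := exists_eq_mul_and_sq_eq hα0 hs'
  refine idealClass_ramifiedPrime_eq hs hr hp2 hπ (z := q) ?_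
  rw [hq]
  exact associated_unit_mul_left _ _ ε⁻¹.isUnit

end Coincidence

include hσ

theorem eq_ramifiedPrime_of_isRamified (hp4 : p % 4 = 1) {P : Ideal (𝓞 K)}
    (hP : Q.IsRamified P) : ∃ k, P = ramifiedPrime π s k := by
  obtain ⟨x, hx⟩ := Q.exists_sub_σ_eq hσ hs hp4
  have hsP : s ∈ P := hx ▸ hP.sub_mem x
  obtain ⟨ℓ, hℓ, hsq⟩ := hP.exists_sq
  have hdvd : ℓ ∣ (p : 𝓞 F) := by
    apply Q.dvd_of_algebraMap_dvd
    rw [← Ideal.mem_span_singleton, ← hsq, map_natCast, ← hs, sq]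
    exact Ideal.mul_mem_mul hsP hsP
  rw [← prod_conj_eq_prime hr hp2 hπ, hℓ.dvd_finsetProd_iff] at hdvd
  obtain ⟨k, -, hk⟩ := hdvd
  refine ⟨k, ideal_eq_of_sq_eq_sq ?_⟩
  rw [sq, sq, hsq, ramifiedPrime_mul_self hs hr hp2 hπ, Ideal.span_singleton_eq_span_singleton]
  exact (hℓ.associated_of_dvd (prime_conj hr hπ k) hk).map _

variable {η : (𝓞 K)ˣ} (hη : Q.norm (η : 𝓞 K) = fundUnit F)

include hη

theorem sq_eq_one_iff (hp16 : p % 16 = 9) {ε : (𝓞 K)ˣ} {α : 𝓞 K}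
    (hα : α ^ 2 = ε * algebraMap (𝓞 F) (𝓞 K) (π * conj 2 π)) (c : ClassGroup (𝓞 K)) :
    c ^ 2 = 1 ↔ c = 1 ∨ c = idealClass (ramifiedPrime π s 0) ∨
      c = idealClass (ramifiedPrime π s 0 * ramifiedPrime π s 3) ∨
      c = idealClass (ramifiedPrime π s 0) *
        idealClass (ramifiedPrime π s 0 * ramifiedPrime π s 3) := by
  have := isPrincipalIdealRing F
  have h02 := idealClass_ramifiedPrime_zero_eq_two hs hr hp2 hπ hα
  have h13 := idealClass_ramifiedPrime_one_eq_three hs hr hp2 hπ hα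
  have hsq := idealClass_ramifiedPrime_sq hs hr hp2 hπ
  rw [idealClass_mul (ramifiedPrime_ne_bot hs π 0) (ramifiedPrime_ne_bot hs π 3)]
  generalize hc₀ : idealClass (ramifiedPrime π s 0) = c₀ at *
  generalize hc₃ : idealClass (ramifiedPrime π s 3) = c₃ at *
  have hsq₀ : c₀ ^ 2 = 1 := hc₀ ▸ hsq 0
  have hsq₃ : (c₀ * c₃) ^ 2 = 1 := by rw [mul_pow, hsq₀, ← hc₃, hsq, one_mul]
  constructor
  · intro hc
    have hmem := Q.mem_ramifiedClasses_of_sq_eq_one (sqrt_ne_zero hs) hσ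
      (fun u x y hx _ h => exists_unit_norm_eq_of_norm_mul_eq hr hp2 hπ hσ hs hη hp16 u hx h) hc
    refine eq_of_mem_closure_pair hsq₀ hsq₃ ((Subgroup.closure_le _).mpr ?_ hmem)
    rintro _ ⟨P, hP, rfl⟩
    have h₀ : c₀ ∈ Subgroup.closure {c₀, c₀ * c₃} := Subgroup.subset_closure (by simp)
    have h₃ : c₃ ∈ Subgroup.closure {c₀, c₀ * c₃} :=
      (Subgroup.mul_mem_cancel_left _ h₀).mp (Subgroup.subset_closure (by simp))
    obtain ⟨k, rfl⟩ := eq_ramifiedPrime_of_isRamified hσ hs hr hp2 hπ (by lia) hP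
    fin_cases k
    exacts [hc₀ ▸ h₀, h13 ▸ h₃, h02 ▸ h₀, hc₃ ▸ h₃]
  · rintro (rfl | rfl | rfl | rfl)
    exacts [one_pow 2, hsq₀, hsq₃, by rw [mul_pow, hsq₀, hsq₃, one_mul]]

/-- Genus theory: the obstructions `residue 1` and `residue 2` vanish together on a square class, up
to units, and their product is trivial on units. -/
theorem isSquare_residue_mul_of_isSquare_idealClass {I : Ideal (𝓞 K)} (hI : I ≠ ⊥) {n : 𝓞 F}
    (hn : I * I.map Q.σ = Ideal.span {algebraMap (𝓞 F) (𝓞 K) n}) (hsq : IsSquare (idealClass I)) :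
    IsSquare (residue hr 1 n * residue hr 2 n) := by
  have := isPrincipalIdealRing F
  obtain ⟨u, c, z, hc, h⟩ := Q.exists_norm_eq_of_isSquare_idealClass hI hn hsq
  have h1 := isSquare_residue_of_norm_eq hr hp2 hπ hσ hs 1 hc h
  have h2 := isSquare_residue_of_norm_eq hr hp2 hπ hσ hs 2 hc h
  have hu := isSquare_residue_unit_mul hr hp2 hπ hσ hs hη u
  have hu1 := (u.isUnit.map (residue hr 1)).ne_zero
  have hu2 := (u.isUnit.map (residue hr 2)).ne_zero
  have h := (h1.mul h2).div hu
  rwa [map_mul, map_mul, mul_mul_mul_comm, mul_div_cancel_left₀ _ (mul_ne_zero hu1 hu2)] at h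

/-- Here `residue 1 π * residue 2 π = 2e` where `π · conj 3 π = e + f√2`. -/
theorem not_isSquare_idealClass_ramifiedPrime (hp8 : p % 8 = 1)
    (h2 : (2 : ZMod p) ^ ((p - 1) / 4) = -1) :
    ¬ IsSquare (idealClass (ramifiedPrime π s 0)) := fun hsq => by
  obtain ⟨e, f, A, B, h03, h12, -, hef, -⟩ := exists_mul_conj_eq_of_residue hr hp2 hπ
  have hmul : residue hr 1 π * residue hr 2 π = ((2 * e : ℤ) : ZMod p) := by
    have h0 : residue hr 0 (π * conj 3 π) = 0 := (hπ _).mpr (dvd_mul_right _ _)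
    rw [h03] at h0
    rw [← residue_zero_conj, ← residue_zero_conj hr 2, ← map_mul, h12]
    simp only [map_add, map_sub, map_mul, map_intCast] at h0 ⊢
    push_cast
    linear_combination -h0
  have hne : ((2 * e : ℤ) : ZMod p) ≠ 0 := by
    rw [← hmul]
    exact mul_ne_zero (residue_self_ne_zero hr hπ hp2 (by decide))
      (residue_self_ne_zero hr hπ hp2 (by decide))
  have hsq' := isSquare_residue_mul_of_isSquare_idealClass hσ hs hr hp2 hπ hη
    (ramifiedPrime_ne_bot hs π 0) (n := π)
    (by rw [map_ramifiedPrime hσ, ramifiedPrime_mul_self hs hr hp2 hπ, conj_zero]) hsq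
  rw [hmul, isSquare_intCast_iff_jacobiSym hne, jacobiSym.mul_left, jacobiSym_two_eq_one hp8,
    jacobiSym_eq_neg_one_of_sq_sub_two_mul_sq hp8 h2 hef] at hsq'
  norm_num at hsq'

end CyclotomicEight

/-! ### The product of two ramified classes is nontrivial -/

theorem dvd_of_isSquare_mul {R : Type*} [CommRing R] [IsDomain R] {q m : R} (hq : Prime q)
    (h : IsSquare (q * m)) : q ∣ m := by
  obtain ⟨y, hy⟩ := h
  obtain ⟨z, rfl⟩ : q ∣ y := hq.dvd_of_dvd_pow (n := 2) ⟨m, by rw [sq, hy]⟩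
  exact ⟨z * z, mul_left_cancel₀ hq.ne_zero (by rw [hy]; ring)⟩

section IntegrallyClosed

variable {S : Type*} [CommRing S] [IsDomain S] [IsIntegrallyClosed S]

theorem isSquare_of_isSquare_mul {a b : S} (ha0 : a ≠ 0) (ha : IsSquare a)
    (h : IsSquare (a * b)) : IsSquare b := by
  obtain ⟨x, rfl⟩ := ha
  obtain ⟨y, hy⟩ := h
  obtain ⟨q, -, hq⟩ := exists_eq_mul_and_sq_eq (left_ne_zero_of_mul ha0) (x := y) (z := b)
    (by rw [sq, ← hy, sq])
  exact ⟨q, by rw [← hq, sq]⟩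

theorem isSquare_mul_pow_of_sq_eq {x a b c : S} (hc0 : c ≠ 0) (hc : c ^ 2 = a * b) {n : ℕ}
    (h : IsSquare (x * a ^ n)) : IsSquare (x * b ^ n) := by
  have hab : IsSquare (a ^ n * b ^ n) := ⟨c ^ n, by rw [← mul_pow, ← hc]; ring⟩
  have ha0 : a ^ n ≠ 0 := pow_ne_zero n fun ha =>
    hc0 (pow_eq_zero_iff two_ne_zero |>.mp (by rw [hc, ha, zero_mul]))
  refine isSquare_of_isSquare_mul (mul_ne_zero ha0 ha0) ⟨a ^ n, rfl⟩ ?_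
  have hmul : a ^ n * a ^ n * (x * b ^ n) = x * a ^ n * (a ^ n * b ^ n) := by ring
  exact hmul ▸ h.mul hab

end IntegrallyClosed

theorem QuadraticConj.isSquare_or_isSquare_mul {R S : Type*} [CommRing R] [CommRing S]
    [IsDomain S] [Algebra R S] [FaithfulSMul R S] (Q : QuadraticConj R S) {s : S}
    (hσ : Q.σ s = -s) {d x : R} (hs : s ^ 2 = algebraMap R S d)
    (h : IsSquare (algebraMap R S x)) : IsSquare x ∨ IsSquare (d * x) := by
  have hinj := FaithfulSMul.algebraMap_injective R S
  obtain ⟨y, hy⟩ := h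
  have hσy : Q.σ y * Q.σ y = y * y := by rw [← map_mul, ← hy, Q.σ.commutes]
  rcases mul_self_eq_mul_self_iff.mp hσy with hσy | hσy
  · obtain ⟨z, rfl⟩ := Q.exists_algebraMap_eq y hσy
    exact .inl ⟨z, hinj (by rw [hy, map_mul])⟩
  · obtain ⟨z, hz⟩ := Q.exists_algebraMap_eq (y * s) (by rw [map_mul, hσy, hσ, neg_mul_neg])
    refine .inr ⟨z, hinj ?_⟩
    rw [map_mul, hy, ← hs, map_mul, hz]
    ring

namespace CyclotomicEight

section Independence

variable {F : Type*} [Field F] [NumberField F] [IsCyclotomicExtension {8} ℚ F]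
  {p : ℕ} [Fact p.Prime] {r : ZMod p} (hr : r ^ 4 = -1) (hp2 : p ≠ 2)
  {π : 𝓞 F} (hπ : ∀ x, residue hr 0 x = 0 ↔ π ∣ x)

include hπ

theorem residue_eq_zero_of_isSquare_conj_mul {k : Fin 4} {m : 𝓞 F}
    (h : IsSquare (conj k π * m)) : residue hr k m = 0 :=
  (residue_eq_zero_iff hr hπ k m).mpr (dvd_of_isSquare_mul (prime_conj hr hπ k) h)

include hp2

theorem eq_zero_of_isSquare_unit_mul (u : (𝓞 F)ˣ) {a b : ℕ} (ha : a ≤ 1) (hb : b ≤ 1)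
    (h : IsSquare (u * (π * conj 2 π) ^ a * (π * conj 3 π) ^ b : 𝓞 F)) : a = 0 ∧ b = 0 := by
  have hu (k : Fin 4) : residue hr k (u : 𝓞 F) ≠ 0 := (u.isUnit.map (residue hr k)).ne_zero
  have hne {k : Fin 4} (hk : k ≠ 0) := residue_self_ne_zero hr hπ hp2 hk
  have ha0 : a = 0 := by
    by_contra ha0
    obtain rfl : a = 1 := by lia
    rw [pow_one, show (u * (π * conj 2 π) * (π * conj 3 π) ^ b : 𝓞 F) =
      conj 2 π * (u * π * (π * conj 3 π) ^ b) by ring] at h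
    refine (?_ : _ ≠ _) (residue_eq_zero_of_isSquare_conj_mul hr hπ h)
    rw [map_mul, map_mul, map_pow, map_mul]
    exact mul_ne_zero (mul_ne_zero (hu 2) (hne (by decide))) (pow_ne_zero _
      (mul_ne_zero (hne (by decide)) (residue_conj_ne_zero hr hπ hp2 (by decide))))
  subst ha0
  refine ⟨rfl, ?_⟩
  by_contra hb0
  obtain rfl : b = 1 := by lia
  rw [pow_zero, mul_one, pow_one, show (u * (π * conj 3 π) : 𝓞 F) = conj 3 π * (u * π) by ring] at h
  refine (?_ : _ ≠ _) (residue_eq_zero_of_isSquare_conj_mul hr hπ h)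
  rw [map_mul]
  exact mul_ne_zero (hu 3) (hne (by decide))

theorem not_isSquare_prime_mul_unit_mul (u : (𝓞 F)ˣ) (a b : ℕ) :
    ¬ IsSquare (p * (u * (π * conj 2 π) ^ a * (π * conj 3 π) ^ b) : 𝓞 F) := fun h => by
  rw [← prod_conj_eq_prime hr hp2 hπ, Fin.prod_univ_four, conj_zero,
    show π * conj 1 π * conj 2 π * conj 3 π *
      (u * (π * conj 2 π) ^ a * (π * conj 3 π) ^ b : 𝓞 F) =
      conj 1 π * (u * (π * conj 2 π) ^ (a + 1) * conj 3 π * (π * conj 3 π) ^ b) by ring] at h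
  have hne := residue_self_ne_zero hr hπ hp2 (k := 1) (by decide)
  have hne2 := residue_conj_ne_zero hr hπ hp2 (j := 1) (k := 2) (by decide)
  have hne3 := residue_conj_ne_zero hr hπ hp2 (j := 1) (k := 3) (by decide)
  refine (?_ : _ ≠ _) (residue_eq_zero_of_isSquare_conj_mul hr hπ h)
  simp only [map_mul, map_pow]
  exact mul_ne_zero (mul_ne_zero (mul_ne_zero (u.isUnit.map (residue hr 1)).ne_zero
    (pow_ne_zero _ (mul_ne_zero hne hne2))) hne3) (pow_ne_zero _ (mul_ne_zero hne hne3))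

end Independence

variable {F K : Type*} [Field F] [NumberField F] [IsCyclotomicExtension {8} ℚ F]
  [Field K] [Algebra F K] {Q : QuadraticConj (𝓞 F) (𝓞 K)}

theorem eq_zero_of_isSquare_algebraMap_mul {ε η v : (𝓞 K)ˣ} {γ : 𝓞 K} {θ : 𝓞 F} {a b d : ℕ}
    (hε : Q.norm (ε : 𝓞 K) = -1) (hη : Q.norm (η : 𝓞 K) = fundUnit F) (hγ0 : γ ≠ 0)
    (hγ : γ ^ 2 = v * algebraMap (𝓞 F) (𝓞 K) θ) (hd : d ≤ 1) (u : (𝓞 F)ˣ)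
    (h : IsSquare (algebraMap (𝓞 F) (𝓞 K) u * ε ^ a * v ^ b * η ^ d : 𝓞 K)) : d = 0 := by
  by_contra hd0
  obtain rfl : d = 1 := by lia
  have hsq_v : IsSquare (Q.norm (v : 𝓞 K)) := by
    have hnorm : Q.norm γ ^ 2 = Q.norm (v : 𝓞 K) * θ ^ 2 := by
      rw [← Q.norm_pow, hγ, Q.norm_mul, Q.norm_algebraMap]
    have hθ0 : θ ^ 2 ≠ 0 := fun hθ =>
      pow_ne_zero 2 (Q.norm_ne_zero hγ0) (by rw [hnorm, hθ, mul_zero])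
    exact isSquare_of_isSquare_mul hθ0 ⟨θ, sq θ⟩ ⟨Q.norm γ, by rw [mul_comm, ← hnorm, sq]⟩
  have hsq_ε : IsSquare (Q.norm (ε : 𝓞 K)) := ⟨ζ F ^ 2, by rw [hε, ← ζ_pow_four F]; ring⟩
  have hsq : IsSquare (Q.norm (algebraMap (𝓞 F) (𝓞 K) u * ε ^ a * v ^ b : 𝓞 K)) := by
    rw [Q.norm_mul, Q.norm_mul, Q.norm_pow, Q.norm_pow, Q.norm_algebraMap]
    exact ((IsSquare.sq _).mul (hsq_ε.pow a)).mul (hsq_v.pow b)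
  have hne : (algebraMap (𝓞 F) (𝓞 K) u * ε ^ a * v ^ b : 𝓞 K) ≠ 0 :=
    ((((u.isUnit.map (algebraMap (𝓞 F) (𝓞 K))).mul (ε.isUnit.pow a)).mul
      (v.isUnit.pow b))).ne_zero
  obtain ⟨y, hy⟩ := h
  refine not_isSquare_fundUnit F (isSquare_of_isSquare_mul (Q.norm_ne_zero hne) hsq ⟨Q.norm y, ?_⟩)
  rw [← hη, ← Q.norm_mul, ← Q.norm_mul, ← hy, pow_one]

variable [NumberField K] {p : ℕ} [Fact p.Prime] {r : ZMod p} (hr : r ^ 4 = -1) (hp2 : p ≠ 2)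
  {π : 𝓞 F} (hπ : ∀ x, residue hr 0 x = 0 ↔ π ∣ x)
  {s : 𝓞 K} (hσ : Q.σ s = -s) (hs : s ^ 2 = p)

include hs hr hp2 hπ

theorem exists_sq_eq_unit_mul_of_idealClass_eq_one
    (h : idealClass (ramifiedPrime π s 0 * ramifiedPrime π s 3) = 1) :
    ∃ γ ≠ 0, ∃ v : (𝓞 K)ˣ, γ ^ 2 = v * algebraMap (𝓞 F) (𝓞 K) (π * conj 3 π) := by
  obtain ⟨γ, hγ0, hγ⟩ := (idealClass_eq_one_iff (mul_ne_zero (ramifiedPrime_ne_bot hs π 0)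
    (ramifiedPrime_ne_bot hs π 3))).mp h
  have hspan : Ideal.span {algebraMap (𝓞 F) (𝓞 K) (π * conj 3 π)} = Ideal.span {γ ^ 2} := by
    rw [← Ideal.span_singleton_pow, ← hγ, sq, mul_mul_mul_comm,
      ramifiedPrime_mul_self hs hr hp2 hπ, ramifiedPrime_mul_self hs hr hp2 hπ,
      Ideal.span_singleton_mul_span_singleton, ← map_mul, conj_zero]
  obtain ⟨v, hv⟩ := Ideal.span_singleton_eq_span_singleton.mp hspan
  exact ⟨γ, hγ0, v, by rw [← hv, mul_comm]⟩

include hσ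

/-- Otherwise `γ² = v · π · conj 3 π` for some `γ` and some unit `v`, and the five units `ζ`,
`1 + √2`, `ε`, `v`, `η` are independent modulo squares, which the unit rank three forbids: the norm
of a relation involving `η` makes `1 + √2` a square, and the other relations contradict unique
factorization in `ℤ[ζ]`. -/
theorem idealClass_ramifiedPrime_mul_ne_one (hrank : Units.rank K = 3)
    {ε η : (𝓞 K)ˣ} (hε : Q.norm (ε : 𝓞 K) = -1) (hη : Q.norm (η : 𝓞 K) = fundUnit F)
    {α : 𝓞 K} (hα : α ^ 2 = ε * algebraMap (𝓞 F) (𝓞 K) (π * conj 2 π)) :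
    idealClass (ramifiedPrime π s 0 * ramifiedPrime π s 3) ≠ 1 := fun hcl => by
  obtain ⟨γ, hγ0, v, hv⟩ := exists_sq_eq_unit_mul_of_idealClass_eq_one hr hp2 hπ hs hcl
  have hα0 : α ≠ 0 := by
    have hne : algebraMap (𝓞 F) (𝓞 K) (π * conj 2 π) ≠ 0 := by
      rw [Ne, map_eq_zero_iff _ (FaithfulSMul.algebraMap_injective _ _)]
      exact mul_ne_zero (by simpa using (prime_conj hr hπ 0).ne_zero) (prime_conj hr hπ 2).ne_zero
    rintro rfl
    exact mul_ne_zero ε.ne_zero hne (by rw [← hα, zero_pow two_ne_zero])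
  let ι : (𝓞 F)ˣ →* (𝓞 K)ˣ := Units.map (algebraMap (𝓞 F) (𝓞 K) : 𝓞 F →* 𝓞 K)
  obtain ⟨e, he0, he, hsq⟩ := exists_isSquare_prod_units_pow K (n := 5) (by rw [hrank]; norm_num)
    ![ι (ζUnit F), ι (fundUnit F), ε, v, η]
  let u := ζUnit F ^ e 0 * fundUnit F ^ e 1
  replace hsq : IsSquare (algebraMap (𝓞 F) (𝓞 K) u * ε ^ e 2 * v ^ e 3 * η ^ e 4 : 𝓞 K) := by
    simpa [Fin.prod_univ_five, u, ι] using hsq.map (Units.coeHom (𝓞 K))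
  have h4 := eq_zero_of_isSquare_algebraMap_mul hε hη hγ0 hv (he 4) u hsq
  rw [h4, pow_zero, mul_one] at hsq
  replace hsq := isSquare_mul_pow_of_sq_eq hγ0 hv hsq
  rw [mul_right_comm] at hsq
  replace hsq := isSquare_mul_pow_of_sq_eq hα0 hα hsq
  rw [mul_right_comm, ← map_pow, ← map_pow, ← map_mul, ← map_mul] at hsq
  rcases Q.isSquare_or_isSquare_mul hσ (by rw [hs, map_natCast]) hsq with hsq | hsq
  · obtain ⟨h2, h3⟩ := eq_zero_of_isSquare_unit_mul hr hp2 hπ u (he 2) (he 3) hsq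
    rw [h2, h3, pow_zero, pow_zero, mul_one, mul_one] at hsq
    obtain ⟨h0, h1⟩ := eq_zero_of_isSquare_ζ_pow_mul (he 0) (he 1) hsq
    exact he0 (funext fun i => by fin_cases i <;> assumption)
  · exact not_isSquare_prime_mul_unit_mul hr hp2 hπ u _ _ hsq

end CyclotomicEight

/-! ### The product of two ramified classes is a square -/

theorem isSquare_idealClass_map {R S : Type*} [CommRing R] [CommRing S] [IsDedekindDomain R]
    [IsDedekindDomain S] [Algebra R S] [Module.IsTorsionFree R S] {I : Ideal R}
    (h : IsSquare (idealClass I)) : IsSquare (idealClass (I.map (algebraMap R S))) := by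
  rcases eq_or_ne I ⊥ with rfl | hI
  · rw [Ideal.map_bot, ← Ideal.span_zero, ← Set.singleton_zero, idealClass_span_singleton]
    exact IsSquare.one
  · have hmap := h.map (ClassGroup.extendedHom R S)
    rw [idealClass_of_ne_bot hI, ClassGroup.extendedHom_mk0] at hmap
    rwa [idealClass_of_ne_bot (Ideal.map_ne_bot_of_ne_bot hI)]

theorem isCoprime_add_two_mul_add_two_mul {e f : ℤ} (hc : IsCoprime e f) (he : Odd e)
    (hf : Even f) : IsCoprime (e + f) (2 * (e + 2 * f)) := by
  refine IsCoprime.mul_right ?_ ?_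
  · exact Int.isCoprime_two_right.mpr (he.add_even hf)
  · obtain ⟨a, b, hab⟩ := hc
    exact ⟨2 * a - b, b - a, by linear_combination hab⟩

theorem one_add_dvd_add_mul {S : Type*} [CommRing S] {i s : S} (hi : i ^ 2 = -1) {x : ℤ}
    (hx : Odd x) (hs : 2 ∣ 1 + s) : 1 + i ∣ x + i * s := by
  obtain ⟨y, rfl⟩ := hx
  obtain ⟨h, hh⟩ := hs
  refine ⟨h + y + i * (h - y - 1), ?_⟩
  push_cast
  linear_combination i * hh - (h - y - 1) * hi

theorem span_pair_mul_self_eq_span {S : Type*} [CommRing S] [IsDomain S] (h2 : (2 : S) ≠ 0)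
    {i s ω : S} (hi : i ^ 2 = -1) {g x : ℤ} (hc : IsCoprime g (2 * x)) (hx : Odd x)
    (hs2 : 2 ∣ 1 + s) (hs : x ^ 2 + s ^ 2 = 2 * g ^ 2) (hω : x + i * s = (1 + i) * ω) :
    Ideal.span {(g : S), x + i * s} * Ideal.span {(g : S), x + i * s} = Ideal.span {ω} := by
  obtain ⟨ω', hω'⟩ := one_add_dvd_add_mul hi hx (s := -s) <| by
    rw [show 1 + -s = 2 - (1 + s) by ring]
    exact dvd_sub dvd_rfl hs2
  have hg : (g : S) ^ 2 = i * (ω * ω') := mul_left_cancel₀ h2 <| by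
    linear_combination -hs + (ω * ω' + s ^ 2) * hi + (x - i * s) * hω + (1 + i) * ω * hω'
  obtain ⟨a, b, hab⟩ : IsCoprime (g ^ 2) (4 * x) := by
    rw [show 4 * x = 2 * (2 * x) by ring]
    exact (hc.of_mul_right_left.mul_right hc).pow_left
  have hab' : (a : S) * g ^ 2 + b * (4 * x) = 1 := mod_cast congrArg (Int.cast : ℤ → S) hab
  rw [hω, Ideal.span_pair_mul_span_pair]
  apply le_antisymm
  · simp only [Ideal.span_le, Set.insert_subset_iff, Set.singleton_subset_iff, SetLike.mem_coe,
      Ideal.mem_span_singleton]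
    exact ⟨⟨i * ω', by linear_combination hg⟩, ⟨g * (1 + i), by ring⟩, ⟨g * (1 + i), by ring⟩,
      ⟨(1 + i) * ((1 + i) * ω), by ring⟩⟩
  · have hmem : ω = (a * ω - b * (2 * i * (1 + i))) * (g * g) +
        (-i * (1 + i) * b) * ((1 + i) * ω * ((1 + i) * ω)) := by
      linear_combination (-ω) * hab' + 2 * b * ω * (hω + hω') + 2 * b * i * (1 + i) * hg +
        (2 * b * (1 + i) * ω * ω' + b * (1 + i) * (i + 2) * ω ^ 2) * hi
    rw [Ideal.span_singleton_le_iff_mem]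
    refine (congrArg (· ∈ Ideal.span _) hmem).mpr (Ideal.add_mem _
      (Ideal.mul_mem_left _ _ (Ideal.subset_span ?_))
      (Ideal.mul_mem_left _ _ (Ideal.subset_span ?_))) <;> simp

theorem exists_sq_eq_neg_mul {S : Type*} [CommRing S] [IsDomain S] [IsIntegrallyClosed S]
    (h2 : (2 : S) ≠ 0) {z s ω e f : S} (hz : z ^ 4 = -1) (hs : s ^ 2 = e ^ 2 - 2 * f ^ 2)
    (hω : e + 2 * f + z ^ 2 * s = (1 + z ^ 2) * ω) :
    ∃ q, q ^ 2 = -(z ^ 2 * ((e + f * (z - z ^ 3)) * ω)) := by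
  obtain ⟨t, ht⟩ : ∃ t, t = z - z ^ 3 := ⟨_, rfl⟩
  have ht2 : t ^ 2 = 2 := by rw [ht]; linear_combination (z ^ 2 - 2) * hz
  have hz1 : 1 + z ^ 2 = (1 + z) ^ 2 * (t - 1) := by rw [ht]; linear_combination (2 + z) * hz
  have hz2 : 1 + z ^ 2 ≠ 0 := fun h => h2 (by linear_combination (1 - z ^ 2) * h + hz)
  have hz0 : 1 + z ≠ 0 := fun h => hz2 (by rw [hz1, h]; ring)
  have hef : e + f * t = (t - 1) * (t * (e + f) + (e + 2 * f)) := by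
    linear_combination (-e - f) * ht2
  have hsq : (t * (e + f) + (e + 2 * f) + z ^ 2 * s) ^ 2 =
      2 * (t * (e + f) + (e + 2 * f)) * ((1 + z ^ 2) * ω) := by
    rw [← hω]
    linear_combination (e + f) ^ 2 * ht2 - hs + s ^ 2 * hz
  obtain ⟨q, -, hq⟩ := exists_eq_mul_and_sq_eq (mul_ne_zero hz2 hz0)
    (x := t * (e + f) + (e + 2 * f) + z ^ 2 * s) (z := -(z ^ 2 * ((e + f * t) * ω))) <| calc
    _ = 2 * (t * (e + f) + (e + 2 * f)) * ((1 + z ^ 2) * ω) := hsq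
    _ = (1 + z ^ 2) ^ 2 * -(z ^ 2) * (1 + z ^ 2) * (t * (e + f) + (e + 2 * f)) * ω := by
      linear_combination
        (1 + z ^ 2) * (2 + z ^ 2) * (t * (e + f) + (e + 2 * f)) * ω * hz
    _ = _ := by
      rw [hef]
      linear_combination
        (1 + z ^ 2) ^ 2 * -(z ^ 2) * (t * (e + f) + (e + 2 * f)) * ω * hz1
  exact ⟨q, ht ▸ hq⟩

namespace CyclotomicEight

variable {F K : Type*} [Field F] [NumberField F] [IsCyclotomicExtension {8} ℚ F] [Field K]
  [NumberField K] [Algebra F K] {p : ℕ} [Fact p.Prime] {r : ZMod p} (hr : r ^ 4 = -1)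
  (hp2 : p ≠ 2) {π : 𝓞 F} (hπ : ∀ x, residue hr 0 x = 0 ↔ π ∣ x) {s : 𝓞 K} (hs : s ^ 2 = p)

include hr hp2 hπ hs

theorem exists_ramifiedPrime_mul_mul_span_pair_eq_span (hp8 : p % 8 = 1)
    (hp16 : p % 16 = 9) (h2 : (2 : ZMod p) ^ ((p - 1) / 4) = -1) :
    ∃ (g x : ℤ) (q : 𝓞 K), g ≠ 0 ∧ g ∣ x ^ 2 + p ∧ IsCoprime g (2 * x) ∧ jacobiSym g p = 1 ∧
      ramifiedPrime π s 0 * ramifiedPrime π s 3 *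
        Ideal.span {(g : 𝓞 K), x + algebraMap (𝓞 F) (𝓞 K) (ζ F) ^ 2 * s} = Ideal.span {q} := by
  obtain ⟨e, f, -, -, hπe, -, -, hef, -⟩ := exists_mul_conj_eq_of_residue hr hp2 hπ
  obtain ⟨he, hf⟩ := odd_and_even_of_sq_sub_two_mul_sq hp8 hef
  have hx : Odd (e + 2 * f) := he.add_even (even_two_mul f)
  have hc : IsCoprime (e + f) (2 * (e + 2 * f)) := isCoprime_add_two_mul_add_two_mul
    (isCoprime_of_sq_add_mul_sq_eq_prime (m := -2) (by rw [← hef]; ring)) he hf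
  set z := algebraMap (𝓞 F) (𝓞 K) (ζ F)
  have hz : z ^ 4 = -1 := by rw [← map_pow, ζ_pow_four, map_neg, map_one]
  have hi : (z ^ 2) ^ 2 = -1 := by rw [← pow_mul, hz]
  have hzu : IsUnit (z ^ 2) := ⟨⟨z ^ 2, -z ^ 2, by linear_combination -hz,
    by linear_combination -hz⟩, rfl⟩
  have hs2 := two_dvd_one_add_of_sq_eq hs (by lia)
  have hsef : s ^ 2 = e ^ 2 - 2 * f ^ 2 := by
    rw [hs]
    exact_mod_cast congrArg (Int.cast : ℤ → 𝓞 K) hef.symm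
  obtain ⟨ω, hω⟩ := one_add_dvd_add_mul hi hx hs2
  obtain ⟨q, hq⟩ := exists_sq_eq_neg_mul two_ne_zero hz hsef (by simpa using hω)
  have hJ := span_pair_mul_self_eq_span two_ne_zero hi hc hx hs2
    (by push_cast; linear_combination hsef) hω
  have hππ : algebraMap (𝓞 F) (𝓞 K) π * algebraMap (𝓞 F) (𝓞 K) (conj 3 π) =
      e + f * (z - z ^ 3) := by
    rw [← map_mul, hπe]
    simp [sqrtTwo, z]
  refine ⟨e + f, e + 2 * f, q, fun h0 => ?_, ⟨2 * (e + f), by rw [← hef]; ring⟩, hc,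
    jacobiSym_add_eq_one hp8 h2 hef hp16, ideal_eq_of_sq_eq_sq ?_⟩
  · simpa [h0] using he.add_even hf
  · rw [sq, mul_mul_mul_comm, hJ, mul_mul_mul_comm, ramifiedPrime_mul_self hs hr hp2 hπ,
      ramifiedPrime_mul_self hs hr hp2 hπ, conj_zero, Ideal.span_singleton_mul_span_singleton,
      hππ, Ideal.span_singleton_mul_span_singleton, Ideal.span_singleton_pow, hq,
      Ideal.span_singleton_neg, Ideal.span_singleton_eq_span_singleton]
    exact associated_unit_mul_right _ _ hzu

/-- The complementary factor comes from `ℚ(√-p)`, where its class is a square. -/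
theorem isSquare_idealClass_ramifiedPrime_mul (hp8 : p % 8 = 1) (hp16 : p % 16 = 9)
    (h2 : (2 : ZMod p) ^ ((p - 1) / 4) = -1) {k : Type*} [Field k] [NumberField k] [Algebra k K]
    (Q : QuadraticConj ℤ (𝓞 k)) {t : 𝓞 k} (ht : t ^ 2 = -p) (hσ : Q.σ t = -t)
    (hts : algebraMap (𝓞 k) (𝓞 K) t = algebraMap (𝓞 F) (𝓞 K) (ζ F) ^ 2 * s) :
    IsSquare (idealClass (ramifiedPrime π s 0 * ramifiedPrime π s 3)) := by
  obtain ⟨g, x, q, hg0, hg, hc, hJ, hq⟩ :=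
    exists_ramifiedPrime_mul_mul_span_pair_eq_span hr hp2 hπ hs hp8 hp16 h2
  have hsq := isSquare_idealClass_map (S := 𝓞 K)
    (ImaginaryQuadratic.isSquare_idealClass_span_pair Q ht hσ hp8 hg hc hg0 hJ)
  rw [Ideal.map_span, Set.image_pair, map_add, map_intCast, map_intCast, hts] at hsq
  have hJ0 : Ideal.span {(g : 𝓞 K), x + algebraMap (𝓞 F) (𝓞 K) (ζ F) ^ 2 * s} ≠ ⊥ :=
    ImaginaryQuadratic.span_pair_ne_bot x hg0
  have hclass := congrArg idealClass hq
  rw [idealClass_span_singleton, idealClass_mul (mul_ne_zero (ramifiedPrime_ne_bot hs π 0)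
    (ramifiedPrime_ne_bot hs π 3)) hJ0] at hclass
  rw [eq_inv_of_mul_eq_one_left hclass]
  exact hsq.inv

end CyclotomicEight

/-! ### The ambiguous classes of `ℚ(ζ₈, √p)` -/

section Sqrt

theorem isSquare_algebraMap_iff {R : Type*} (K : Type*) [CommRing R] [IsIntegrallyClosed R]
    [Field K] [Algebra R K] [IsFractionRing R K] {d : R} :
    IsSquare (algebraMap R K d) ↔ IsSquare d := by
  refine ⟨fun ⟨x, hx⟩ => ?_, fun h => h.map (algebraMap R K)⟩
  obtain ⟨y, rfl⟩ := IsIntegrallyClosed.exists_algebraMap_eq_of_isIntegral_pow (x := x) two_pos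
    (by rw [sq, ← hx]; exact isIntegral_algebraMap)
  exact ⟨y, IsFractionRing.injective R K (by rw [hx, map_mul])⟩

theorem isQuadraticExtension_adjoin_sqrt {F K : Type*} [Field F] [Field K] [Algebra F K] {t : K}
    {d : F} (ht : t ^ 2 = algebraMap F K d) (hd : ¬ IsSquare d) :
    Algebra.IsQuadraticExtension F F⟮t⟯ := by
  have hirr : Irreducible (Polynomial.X ^ 2 - Polynomial.C d) :=
    X_pow_sub_C_irreducible_of_prime Nat.prime_two fun x hx => hd ⟨x, by rw [← hx, sq]⟩
  have hmonic := Polynomial.monic_X_pow_sub_C d two_ne_zero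
  have hroot : Polynomial.aeval t (Polynomial.X ^ 2 - Polynomial.C d) = 0 := by simp [ht]
  refine ⟨?_⟩
  rw [adjoin.finrank ⟨_, hmonic, hroot⟩, ← minpoly.eq_of_irreducible_of_monic hirr hroot hmonic,
    Polynomial.natDegree_X_pow_sub_C]

theorem exists_quadraticConj_of_sq_eq_intCast {K : Type*} [Field K] [NumberField K] {s : 𝓞 K}
    {d : ℤ} (hs : s ^ 2 = d) (hd : ¬ IsSquare d) :
    ∃ (k : IntermediateField ℚ K) (Q : QuadraticConj ℤ (𝓞 k)) (t : 𝓞 k),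
      t ^ 2 = d ∧ Q.σ t = -t ∧ algebraMap (𝓞 k) (𝓞 K) t = s := by
  have hsK : (s : K) ^ 2 = algebraMap ℚ K d := by
    simpa using congrArg (algebraMap (𝓞 K) K) hs
  have : Algebra.IsQuadraticExtension ℚ ℚ⟮(s : K)⟯ := isQuadraticExtension_adjoin_sqrt hsK
    (by rwa [← eq_intCast (algebraMap ℤ ℚ), isSquare_algebraMap_iff])
  have hint : IsIntegral ℤ (AdjoinSimple.gen ℚ (s : K)) :=
    (isIntegral_algebraMap_iff (algebraMap ℚ⟮(s : K)⟯ K).injective).mp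
      (AdjoinSimple.algebraMap_gen ℚ (s : K) ▸ s.isIntegral_coe)
  let t : 𝓞 ℚ⟮(s : K)⟯ := ⟨_, hint⟩
  have hts : algebraMap (𝓞 ℚ⟮(s : K)⟯) (𝓞 K) t = s :=
    RingOfIntegers.ext (AdjoinSimple.algebraMap_gen ℚ (s : K))
  have ht : t ^ 2 = d := FaithfulSMul.algebraMap_injective _ (𝓞 K) (by simp [hts, hs])
  obtain ⟨Q, hσ⟩ := exists_quadraticConj ℤ ℚ ℚ⟮(s : K)⟯ (s := t) (d := d) (by simp [ht]) hd
  exact ⟨ℚ⟮(s : K)⟯, Q, t, ht, hσ, hts⟩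

end Sqrt

theorem exists_pow_four_eq_neg_one {p : ℕ} [Fact p.Prime] (hp8 : p % 8 = 1) :
    ∃ r : ZMod p, r ^ 4 = -1 := by
  obtain ⟨a, ha⟩ := ZMod.exists_sq_eq_neg_one_iff.mpr (show p % 4 ≠ 3 by lia)
  have ha0 : a ≠ 0 := by
    rintro rfl
    simp at ha
  have hsq : IsSquare a := by
    rw [ZMod.euler_criterion p ha0, show p / 2 = 2 * (2 * (p / 8)) by lia, pow_mul, sq, ← ha,
      pow_mul, neg_one_sq, one_pow]
  obtain ⟨b, rfl⟩ := hsq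
  exact ⟨b, by rw [ha]; ring⟩

namespace CyclotomicEight

variable (F : Type*) [Field F] [NumberField F] [IsCyclotomicExtension {8} ℚ F]

theorem rank_units_eq_three (K : Type*) [Field K] [NumberField K] [Algebra F K]
    [Algebra.IsQuadraticExtension F K] : Units.rank K = 3 := by
  have := IsCyclotomicExtension.Rat.isTotallyComplex (n := 8) F (by norm_num)
  have := isTotallyComplex_of_algebra F K
  have hdeg := Module.finrank_mul_finrank ℚ F K
  rw [finrank_eq_four, Algebra.IsQuadraticExtension.finrank_eq_two F K,
    IsTotallyComplex.finrank K] at hdeg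
  rw [Units.rank, InfinitePlace.card_eq_nrRealPlaces_add_nrComplexPlaces,
    IsTotallyComplex.nrRealPlaces_eq_zero]
  lia

variable {p : ℕ} [Fact p.Prime] (hp8 : p % 8 = 1)

include hp8

theorem not_isSquare_natCast_prime : ¬ IsSquare (p : 𝓞 F) := fun h => by
  obtain ⟨r, hr⟩ := exists_pow_four_eq_neg_one hp8
  obtain ⟨π, hπ⟩ := exists_residue_eq_zero_iff F hr
  obtain ⟨d, hd, hnd⟩ := exists_prime_eq_conj_mul hr (by rintro rfl; lia) hπ 0
  exact hnd (dvd_of_isSquare_mul (prime_conj hr hπ 0) (hd ▸ h))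

variable {K : Type*} [Field K] [NumberField K] [Algebra F K] {s : 𝓞 K} (hs : s ^ 2 = p)

include hs

theorem isQuadraticExtension_of_adjoin_eq_top (htop : F⟮(s : K)⟯ = ⊤) :
    Algebra.IsQuadraticExtension F K := by
  have hsK : (s : K) ^ 2 = algebraMap F K (algebraMap (𝓞 F) F p) := by
    simpa using congrArg (algebraMap (𝓞 K) K) hs
  have := isQuadraticExtension_adjoin_sqrt hsK
    ((isSquare_algebraMap_iff F).not.mpr (not_isSquare_natCast_prime F hp8))
  exact ⟨by rw [← finrank_top', ← htop, Algebra.IsQuadraticExtension.finrank_eq_two]⟩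

theorem exists_sq_eq_one_iff [Algebra.IsQuadraticExtension F K] (hp16 : p % 16 = 9)
    (h2 : (2 : ZMod p) ^ ((p - 1) / 4) = -1) :
    ∃ x y : ClassGroup (𝓞 K), ¬ IsSquare x ∧ y ≠ 1 ∧ IsSquare y ∧
      ∀ c, c ^ 2 = 1 ↔ c = 1 ∨ c = x ∨ c = y ∨ c = x * y := by
  have hp2 : p ≠ 2 := by rintro rfl; lia
  obtain ⟨r, hr⟩ := exists_pow_four_eq_neg_one hp8
  obtain ⟨π, hπ⟩ := exists_residue_eq_zero_iff F hr
  obtain ⟨Q, hσ⟩ := exists_quadraticConj (𝓞 F) F K (d := p) (by rw [hs, map_natCast])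
    (not_isSquare_natCast_prime F hp8)
  obtain ⟨k, Q', t, ht, hσ', hts⟩ := exists_quadraticConj_of_sq_eq_intCast (d := -p)
    (s := algebraMap (𝓞 F) (𝓞 K) (ζ F) ^ 2 * s)
    (by rw [mul_pow, ← pow_mul, ← map_pow, ζ_pow_four, hs]; simp)
    (fun h => by have := h.nonneg; have := (Fact.out : p.Prime).pos; lia)
  rw [Int.cast_neg, Int.cast_natCast] at ht
  obtain ⟨-, -, A, B, -, -, hAB, -, hABp⟩ := exists_mul_conj_eq_of_residue hr hp2 hπ
  obtain ⟨ε, η, α, hε, hη, hα⟩ := exists_units hp16 h2 hσ hs hABp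
  rw [← hAB] at hα
  exact ⟨idealClass (ramifiedPrime π s 0), idealClass (ramifiedPrime π s 0 * ramifiedPrime π s 3),
    not_isSquare_idealClass_ramifiedPrime hσ hs hr hp2 hπ hη hp8 h2,
    idealClass_ramifiedPrime_mul_ne_one hr hp2 hπ hσ hs (rank_units_eq_three F K) hε hη hα,
    isSquare_idealClass_ramifiedPrime_mul hr hp2 hπ hs hp8 hp16 h2 Q' ht hσ' hts,
    sq_eq_one_iff hσ hs hr hp2 hπ hη hp16 hα⟩

end CyclotomicEight

/-! ### The field `ℚ(√2, √p, i)` -/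

theorem ofReal_sqrt_natCast_sq (n : ℕ) : (Real.sqrt n : ℂ) ^ 2 = n := by
  rw [← Complex.ofReal_pow, Real.sq_sqrt n.cast_nonneg, Complex.ofReal_natCast]

namespace kstar

variable (p : ℕ)

instance : NumberField (kstar p) where
  to_finiteDimensional := by
    refine finiteDimensional_adjoin fun x hx => ?_
    obtain ⟨n, hn⟩ : ∃ n : ℤ, x ^ 2 = n := by
      rcases hx with rfl | rfl | rfl
      · exact ⟨2, mod_cast ofReal_sqrt_natCast_sq 2⟩
      · exact ⟨p, mod_cast ofReal_sqrt_natCast_sq p⟩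
      · exact ⟨-1, by simp⟩
    have hint : IsIntegral ℤ (x ^ 2) := hn ▸ isIntegral_intCast n
    exact (hint.of_pow two_pos).tower_top

/-- `√2` as an element of `k*`. -/
def sqrtTwo : kstar p := ⟨Real.sqrt 2, subset_adjoin _ _ (by simp)⟩

/-- `√p` as an element of `k*`. -/
def sqrtP : kstar p := ⟨Real.sqrt p, subset_adjoin _ _ (by simp)⟩

/-- `i` as an element of `k*`. -/
def i : kstar p := ⟨Complex.I, subset_adjoin _ _ (by simp)⟩

/-- The primitive eighth root of unity `(1 + i) / √2` of `k*`. -/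
def zeta : kstar p := sqrtTwo p / 2 * (1 + i p)

theorem sqrtTwo_sq : sqrtTwo p ^ 2 = 2 :=
  Subtype.ext (show (Real.sqrt 2 : ℂ) ^ 2 = 2 from mod_cast ofReal_sqrt_natCast_sq 2)

theorem sqrtP_sq : sqrtP p ^ 2 = p := Subtype.ext (ofReal_sqrt_natCast_sq p)

theorem isIntegral_sqrtP : IsIntegral ℤ (sqrtP p) :=
  .of_pow two_pos (sqrtP_sq p ▸ isIntegral_natCast p)

theorem i_sq : i p ^ 2 = -1 := Subtype.ext Complex.I_sq

theorem zeta_sq : zeta p ^ 2 = i p := by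
  rw [zeta]
  linear_combination (1 + i p) ^ 2 / 4 * sqrtTwo_sq p + i_sq p / 2

theorem zeta_pow_four : zeta p ^ 4 = -1 := by
  rw [show 4 = 2 * 2 from rfl, pow_mul, zeta_sq, i_sq]

theorem zeta_sub_zeta_pow_three : zeta p - zeta p ^ 3 = sqrtTwo p := by
  rw [pow_succ (zeta p) 2, zeta_sq, zeta]
  linear_combination -sqrtTwo p / 2 * i_sq p

theorem isPrimitiveRoot_zeta : IsPrimitiveRoot (zeta p) 8 :=
  IsPrimitiveRoot.iff_orderOf.mpr <| orderOf_eq_prime_pow (p := 2) (n := 2)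
    (by rw [show 2 ^ 2 = 4 from rfl, zeta_pow_four]; norm_num)
    (by rw [show 2 ^ (2 + 1) = 4 * 2 from rfl, pow_mul, zeta_pow_four, neg_one_sq])

instance : IsCyclotomicExtension {8} ℚ ℚ⟮zeta p⟯ :=
  (isPrimitiveRoot_zeta p).intermediateField_adjoin_isCyclotomicExtension (K := ℚ)

theorem adjoin_zeta_adjoin_sqrtP : ℚ⟮zeta p⟯⟮sqrtP p⟯ = ⊤ := by
  set L : IntermediateField ℚ (kstar p) := (ℚ⟮zeta p⟯⟮sqrtP p⟯).restrictScalars ℚ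
  have hzeta : zeta p ∈ L := (ℚ⟮zeta p⟯⟮sqrtP p⟯).algebraMap_mem ⟨_, mem_adjoin_simple_self ℚ _⟩
  have hle : kstar p ≤ lift L := by
    refine adjoin_le_iff.mpr ?_
    rintro x (rfl | rfl | rfl)
    · exact (mem_lift (sqrtTwo p)).mpr
        (zeta_sub_zeta_pow_three p ▸ sub_mem hzeta (pow_mem hzeta 3))
    · exact (mem_lift (sqrtP p)).mpr (mem_adjoin_simple_self _ (sqrtP p))
    · exact (mem_lift (i p)).mpr (zeta_sq p ▸ pow_mem hzeta 2)
  exact eq_top_iff.mpr fun x _ => (mem_lift x).mp (hle x.2)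

end kstar

theorem statement_17 (p : ℕ) (hp : p.Prime) (hp8 : p % 8 = 1)
    (h2p4 : (2 : ZMod p) ^ ((p - 1) / 4) = -1)
    (hp24 : (-1 : ℤ) ^ ((p - 1) / 8) = -1) :
    (∃ m : ℕ, 2 ≤ m ∧
      ∀ P : Sylow 2 (ClassGroup (𝓞 (kstar p))),
        Nonempty (P ≃* Multiplicative (ZMod 2 × ZMod (2 ^ m)))) ∧
    -- equivalently: the 2-rank of Cl(k*) is 2 and its 4-rank is 1
    Nat.card (ClassGroup (𝓞 (kstar p)) ⧸ pows p 2) = 4 ∧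
    Nat.card ((pows p 2) ⧸ ((pows p 4).subgroupOf (pows p 2))) = 2 := by
  have : Fact p.Prime := ⟨hp⟩
  have hp16 : p % 16 = 9 := by
    obtain ⟨m, hm⟩ := (neg_one_pow_eq_neg_one_iff_odd (by norm_num)).mp hp24
    lia
  let s : 𝓞 (kstar p) := ⟨kstar.sqrtP p, kstar.isIntegral_sqrtP p⟩
  have hs : s ^ 2 = p := RingOfIntegers.ext (kstar.sqrtP_sq p)
  have := CyclotomicEight.isQuadraticExtension_of_adjoin_eq_top ℚ⟮kstar.zeta p⟯ hp8 hs
    (kstar.adjoin_zeta_adjoin_sqrtP p)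
  obtain ⟨x, y, hx, hy1, hy, h⟩ :=
    CyclotomicEight.exists_sq_eq_one_iff ℚ⟮kstar.zeta p⟯ hp8 hs hp16 h2p4
  exact ⟨exists_sylow_equiv_zmod_prod h hx hy1 hy, card_quotient_range_sq_eq_four h hx hy1 hy,
    card_range_sq_quotient_range_pow_four h hx hy1 hy⟩
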